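/- arXiv:1402.0984 — 3 statements merged into one kernel-verified Lean document; each statement's English description precedes it below -/
import Mathlib

section
/- For each μ > 0 and integer k ≥ 1 there exists ε > 0 such that for all p ∈ (0,1) the following holds: if 2 ≤ r ≤ k and V_1,…,V_r are pairwise disjoint vertex sets in an (ε,p,k−1,2k−2)-pseudorandom graph G on n vertices with |V_i| ≥ μ p^{k−i} n for each 1 ≤ i ≤ r, then the number of copies of K_r with exactly one vertex in each V_i equals (1 ± μ) · p^{C(r,2)} · |V_1|·…·|V_r|, where C(r,2) = r(r−1)/2. -/
open scoped Classical

/-- Number of edges of `G` with one endpoint in `A` and the other in `B`. -/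
noncomputable def eBetween {V : Type*} (G : SimpleGraph V) (A B : Finset V) : ℕ :=
  ((A ×ˢ B).filter fun e => G.Adj e.1 e.2).card

/-- `G` is `(ε,p,k,ℓ)`-pseudorandom. -/
def Pseudorandom {V : Type*} [Fintype V] (G : SimpleGraph V) (ε p : ℝ) (k l : ℕ) : Prop :=
  ∀ X Y : Finset V, Disjoint X Y →
    ε * p ^ k * (Fintype.card V : ℝ) ≤ (X.card : ℝ) →
    ε * p ^ l * (Fintype.card V : ℝ) ≤ (Y.card : ℝ) →
    |(eBetween G X Y : ℝ) - p * X.card * Y.card| < ε * p * X.card * Y.card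

/-- The number of copies of `K_r` with exactly one vertex in each `Vs i`. -/
noncomputable def crossCliqueCount {V : Type*} (G : SimpleGraph V) {r : ℕ}
    (Vs : Fin r → Finset V) : ℕ :=
  Nat.card {f : Fin r → V // (∀ i, f i ∈ Vs i) ∧ ∀ i j, i ≠ j → G.Adj (f i) (f j)}

open Filter Topology

lemma eBetween_eq_sum_card_filter {V : Type*} (G : SimpleGraph V) (X Y : Finset V) :
    eBetween G X Y = ∑ y ∈ Y, (X.filter (G.Adj y)).card := by
  unfold eBetween
  rw [Finset.card_filter, Finset.sum_product_right]
  refine Finset.sum_congr rfl fun y _ => ?_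
  rw [Finset.card_filter]
  simp only [G.adj_comm]

/-- In a pseudorandom graph few vertices of `Y` have atypical degree into a large set `X`. -/
lemma Pseudorandom.exists_atypical {V : Type*} [Fintype V] {G : SimpleGraph V} {ε p δ : ℝ}
    {k l : ℕ} (hG : Pseudorandom G ε p k l) (hp : 0 < p) (hεδ : ε ≤ δ)
    {X Y : Finset V} (hXY : Disjoint X Y) (hX : ε * p ^ k * (Fintype.card V : ℝ) ≤ X.card) :
    ∃ B ⊆ Y, (B.card : ℝ) ≤ 2 * (ε * p ^ l * (Fintype.card V : ℝ)) ∧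
      ∀ y ∈ Y \ B, (1 - δ) * (p * X.card) ≤ ((X.filter (G.Adj y)).card : ℝ) ∧
        ((X.filter (G.Adj y)).card : ℝ) ≤ (1 + δ) * (p * X.card) := by
  set d : V → ℝ := fun y => ((X.filter (G.Adj y)).card : ℝ) with hd
  set L := Y.filter fun y => d y < (1 - δ) * (p * X.card) with hL
  set U := Y.filter fun y => (1 + δ) * (p * X.card) < d y with hU
  have he : ∀ Z : Finset V, (eBetween G X Z : ℝ) = ∑ y ∈ Z, d y := fun Z => by
    rw [eBetween_eq_sum_card_filter, Nat.cast_sum]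
  have hsmall : ∀ Z ⊆ Y, ε * p * X.card * Z.card ≤ |∑ y ∈ Z, d y - p * X.card * Z.card| →
      (Z.card : ℝ) ≤ ε * p ^ l * (Fintype.card V : ℝ) := fun Z hZ h => by
    by_contra! hc
    have := hG X Z (hXY.mono_right hZ) hX hc.le
    rw [he] at this
    linarith
  have hmono : ∀ Z : Finset V, ε * p * X.card * Z.card ≤ δ * p * X.card * Z.card := fun Z => by
    gcongr
  have hLc := hsmall L (Finset.filter_subset _ _) (by
    have : ∑ y ∈ L, d y ≤ L.card • ((1 - δ) * (p * X.card)) :=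
      Finset.sum_le_card_nsmul _ _ _ fun y hy => (Finset.mem_filter.1 hy).2.le
    rw [nsmul_eq_mul] at this
    exact (by linarith [hmono L] : _ ≤ -(∑ y ∈ L, d y - p * X.card * L.card)).trans
      (neg_le_abs _))
  have hUc := hsmall U (Finset.filter_subset _ _) (by
    have : U.card • ((1 + δ) * (p * X.card)) ≤ ∑ y ∈ U, d y :=
      Finset.card_nsmul_le_sum _ _ _ fun y hy => (Finset.mem_filter.1 hy).2.le
    rw [nsmul_eq_mul] at this
    exact (by linarith [hmono U] : _ ≤ ∑ y ∈ U, d y - p * X.card * U.card).trans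
      (le_abs_self _))
  refine ⟨L ∪ U, Finset.union_subset (Finset.filter_subset _ _) (Finset.filter_subset _ _),
    ?_, fun y hy => ?_⟩
  · have : ((L ∪ U).card : ℝ) ≤ L.card + U.card := by exact_mod_cast Finset.card_union_le L U
    linarith
  · simp only [hL, hU, Finset.mem_sdiff, Finset.mem_union, Finset.mem_filter, not_or, not_and,
      not_lt] at hy
    exact ⟨hy.2.1 hy.1, hy.2.2 hy.1⟩

lemma crossCliqueCount_zero {V : Type*} (G : SimpleGraph V) (Vs : Fin 0 → Finset V) :
    crossCliqueCount G Vs = 1 := by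
  unfold crossCliqueCount
  rw [Nat.card_eq_one_iff_unique]
  exact ⟨inferInstance, ⟨⟨Fin.elim0, fun i => i.elim0, fun i => i.elim0⟩⟩⟩

lemma crossCliqueCount_mono {V : Type*} [Finite V] (G : SimpleGraph V) {r : ℕ}
    {Vs Ws : Fin r → Finset V} (h : ∀ i, Vs i ⊆ Ws i) :
    crossCliqueCount G Vs ≤ crossCliqueCount G Ws :=
  Nat.card_le_card_of_injective
    (Subtype.map id fun _ hf => ⟨fun i => h i (hf.1 i), hf.2⟩)
    (Subtype.map_injective _ Function.injective_id)

lemma crossCliqueCount_succ {V : Type*} [Finite V] (G : SimpleGraph V) {r : ℕ}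
    (Vs : Fin (r + 1) → Finset V) :
    crossCliqueCount G Vs =
      ∑ v ∈ Vs 0, crossCliqueCount G fun i : Fin r => (Vs i.succ).filter (G.Adj v) := by
  rw [← Finset.sum_coe_sort]
  unfold crossCliqueCount
  rw [← Nat.card_sigma]
  refine Nat.card_congr
    { toFun := fun f => ⟨⟨f.1 0, f.2.1 0⟩, fun i => f.1 i.succ, fun i => ?_, fun i j hij => ?_⟩
      invFun := fun x => ⟨Fin.cons x.1.1 x.2.1, ?_, ?_⟩
      left_inv := fun f => Subtype.ext (Fin.cons_self_tail f.1)
      right_inv := fun x => rfl }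
  · exact Finset.mem_filter.2 ⟨f.2.1 _, f.2.2 _ _ (Fin.succ_ne_zero i).symm⟩
  · exact f.2.2 _ _ fun h => hij (Fin.succ_injective _ h)
  · refine Fin.cases x.1.2 fun i => ?_
    exact (Finset.mem_filter.1 (x.2.2.1 i)).1
  · refine Fin.cases (Fin.cases (fun h => (h rfl).elim) fun j _ => ?_)
      fun i => Fin.cases (fun _ => ?_) fun j hij => ?_
    · exact (Finset.mem_filter.1 (x.2.2.1 j)).2
    · exact (Finset.mem_filter.1 (x.2.2.1 i)).2.symm
    · exact x.2.2.2 i j fun h => hij (congrArg _ h)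

/-- If almost every summand lies in `[a, b]` and all are at most `c`, the sum is controlled. -/
lemma sum_bounds_of_exceptional {V : Type*} {Y B : Finset V} (hB : B ⊆ Y) (F : V → ℝ)
    {a b c t : ℝ} (hF : ∀ y ∈ Y, 0 ≤ F y) (hc : ∀ y ∈ Y, F y ≤ c)
    (hc0 : 0 ≤ c) (ha0 : 0 ≤ a) (hb0 : 0 ≤ b)
    (hab : ∀ y ∈ Y \ B, a ≤ F y ∧ F y ≤ b) (ht : (B.card : ℝ) ≤ t) :
    (Y.card - t) * a ≤ ∑ y ∈ Y, F y ∧ ∑ y ∈ Y, F y ≤ Y.card * b + t * c := by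
  rw [← Finset.sum_sdiff hB]
  have h1 : ((Y \ B).card : ℝ) = Y.card - B.card := Finset.cast_card_sdiff hB
  have h2 := Finset.card_nsmul_le_sum (Y \ B) F a fun y hy => (hab y hy).1
  have h3 := Finset.sum_le_card_nsmul (Y \ B) F b fun y hy => (hab y hy).2
  have h4 := Finset.sum_le_card_nsmul B F c fun y hy => hc y (hB hy)
  have h5 : 0 ≤ ∑ y ∈ B, F y := Finset.sum_nonneg fun y hy => hF y (hB hy)
  rw [nsmul_eq_mul, h1] at h2 h3
  rw [nsmul_eq_mul] at h4
  constructor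
  · nlinarith [mul_le_mul_of_nonneg_right ht ha0]
  · nlinarith [mul_le_mul_of_nonneg_right ht hc0,
      mul_nonneg (Nat.cast_nonneg (α := ℝ) B.card) hb0]

/-- The clique count in `G` across `Vs` is within a factor `1 ± η` of its expected value. -/
def CliqueCountNear {V : Type*} (G : SimpleGraph V) (η p : ℝ) {r : ℕ}
    (Vs : Fin r → Finset V) : Prop :=
  (1 - η) * p ^ (r.choose 2) * ∏ i, ((Vs i).card : ℝ) ≤ (crossCliqueCount G Vs : ℝ) ∧
    (crossCliqueCount G Vs : ℝ) ≤ (1 + η) * p ^ (r.choose 2) * ∏ i, ((Vs i).card : ℝ)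

/-- Restricting to a vertex with typical degrees multiplies the expected count by `p ^ r`. -/
lemma CliqueCountNear.of_typical {V : Type*} {G : SimpleGraph V} {δ p : ℝ} {r : ℕ}
    {Vs Ws : Fin r → Finset V} (hp : 0 < p) (hδ0 : 0 ≤ δ) (hδ : δ ≤ 1)
    (hW : ∀ i, (1 - δ) * (p * (Vs i).card) ≤ ((Ws i).card : ℝ) ∧
      ((Ws i).card : ℝ) ≤ (1 + δ) * (p * (Vs i).card))
    (h : CliqueCountNear G δ p Ws) :
    (1 - δ) ^ (r + 1) * (p ^ ((r + 1).choose 2) * ∏ i, ((Vs i).card : ℝ)) ≤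
        (crossCliqueCount G Ws : ℝ) ∧
      (crossCliqueCount G Ws : ℝ) ≤
        (1 + δ) ^ (r + 1) * (p ^ ((r + 1).choose 2) * ∏ i, ((Vs i).card : ℝ)) := by
  have hδ1 : 0 ≤ 1 - δ := by linarith
  have hprod : ∀ c : ℝ, ∏ i, (c * (p * ((Vs i).card : ℝ))) =
      c ^ r * (p ^ r * ∏ i, ((Vs i).card : ℝ)) := fun c => by
    simp [Finset.prod_mul_distrib]
  have hch : (r + 1).choose 2 = r + r.choose 2 := by
    rw [Nat.choose_succ_succ' r 1, Nat.choose_one_right]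
  have hlow : (1 - δ) ^ r * (p ^ r * ∏ i, ((Vs i).card : ℝ)) ≤ ∏ i, ((Ws i).card : ℝ) := by
    rw [← hprod]
    exact Finset.prod_le_prod (fun i _ => by positivity) fun i _ => (hW i).1
  have hupp : ∏ i, ((Ws i).card : ℝ) ≤ (1 + δ) ^ r * (p ^ r * ∏ i, ((Vs i).card : ℝ)) := by
    rw [← hprod]
    exact Finset.prod_le_prod (fun i _ => by positivity) fun i _ => (hW i).2
  rw [hch]
  constructor
  · refine le_trans (le_of_eq ?_) ((mul_le_mul_of_nonneg_left hlow
      (show 0 ≤ (1 - δ) * p ^ r.choose 2 by positivity)).trans h.1)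
    ring
  · refine (h.2.trans (mul_le_mul_of_nonneg_left hupp
      (show 0 ≤ (1 + δ) * p ^ r.choose 2 by positivity))).trans (le_of_eq ?_)
    ring

/-- Admissible set sizes and disjointness for clique counting. -/
structure CliqueAdmissible {V : Type*} [Fintype V] (μ p : ℝ) (k : ℕ) {r : ℕ}
    (Vs : Fin r → Finset V) : Prop where
  disjoint : ∀ i j, i ≠ j → Disjoint (Vs i) (Vs j)
  le_card : ∀ i : Fin r, μ * p ^ (k - 1 - i.val) * (Fintype.card V : ℝ) ≤ ((Vs i).card : ℝ)

lemma CliqueAdmissible.of_subset_succ {V : Type*} [Fintype V] {μ δ p : ℝ} {k r : ℕ}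
    {Vs : Fin (r + 1) → Finset V} {Ws : Fin r → Finset V} (h : CliqueAdmissible μ p k Vs)
    (hp : 0 < p) (hμ : 0 < μ) (hδ : δ ≤ 1 / 2) (hrk : r + 1 ≤ k)
    (hsub : ∀ i, Ws i ⊆ Vs i.succ)
    (hW : ∀ i, (1 - δ) * (p * (Vs i.succ).card) ≤ ((Ws i).card : ℝ)) :
    CliqueAdmissible (μ / 2) p k Ws where
  disjoint i j hij := (h.disjoint _ _ fun e => hij (Fin.succ_injective _ e)).mono
    (hsub i) (hsub j)
  le_card i := by
    have h1 := h.le_card i.succ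
    have h2 : k - 1 - i.val = (k - 1 - i.succ.val) + 1 := by
      have := i.isLt
      simp only [Fin.val_succ]
      omega
    calc μ / 2 * p ^ (k - 1 - i.val) * (Fintype.card V : ℝ)
        = 1 / 2 * (p * (μ * p ^ (k - 1 - i.succ.val) * (Fintype.card V : ℝ))) := by
          rw [h2, pow_succ]; ring
      _ ≤ (1 - δ) * (p * (Vs i.succ).card) := by
          gcongr <;> linarith
      _ ≤ _ := hW i

lemma eventually_pow_bounds (r : ℕ) {η : ℝ} (hη : 0 < η) :
    ∀ᶠ δ : ℝ in 𝓝[>] 0, (1 + δ) ^ (r + 1) + δ < 1 + η ∧ 1 - η < (1 - δ) ^ (r + 2) := by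
  refine (Filter.Eventually.and ?_ ?_).filter_mono nhdsWithin_le_nhds
  · have : Tendsto (fun δ : ℝ => (1 + δ) ^ (r + 1) + δ) (𝓝 0) (𝓝 ((1 + 0) ^ (r + 1) + 0)) :=
      Continuous.tendsto (by fun_prop) 0
    exact this.eventually_lt_const (by simpa using hη)
  · have : Tendsto (fun δ : ℝ => (1 - δ) ^ (r + 2)) (𝓝 0) (𝓝 ((1 - 0) ^ (r + 2))) :=
      Continuous.tendsto (by fun_prop) 0
    exact this.eventually_const_lt (by simpa using hη)

lemma exceptional_card_bound {c ε p μ δ n v : ℝ} {k r : ℕ} (hε : 0 ≤ ε) (hδ : 0 ≤ δ)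
    (hεr : 4 * r * ε ≤ δ * μ) (hp : 0 < p) (hp1 : p < 1) (hn : 0 ≤ n) (hrk : r + 1 ≤ k)
    (hc : c ≤ r * (2 * (ε * p ^ (2 * k - 2) * n))) (hv : μ * p ^ (k - 1) * n ≤ v) :
    c ≤ δ / 2 * (p ^ r * v) := by
  have hpow : p ^ (2 * k - 2) ≤ p ^ r * p ^ (k - 1) := by
    rw [← pow_add]
    exact pow_le_pow_of_le_one hp.le hp1.le (by omega)
  calc c ≤ r * (2 * (ε * p ^ (2 * k - 2) * n)) := hc
    _ ≤ r * (2 * (ε * (p ^ r * p ^ (k - 1)) * n)) := by gcongr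
    _ = (4 * r * ε) * (p ^ r * p ^ (k - 1) * n) / 2 := by ring
    _ ≤ (δ * μ) * (p ^ r * p ^ (k - 1) * n) / 2 := by gcongr
    _ = δ / 2 * (p ^ r * (μ * p ^ (k - 1) * n)) := by ring
    _ ≤ _ := by gcongr

/-- Few vertices of `Vs 0` have atypical degree into some `Vs i.succ`. -/
lemma CliqueAdmissible.exists_exceptional {V : Type*} [Fintype V] {G : SimpleGraph V}
    {μ δ ε p : ℝ} {k r : ℕ} {Vs : Fin (r + 1) → Finset V} (hV : CliqueAdmissible μ p k Vs)
    (hμ : 0 < μ) (hδ0 : 0 < δ) (hε : 0 < ε) (hεδ : ε ≤ δ) (hεμ : ε ≤ μ)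
    (hεr : 4 * r * ε ≤ δ * μ) (hp : 0 < p) (hp1 : p < 1) (hrk : r + 1 ≤ k)
    (hG : Pseudorandom G ε p (k - 1) (2 * k - 2)) :
    ∃ C ⊆ Vs 0, (C.card : ℝ) ≤ δ / 2 * (p ^ r * (Vs 0).card) ∧ ∀ v ∈ Vs 0 \ C, ∀ i : Fin r,
      (1 - δ) * (p * (Vs i.succ).card) ≤ (((Vs i.succ).filter (G.Adj v)).card : ℝ) ∧
        (((Vs i.succ).filter (G.Adj v)).card : ℝ) ≤ (1 + δ) * (p * (Vs i.succ).card) := by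
  have hX (i : Fin r) :
      ε * p ^ (k - 1) * (Fintype.card V : ℝ) ≤ ((Vs i.succ).card : ℝ) := by
    refine le_trans ?_ (hV.le_card i.succ)
    have hpow : p ^ (k - 1) ≤ p ^ (k - 1 - i.succ.val) :=
      pow_le_pow_of_le_one hp.le hp1.le (Nat.sub_le _ _)
    gcongr
  have hex (i : Fin r) := hG.exists_atypical hp hεδ
    (hV.disjoint i.succ 0 (Fin.succ_ne_zero i)) (hX i)
  choose B hBsub hBcard hB using hex
  refine ⟨Finset.univ.biUnion B, Finset.biUnion_subset.2 fun i _ => hBsub i, ?_,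
    fun v hv i => hB i v ?_⟩
  · have hv : μ * p ^ (k - 1) * (Fintype.card V : ℝ) ≤ (Vs 0).card := hV.le_card 0
    refine exceptional_card_bound hε.le hδ0.le hεr hp hp1 (Nat.cast_nonneg _) hrk ?_ hv
    have h1 : ((Finset.univ.biUnion B).card : ℝ) ≤ ∑ i, ((B i).card : ℝ) := by
      exact_mod_cast Finset.card_biUnion_le
    refine (h1.trans (Finset.sum_le_sum fun i _ => hBcard i)).trans (le_of_eq ?_)
    rw [Finset.sum_const, Finset.card_univ, Fintype.card_fin, nsmul_eq_mul]
  · rw [Finset.mem_sdiff] at hv ⊢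
    exact ⟨hv.1, fun h => hv.2 (Finset.mem_biUnion.2 ⟨i, Finset.mem_univ _, h⟩)⟩

lemma clique_sum_bounds {S v δ η p Q : ℝ} {r : ℕ} (hv : 0 ≤ v) (hQ : 0 ≤ Q) (hp : 0 < p)
    (hp1 : p < 1) (hδ0 : 0 < δ) (hδ : δ ≤ 1)
    (hup : (1 + δ) ^ (r + 1) + δ ≤ 1 + η) (hlow : 1 - η ≤ (1 - δ) ^ (r + 2))
    (hl : (v - δ / 2 * (p ^ r * v)) * ((1 - δ) ^ (r + 1) * (p ^ (r + 1).choose 2 * Q)) ≤ S)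
    (hu : S ≤ v * ((1 + δ) ^ (r + 1) * (p ^ (r + 1).choose 2 * Q)) +
      δ / 2 * (p ^ r * v) * (2 * (p ^ r.choose 2 * Q))) :
    (1 - η) * p ^ (r + 1).choose 2 * (v * Q) ≤ S ∧
      S ≤ (1 + η) * p ^ (r + 1).choose 2 * (v * Q) := by
  have hch : (r + 1).choose 2 = r + r.choose 2 := by
    rw [Nat.choose_succ_succ' r 1, Nat.choose_one_right]
  have hδ1 : 0 ≤ 1 - δ := by linarith
  constructor
  · refine le_trans ?_ hl
    calc (1 - η) * p ^ (r + 1).choose 2 * (v * Q)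
        ≤ (1 - δ) ^ (r + 2) * p ^ (r + 1).choose 2 * (v * Q) := by gcongr
      _ = (v - δ * v) * ((1 - δ) ^ (r + 1) * (p ^ (r + 1).choose 2 * Q)) := by ring
      _ ≤ _ := by
        refine mul_le_mul_of_nonneg_right ?_ (by positivity)
        have h0 : p ^ r * v ≤ v := mul_le_of_le_one_left hv (pow_le_one₀ hp.le hp1.le)
        linarith [mul_le_mul_of_nonneg_left h0 hδ0.le, mul_nonneg hδ0.le hv]
  · refine hu.trans ?_
    calc _ = ((1 + δ) ^ (r + 1) + δ) * p ^ (r + 1).choose 2 * (v * Q) := by rw [hch]; ring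
      _ ≤ _ := by gcongr

/-- The inductive step: cliques are counted by the neighbourhoods of the vertices of `Vs 0`. -/
lemma cliqueCountNear_succ {V : Type*} [Fintype V] {G : SimpleGraph V} {η μ δ ε p : ℝ} {k r : ℕ}
    (hμ : 0 < μ) (hδ0 : 0 < δ) (hδ : δ ≤ 1 / 2)
    (hup : (1 + δ) ^ (r + 1) + δ ≤ 1 + η) (hlow : 1 - η ≤ (1 - δ) ^ (r + 2))
    (hε : 0 < ε) (hεδ : ε ≤ δ) (hεμ : ε ≤ μ) (hεr : 4 * r * ε ≤ δ * μ)
    (hp : 0 < p) (hp1 : p < 1) (hrk : r + 1 ≤ k)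
    (hG : Pseudorandom G ε p (k - 1) (2 * k - 2))
    (ih : ∀ Ws : Fin r → Finset V, CliqueAdmissible (μ / 2) p k Ws → CliqueCountNear G δ p Ws)
    (Vs : Fin (r + 1) → Finset V) (hV : CliqueAdmissible μ p k Vs) :
    CliqueCountNear G η p Vs := by
  obtain ⟨C, hCsub, hCcard, htyp⟩ :=
    hV.exists_exceptional hμ hδ0 hε hεδ hεμ hεr hp hp1 hrk hG
  have hδ1 : 0 ≤ 1 - δ := by linarith
  have hQ0 : 0 ≤ ∏ i : Fin r, ((Vs i.succ).card : ℝ) := by positivity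
  have hgood := fun v (hv : v ∈ Vs 0 \ C) =>
    (ih _ (hV.of_subset_succ hp hμ hδ hrk (fun i => Finset.filter_subset _ _)
      fun i => (htyp v hv i).1)).of_typical hp hδ0.le (by linarith) (htyp v hv)
  have htail : CliqueCountNear G δ p fun i : Fin r => Vs i.succ := by
    refine ih _ (hV.of_subset_succ hp hμ hδ hrk (fun i => subset_rfl) fun i => ?_)
    have h1 : p * ((Vs i.succ).card : ℝ) ≤ (Vs i.succ).card :=
      mul_le_of_le_one_left (Nat.cast_nonneg _) hp1.le
    exact (mul_le_of_le_one_left (by positivity) (by linarith)).trans h1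
  have hall : ∀ v ∈ Vs 0, (crossCliqueCount G fun i : Fin r => (Vs i.succ).filter (G.Adj v) : ℝ) ≤
      2 * (p ^ r.choose 2 * ∏ i : Fin r, ((Vs i.succ).card : ℝ)) := by
    intro v _
    refine (Nat.cast_le.2 (crossCliqueCount_mono G fun i => Finset.filter_subset _ _)).trans
      (htail.2.trans ?_)
    rw [mul_assoc]
    exact mul_le_mul_of_nonneg_right (by linarith) (by positivity)
  obtain ⟨hl, hu⟩ := sum_bounds_of_exceptional hCsub _
    (fun _ _ => Nat.cast_nonneg _) hall (by positivity) (by positivity) (by positivity)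
    hgood hCcard
  unfold CliqueCountNear
  rw [crossCliqueCount_succ, Nat.cast_sum, Fin.prod_univ_succ]
  exact clique_sum_bounds (Nat.cast_nonneg _) hQ0 hp hp1 hδ0 (by linarith) hup hlow hl hu

theorem eventually_cliqueCountNear (k r : ℕ) (hrk : r ≤ k) :
    ∀ η > 0, ∀ μ > 0, ∀ᶠ ε : ℝ in 𝓝[>] 0, ∀ p : ℝ, 0 < p → p < 1 →
      ∀ (V : Type) [Fintype V] (G : SimpleGraph V),
        Pseudorandom G ε p (k - 1) (2 * k - 2) →
          ∀ Vs : Fin r → Finset V, CliqueAdmissible μ p k Vs → CliqueCountNear G η p Vs := by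
  induction r with
  | zero =>
    intro η hη μ _
    refine Eventually.of_forall fun ε p _ _ V _ G _ Vs _ => ?_
    simp only [CliqueCountNear, crossCliqueCount_zero, Finset.univ_eq_empty, Finset.prod_empty,
      Nat.choose_zero_succ, pow_zero, Nat.cast_one]
    constructor <;> linarith
  | succ r ih =>
    intro η hη μ hμ
    obtain ⟨δ, ⟨hup, hlow⟩, hδ0, hδ⟩ :=
      ((eventually_pow_bounds r hη).and (Ioc_mem_nhdsGT (show (0 : ℝ) < 1 / 2 by norm_num))).exists
    have hr : (0 : ℝ) < 4 * r + 1 := by positivity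
    filter_upwards [ih (by omega) δ hδ0 (μ / 2) (by positivity), Ioc_mem_nhdsGT hδ0,
      Ioc_mem_nhdsGT hμ, Ioc_mem_nhdsGT (show (0 : ℝ) < δ * μ / (4 * r + 1) by positivity)]
      with ε hε hεδ hεμ hεr p hp hp1 V _ G hG Vs hV
    refine cliqueCountNear_succ hμ hδ0 hδ hup.le hlow.le hεδ.1 hεδ.2 hεμ.2 ?_ hp hp1 hrk hG
      (hε p hp hp1 V G hG) Vs hV
    have := (le_div_iff₀ hr).1 hεr.2
    linarith [hεδ.1]

/-- the clique counting proposition. -/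
theorem stmt5 (μ : ℝ) (hμ : 0 < μ) (k : ℕ) (hk : 1 ≤ k) :
    ∃ ε : ℝ, 0 < ε ∧
      ∀ (p : ℝ), 0 < p → p < 1 →
        ∀ (V : Type) [Fintype V] (G : SimpleGraph V),
          Pseudorandom G ε p (k - 1) (2 * k - 2) →
          ∀ (r : ℕ), 2 ≤ r → r ≤ k →
            ∀ Vs : Fin r → Finset V,
              (∀ i j, i ≠ j → Disjoint (Vs i) (Vs j)) →
              (∀ i : Fin r, μ * p ^ (k - 1 - i.val) * (Fintype.card V : ℝ) ≤ ((Vs i).card : ℝ)) →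
              (1 - μ) * p ^ (r.choose 2) * ∏ i, ((Vs i).card : ℝ) ≤ (crossCliqueCount G Vs : ℝ) ∧
              (crossCliqueCount G Vs : ℝ) ≤ (1 + μ) * p ^ (r.choose 2) * ∏ i, ((Vs i).card : ℝ) := by
  have hev : ∀ᶠ ε : ℝ in 𝓝[>] 0, ∀ r ∈ Finset.range (k + 1), ∀ p : ℝ, 0 < p → p < 1 →
      ∀ (V : Type) [Fintype V] (G : SimpleGraph V),
        Pseudorandom G ε p (k - 1) (2 * k - 2) →
          ∀ Vs : Fin r → Finset V, CliqueAdmissible μ p k Vs → CliqueCountNear G μ p Vs :=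
    (eventually_all_finset _).2 fun r hr =>
      eventually_cliqueCountNear k r (Nat.lt_succ_iff.1 (Finset.mem_range.1 hr)) μ hμ μ hμ
  obtain ⟨ε, hε, hε0⟩ := (hev.and self_mem_nhdsWithin).exists
  exact ⟨ε, hε0, fun p hp hp1 V _ G hG r _ hrk Vs hdisj hcard =>
    hε r (Finset.mem_range.2 (Nat.lt_succ_iff.2 hrk)) p hp hp1 V G hG Vs ⟨hdisj, hcard⟩⟩
end

section
/- For each μ > 0 and integer k ≥ 1 there exists ε > 0 such that for all p ∈ (0,1): if 2 ≤ r ≤ k and V_1,…,V_r are pairwise disjoint vertex sets in an (ε,p,k−2,k−1)-pseudorandom graph G on n vertices with |V_i| ≥ μ p^{k−i} n for each i, then the number of copies of K_r with one vertex in each V_i is at least (1−μ) p^{r(r−1)/2} |V_1|·…·|V_r|. -/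
open scoped Classical

open Filter Topology

lemma eBetween_eq_sum_right {V : Type*} (G : SimpleGraph V) (A B : Finset V) :
    eBetween G A B = ∑ v ∈ B, (A.filter (G.Adj v)).card := by
  simp only [eBetween, Finset.card_filter, Finset.sum_product_right, G.adj_comm]

/-- In a pseudorandom graph only few vertices have small degree into a given large set. -/
lemma Pseudorandom.card_low_degree_lt {V : Type*} [Fintype V] {G : SimpleGraph V} {ε p : ℝ}
    {k l : ℕ} (hG : Pseudorandom G ε p k l) {X Y : Finset V} (hXY : Disjoint X Y)
    (hX : ε * p ^ k * (Fintype.card V : ℝ) ≤ (X.card : ℝ)) :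
    ((Y.filter fun v => ((X.filter (G.Adj v)).card : ℝ) < (1 - ε) * p * X.card).card : ℝ)
      < ε * p ^ l * (Fintype.card V : ℝ) := by
  set B := Y.filter fun v => ((X.filter (G.Adj v)).card : ℝ) < (1 - ε) * p * X.card with hB
  by_contra! h
  have h1 := (abs_lt.1 (hG X B (hXY.mono_right (Finset.filter_subset _ _)) hX h)).1
  have h2 : (eBetween G X B : ℝ) ≤ B.card * ((1 - ε) * p * X.card) := by
    rw [eBetween_eq_sum_right]
    push_cast
    rw [← nsmul_eq_mul]
    exact Finset.sum_le_card_nsmul _ _ _ fun v hv => (Finset.mem_filter.1 hv).2.le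
  linarith

/-- Extending a vertex of the first part by crossing cliques in its neighbourhood. -/
lemma sum_crossCliqueCount_le {V : Type*} [Fintype V] (G : SimpleGraph V) {r : ℕ}
    (Vs : Fin (r + 1) → Finset V) {S : Finset V} (hS : S ⊆ Vs 0) :
    ∑ v ∈ S, crossCliqueCount G (fun i : Fin r => (Vs i.succ).filter (G.Adj v))
      ≤ crossCliqueCount G Vs := by
  rw [← Finset.sum_coe_sort]
  simp only [crossCliqueCount]
  rw [← Nat.card_sigma]
  refine Nat.card_le_card_of_injective (fun x => ⟨Fin.cons x.1.1 x.2.1, ?_, ?_⟩) ?_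
  · intro i
    refine Fin.cases ?_ (fun j => ?_) i
    · simpa using hS x.1.2
    · simpa using (Finset.mem_filter.1 (x.2.2.1 j)).1
  · intro i j
    refine Fin.cases ?_ (fun i => ?_) i <;> refine Fin.cases ?_ (fun j => ?_) j
    · simp
    · intro _
      simpa using (Finset.mem_filter.1 (x.2.2.1 j)).2
    · intro _
      simpa using (Finset.mem_filter.1 (x.2.2.1 i)).2.symm
    · intro hij
      simpa using x.2.2.2 i j fun h => hij (h ▸ rfl)
  · rintro ⟨⟨v, hv⟩, f, hf⟩ ⟨⟨w, hw⟩, g, hg⟩ h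
    have h1 := Fin.cons_inj.1 (Subtype.mk.inj h)
    obtain ⟨rfl, rfl⟩ := h1
    rfl

/-- Most vertices of the first part have large degree into every other part. -/
lemma Pseudorandom.exists_subset_le_degree {V : Type*} [Fintype V] {G : SimpleGraph V}
    {ε p μ : ℝ} {k : ℕ} (hG : Pseudorandom G ε p (k - 2) (k - 1)) (hε0 : 0 < ε) (hμ : 0 < μ)
    (hp : 0 < p) (hp1 : p < 1) (hεμ : ε ≤ μ) {r : ℕ}
    (Vs : Fin (r + 1) → Finset V) (hd : ∀ i j, i ≠ j → Disjoint (Vs i) (Vs j))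
    (hV : ∀ i : Fin (r + 1),
      μ * p ^ (k - 1 - i.val) * (Fintype.card V : ℝ) ≤ ((Vs i).card : ℝ)) :
    ∃ S ⊆ Vs 0, (1 - r * ε / μ) * (Vs 0).card ≤ (S.card : ℝ) ∧ ∀ v ∈ S, ∀ i : Fin r,
      (1 - ε) * p * (Vs i.succ).card ≤ (((Vs i.succ).filter (G.Adj v)).card : ℝ) := by
  set n : ℝ := (Fintype.card V : ℝ)
  have hn : 0 ≤ n := Nat.cast_nonneg _
  set bad : Fin r → Finset V := fun i => (Vs 0).filter fun v =>
    (((Vs i.succ).filter (G.Adj v)).card : ℝ) < (1 - ε) * p * (Vs i.succ).card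
  set good : Finset V := Vs 0 \ Finset.univ.biUnion bad
  have hbad (i : Fin r) : ((bad i).card : ℝ) ≤ ε / μ * (Vs 0).card := by
    have hi : k - 1 - (i.succ : Fin (r + 1)).val ≤ k - 2 := by
      rw [Fin.val_succ]; omega
    have h1 := hG.card_low_degree_lt (hd i.succ 0 (Fin.succ_ne_zero i)) <| calc
      ε * p ^ (k - 2) * n ≤ μ * p ^ (k - 1 - (i.succ : Fin (r + 1)).val) * n := by
        gcongr ?_ * ?_ * n
        exact pow_le_pow_of_le_one hp.le hp1.le hi
      _ ≤ _ := hV i.succ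
    refine h1.le.trans ?_
    calc ε * p ^ (k - 1) * n = ε / μ * (μ * p ^ (k - 1) * n) := by field_simp
      _ ≤ _ := by
        gcongr
        simpa using hV 0
  refine ⟨good, Finset.sdiff_subset, ?_, fun v hv i => ?_⟩
  · have h1 : ((Finset.univ.biUnion bad).card : ℝ) ≤ r * (ε / μ * (Vs 0).card) := by
      calc ((Finset.univ.biUnion bad).card : ℝ) ≤ ∑ i, ((bad i).card : ℝ) := by
            exact_mod_cast Finset.card_biUnion_le
        _ ≤ ∑ _i : Fin r, ε / μ * (Vs 0).card := Finset.sum_le_sum fun i _ => hbad i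
        _ = _ := by simp
    have h2 : ((Vs 0).card : ℝ) ≤ good.card + (Finset.univ.biUnion bad).card := by
      exact_mod_cast Finset.card_le_card_sdiff_add_card
    calc (1 - r * ε / μ) * ((Vs 0).card : ℝ) = (Vs 0).card - r * (ε / μ * (Vs 0).card) := by ring
      _ ≤ _ := by linarith
  · by_contra! h
    obtain ⟨hv0, hvb⟩ := Finset.mem_sdiff.1 hv
    exact hvb (Finset.mem_biUnion.2 ⟨i, Finset.mem_univ _, Finset.mem_filter.2 ⟨hv0, h⟩⟩)

/-- One step of the clique count: passing from `r` parts to `r + 1` parts. -/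
lemma Pseudorandom.le_crossCliqueCount_succ {V : Type*} [Fintype V] {G : SimpleGraph V}
    {ε p μ : ℝ} {k : ℕ} (hG : Pseudorandom G ε p (k - 2) (k - 1)) (hμ : 0 < μ) (hμ1 : μ < 1)
    (hp : 0 < p) (hp1 : p < 1) (hε : ε ≤ 1 / 2) (hεμ : ε ≤ μ) {r : ℕ} (hr : r + 1 ≤ k)
    (hc : 1 - μ ≤ (1 - r * ε / μ) * ((1 - μ / 2) * (1 - ε) ^ r)) (hε0 : 0 < ε)
    (ih : ∀ Vs : Fin r → Finset V, (∀ i j, i ≠ j → Disjoint (Vs i) (Vs j)) →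
      (∀ i : Fin r, μ / 2 * p ^ (k - 1 - i.val) * (Fintype.card V : ℝ) ≤ ((Vs i).card : ℝ)) →
      (1 - μ / 2) * p ^ (r.choose 2) * ∏ i, ((Vs i).card : ℝ) ≤ (crossCliqueCount G Vs : ℝ))
    (Vs : Fin (r + 1) → Finset V) (hd : ∀ i j, i ≠ j → Disjoint (Vs i) (Vs j))
    (hV : ∀ i : Fin (r + 1),
      μ * p ^ (k - 1 - i.val) * (Fintype.card V : ℝ) ≤ ((Vs i).card : ℝ)) :
    (1 - μ) * p ^ ((r + 1).choose 2) * ∏ i, ((Vs i).card : ℝ) ≤ (crossCliqueCount G Vs : ℝ) := by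
  set n : ℝ := (Fintype.card V : ℝ)
  obtain ⟨S, hS, hgood, hdeg⟩ := hG.exists_subset_le_degree hε0 hμ hp hp1 hεμ Vs hd hV
  have hε1 : 0 ≤ 1 - ε := by linarith
  have hμ2 : 0 ≤ 1 - μ / 2 := by linarith
  have hcount : ∀ v ∈ S, (1 - μ / 2) * p ^ (r.choose 2) *
      (((1 - ε) * p) ^ r * ∏ i : Fin r, ((Vs i.succ).card : ℝ)) ≤
        (crossCliqueCount G (fun i : Fin r => (Vs i.succ).filter (G.Adj v)) : ℝ) := by
    intro v hv
    refine le_trans ?_ (ih _ ?_ ?_)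
    · have h1 : ((1 - ε) * p) ^ r * ∏ i : Fin r, ((Vs i.succ).card : ℝ) =
          ∏ i : Fin r, (1 - ε) * p * ((Vs i.succ).card : ℝ) := by
        simp [Finset.prod_mul_distrib]
      rw [h1]
      refine mul_le_mul_of_nonneg_left (Finset.prod_le_prod (fun i _ => ?_) fun i _ => hdeg _ hv i) ?_
      · positivity
      · positivity
    · exact fun i j hij => (hd _ _ (by simpa using hij)).mono
        (Finset.filter_subset _ _) (Finset.filter_subset _ _)
    · intro i
      have hi : k - 1 - i.val = k - 1 - (i.succ : Fin (r + 1)).val + 1 := by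
        rw [Fin.val_succ]; omega
      calc μ / 2 * p ^ (k - 1 - i.val) * n
          = 1 / 2 * p * (μ * p ^ (k - 1 - (i.succ : Fin (r + 1)).val) * n) := by
            rw [hi, pow_succ]; ring
        _ ≤ (1 - ε) * p * (Vs i.succ).card := by
            gcongr
            · linarith
            · exact hV i.succ
        _ ≤ _ := hdeg _ hv i
  have hchoose : (r + 1).choose 2 = r + r.choose 2 := by
    rw [Nat.choose_succ_succ' r 1, Nat.choose_one_right]
  calc (1 - μ) * p ^ ((r + 1).choose 2) * ∏ i, ((Vs i).card : ℝ)
      ≤ (1 - r * ε / μ) * ((1 - μ / 2) * (1 - ε) ^ r) * p ^ ((r + 1).choose 2) *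
          ∏ i, ((Vs i).card : ℝ) :=
        mul_le_mul_of_nonneg_right (mul_le_mul_of_nonneg_right hc (pow_nonneg hp.le _))
          (Finset.prod_nonneg fun _ _ => Nat.cast_nonneg _)
    _ = (1 - r * ε / μ) * (Vs 0).card * ((1 - μ / 2) * p ^ (r.choose 2) *
          (((1 - ε) * p) ^ r * ∏ i : Fin r, ((Vs i.succ).card : ℝ))) := by
        rw [Fin.prod_univ_succ, hchoose, pow_add, mul_pow]; ring
    _ ≤ S.card * ((1 - μ / 2) * p ^ (r.choose 2) *
          (((1 - ε) * p) ^ r * ∏ i : Fin r, ((Vs i.succ).card : ℝ))) :=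
        mul_le_mul_of_nonneg_right hgood <| mul_nonneg (mul_nonneg hμ2 (pow_nonneg hp.le _)) <|
          mul_nonneg (pow_nonneg (mul_nonneg hε1 hp.le) _)
            (Finset.prod_nonneg fun _ _ => Nat.cast_nonneg _)
    _ ≤ ∑ v ∈ S,
          (crossCliqueCount G (fun i : Fin r => (Vs i.succ).filter (G.Adj v)) : ℝ) := by
        rw [← nsmul_eq_mul]
        exact Finset.card_nsmul_le_sum _ _ _ hcount
    _ ≤ _ := by exact_mod_cast sum_crossCliqueCount_le G Vs hS

/-- For a fixed number `r` of parts, the lower bound holds for all small enough `ε`. -/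
lemma eventually_le_crossCliqueCount (k r : ℕ) (hr : r ≤ k) (μ : ℝ) (hμ : 0 < μ) :
    ∀ᶠ ε : ℝ in 𝓝[>] 0, ∀ p : ℝ, 0 < p → p < 1 →
      ∀ (V : Type) [Fintype V] (G : SimpleGraph V), Pseudorandom G ε p (k - 2) (k - 1) →
        ∀ Vs : Fin r → Finset V, (∀ i j, i ≠ j → Disjoint (Vs i) (Vs j)) →
          (∀ i : Fin r, μ * p ^ (k - 1 - i.val) * (Fintype.card V : ℝ) ≤ ((Vs i).card : ℝ)) →
          (1 - μ) * p ^ (r.choose 2) * ∏ i, ((Vs i).card : ℝ) ≤ (crossCliqueCount G Vs : ℝ) := by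
  induction r generalizing μ with
  | zero =>
    refine Eventually.of_forall fun ε p _ _ V _ G _ Vs _ _ => ?_
    simp [crossCliqueCount, hμ.le]
  | succ r ih =>
    rcases le_or_gt 1 μ with h1 | h1
    · refine Eventually.of_forall fun ε p hp _ V _ G _ Vs _ _ => ?_
      have : 0 ≤ p ^ ((r + 1).choose 2) * ∏ i, ((Vs i).card : ℝ) := by positivity
      rw [mul_assoc]
      exact (mul_nonpos_of_nonpos_of_nonneg (by linarith) this).trans (Nat.cast_nonneg _)
    · have hlim : Tendsto (fun ε : ℝ => (1 - r * ε / μ) * ((1 - μ / 2) * (1 - ε) ^ r)) (𝓝[>] 0)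
          (𝓝 (1 - μ / 2)) := by
        have : Continuous fun ε : ℝ => (1 - r * ε / μ) * ((1 - μ / 2) * (1 - ε) ^ r) := by
          fun_prop
        simpa using (this.tendsto 0).mono_left nhdsWithin_le_nhds
      filter_upwards [ih (by omega) (μ / 2) (by positivity), self_mem_nhdsWithin,
        hlim.eventually_const_le (show 1 - μ < 1 - μ / 2 by linarith),
        nhdsWithin_le_nhds (Iic_mem_nhds (show (0 : ℝ) < 1 / 2 by norm_num)),
        nhdsWithin_le_nhds (Iic_mem_nhds hμ)] with ε hih hε0 hc hε hεμ p hp hp1 V _ G hG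
      exact hG.le_crossCliqueCount_succ hμ h1 hp hp1 hε hεμ hr hc hε0 (hih p hp hp1 V G hG)

/-- lower bound on crossing cliques under weaker pseudorandomness. -/
theorem stmt6 (μ : ℝ) (hμ : 0 < μ) (k : ℕ) (hk : 1 ≤ k) :
    ∃ ε : ℝ, 0 < ε ∧
      ∀ (p : ℝ), 0 < p → p < 1 →
        ∀ (V : Type) [Fintype V] (G : SimpleGraph V),
          Pseudorandom G ε p (k - 2) (k - 1) →
          ∀ (r : ℕ), 2 ≤ r → r ≤ k →
            ∀ Vs : Fin r → Finset V,
              (∀ i j, i ≠ j → Disjoint (Vs i) (Vs j)) →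
              (∀ i : Fin r, μ * p ^ (k - 1 - i.val) * (Fintype.card V : ℝ) ≤ ((Vs i).card : ℝ)) →
              (1 - μ) * p ^ (r.choose 2) * ∏ i, ((Vs i).card : ℝ) ≤ (crossCliqueCount G Vs : ℝ) := by
  have h : ∀ᶠ ε : ℝ in 𝓝[>] 0, ∀ r ∈ Finset.range (k + 1), _ :=
    (Finset.eventually_all _).2 fun r hr =>
      eventually_le_crossCliqueCount k r (by simpa [Nat.lt_succ_iff] using hr) μ hμ
  obtain ⟨ε, hε, hε0⟩ := (h.and self_mem_nhdsWithin).exists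
  exact ⟨ε, hε0, fun p hp hp1 V _ G hG r _ hr =>
    hε r (by simpa [Nat.lt_succ_iff] using hr) p hp hp1 V G hG⟩
end

section
/- For each k ≥ 2 there exists a positive constant c such that for any prime power q and multiplicative subgroup A of the finite field F_q of size |A| = d ≥ c·q^{6/7} if k = 2, or d ≥ c·q^{(3k+1)/(3k+2)} if k ≥ 3, there is a cyclic ordering a_0, a_1, …, a_{d−1} of the elements of A such that a_i + a_{i+j} ∈ A for all i and all 1 ≤ j ≤ k (indices mod d). -/
open scoped Classical

section

open Polynomial

/-- Kummer theory: products of `m`-th roots of multiplicatively independent elements are linearly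
independent. -/
theorem kummer_linearIndependent {K L ι : Type*} [Field K] [Field L] [Algebra K L] [IsGalois K L]
    [Fintype ι] {m : ℕ} [NeZero m] {ζ : K} (hζ : IsPrimitiveRoot ζ m) {u : ι → K}
    (hu0 : ∀ i, u i ≠ 0)
    (hu : ∀ (e e' : ι → Fin m) (z : K),
      z ^ m * ∏ i, u i ^ (e' i : ℕ) = ∏ i, u i ^ (e i : ℕ) → e = e')
    {y : ι → L} (hy : ∀ i, y i ^ m = algebraMap K L (u i)) (k : (ι → Fin m) → K)
    (h : ∑ e, algebraMap K L (k e) * ∏ i, y i ^ (e i : ℕ) = 0) : k = 0 := by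
  have hm : m ≠ 0 := NeZero.ne m
  have hy0 : ∀ i, y i ≠ 0 := by
    intro i hi
    have := hy i
    rw [hi, zero_pow hm] at this
    exact hu0 i ((map_eq_zero _).1 this.symm)
  let Y : (ι → Fin m) → L := fun e => ∏ i, y i ^ (e i : ℕ)
  have hY0 : ∀ e, Y e ≠ 0 := fun e => Finset.prod_ne_zero_iff.2 fun i _ => pow_ne_zero _ (hy0 i)
  have hYm : ∀ e, Y e ^ m = algebraMap K L (∏ i, u i ^ (e i : ℕ)) := by
    intro e
    simp only [Y, map_prod, map_pow, ← hy, ← Finset.prod_pow]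
    exact Finset.prod_congr rfl fun i _ => by rw [← pow_mul, ← pow_mul, mul_comm]
  have hroot : ∀ x : L, x ^ m = 1 → ∃ z : K, algebraMap K L z = x := by
    intro x hx
    obtain ⟨i, -, hi⟩ := (hζ.map_of_injective (algebraMap K L).injective).eq_pow_of_pow_eq_one hx
    exact ⟨ζ ^ i, by rw [map_pow, hi]⟩
  have hfix : ∀ e (σ : L ≃ₐ[K] L), ∃ z : K, algebraMap K L z = σ (Y e) / Y e := by
    intro e σ
    apply hroot
    rw [div_pow, ← map_pow, hYm, AlgEquiv.commutes, div_self]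
    rw [← hYm]
    exact pow_ne_zero _ (hY0 e)
  let χ : (ι → Fin m) → ((L ≃ₐ[K] L) →* L) := fun e =>
    { toFun := fun σ => σ (Y e) / Y e
      map_one' := by simp [hY0 e]
      map_mul' := by
        intro σ τ
        obtain ⟨z, hz⟩ := hfix e τ
        have : τ (Y e) = algebraMap K L z * Y e := by rw [hz, div_mul_cancel₀ _ (hY0 e)]
        rw [AlgEquiv.mul_apply, this, map_mul, AlgEquiv.commutes]
        field_simp [hY0 e] }
  have hχ : Function.Injective χ := by
    intro e e' hee
    have hmem : Y e / Y e' ∈ (⊥ : IntermediateField K L) := by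
      rw [InfiniteGalois.mem_bot_iff_fixed]
      intro σ
      have h1 : σ (Y e) / Y e = σ (Y e') / Y e' := DFunLike.congr_fun hee σ
      have h2 : σ (Y e') ≠ 0 := by simpa using hY0 e'
      have h3 := hY0 e
      have h4 := hY0 e'
      rw [map_div₀]
      field_simp at h1 ⊢
      rw [h1, mul_comm]
    obtain ⟨z, hz⟩ := IntermediateField.mem_bot.1 hmem
    apply hu e e' z
    apply (algebraMap K L).injective
    rw [map_mul, map_pow, hz, ← hYm, ← hYm, ← mul_pow, div_mul_cancel₀ _ (hY0 e')]
  have hli := (linearIndependent_monoidHom (L ≃ₐ[K] L) L).comp χ hχ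
  rw [Fintype.linearIndependent_iff] at hli
  have := hli (fun e => algebraMap K L (k e) * Y e) (by
    ext σ
    have h' := congrArg σ h
    rw [map_sum, map_zero] at h'
    simp only [Finset.sum_apply, Pi.smul_apply, smul_eq_mul, Function.comp_apply, Pi.zero_apply]
    rw [← h']
    refine Finset.sum_congr rfl fun e _ => ?_
    change algebraMap K L (k e) * Y e * (σ (Y e) / Y e) = σ (_ * Y e)
    rw [map_mul, AlgEquiv.commutes]
    field_simp [hY0 e])
  funext e
  have h1 := this e
  simpa [hY0 e] using h1

theorem rootMultiplicity_prod_X_sub_C_pow {E ι : Type*} [Field E] [Fintype ι] {b : ι → E}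
    (hb : Function.Injective b) (n : ι → ℕ) (i : ι) :
    (∏ j, (X - C (b j)) ^ n j).rootMultiplicity (b i) = n i := by
  rw [← count_roots, roots_prod]
  · simp only [roots_pow, roots_X_sub_C, Multiset.count_bind]
    simp [Multiset.count_nsmul, Multiset.count_singleton, hb.eq_iff, Finset.sum_ite_eq]
  · exact Finset.prod_ne_zero_iff.2 fun j _ => pow_ne_zero _ (X_sub_C_ne_zero _)

theorem radical_classes_injective {E ι : Type*} [Field E] [Fintype ι] {b : ι → E}
    (hb : Function.Injective b) {c : ι → E} (hc : ∀ i, c i ≠ 0) {m : ℕ}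
    (e e' : ι → Fin m) (z : RatFunc E)
    (h : z ^ m * ∏ i, (algebraMap E[X] (RatFunc E) (C (c i)) /
        algebraMap E[X] (RatFunc E) (X - C (b i))) ^ (e' i : ℕ) =
      ∏ i, (algebraMap E[X] (RatFunc E) (C (c i)) /
        algebraMap E[X] (RatFunc E) (X - C (b i))) ^ (e i : ℕ)) : e = e' := by
  set φ := algebraMap E[X] (RatFunc E) with hφ
  have hinj : Function.Injective φ := RatFunc.algebraMap_injective E
  have hz : z ≠ 0 ∨ m = 0 := by
    by_contra hcon
    push Not at hcon
    rw [hcon.1, zero_pow hcon.2, zero_mul] at h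
    have := (Finset.prod_eq_zero_iff.1 h.symm)
    obtain ⟨i, -, hi⟩ := this
    have h2 := eq_zero_of_pow_eq_zero hi
    rw [div_eq_zero_iff] at h2
    rcases h2 with h2 | h2
    · exact hc i (C_eq_zero.1 ((map_eq_zero_iff φ hinj).1 h2))
    · exact X_sub_C_ne_zero _ ((map_eq_zero_iff φ hinj).1 h2)
  rcases hz with hz | rfl
  swap
  · funext i; exact (e i).elim0
  obtain ⟨p, q, hq, rfl⟩ := IsFractionRing.div_surjective (A := E[X]) z
  have hq0 : q ≠ 0 := nonZeroDivisors.ne_zero hq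
  have hp0 : p ≠ 0 := by rintro rfl; simp at hz
  have hden : ∀ n : ι → Fin m, ∏ i, φ (X - C (b i)) ^ (n i : ℕ) ≠ 0 := fun n =>
    Finset.prod_ne_zero_iff.2 fun i _ => pow_ne_zero _
      ((map_ne_zero_iff φ hinj).2 (X_sub_C_ne_zero _))
  have hq1 : φ q ≠ 0 := (map_ne_zero_iff φ hinj).2 hq0
  have key : C (∏ i, c i ^ (e' i : ℕ)) * (p ^ m * ∏ i, (X - C (b i)) ^ (e i : ℕ)) =
      C (∏ i, c i ^ (e i : ℕ)) * (q ^ m * ∏ i, (X - C (b i)) ^ (e' i : ℕ)) := by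
    apply hinj
    simp only [div_pow, Finset.prod_div_distrib] at h
    rw [← hφ] at h
    have h1 := hden e
    have h2 := hden e'
    have h3 := pow_ne_zero m hq1
    rw [div_mul_div_comm, div_eq_div_iff (mul_ne_zero h3 h2) h1] at h
    simp only [map_mul, map_prod, map_pow]
    linear_combination h
  have hne : ∀ n : ι → Fin m, (∏ i, (X - C (b i)) ^ (n i : ℕ) : E[X]) ≠ 0 := fun n =>
    Finset.prod_ne_zero_iff.2 fun i _ => pow_ne_zero _ (X_sub_C_ne_zero _)
  have hcne : ∀ n : ι → Fin m, (C (∏ i, c i ^ (n i : ℕ)) : E[X]) ≠ 0 := fun n =>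
    C_ne_zero.2 (Finset.prod_ne_zero_iff.2 fun i _ => pow_ne_zero _ (hc i))
  funext i
  have := congrArg (rootMultiplicity (b i)) key
  rw [rootMultiplicity_mul (mul_ne_zero (hcne _) (mul_ne_zero (pow_ne_zero _ hp0) (hne _))),
    rootMultiplicity_mul (mul_ne_zero (hcne _) (mul_ne_zero (pow_ne_zero _ hq0) (hne _))),
    rootMultiplicity_mul (mul_ne_zero (pow_ne_zero _ hp0) (hne _)),
    rootMultiplicity_mul (mul_ne_zero (pow_ne_zero _ hq0) (hne _)),
    rootMultiplicity_C, rootMultiplicity_C, rootMultiplicity_prod_X_sub_C_pow hb (fun i => (e i : ℕ)),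
    rootMultiplicity_prod_X_sub_C_pow hb (fun i => (e' i : ℕ)), ← count_roots, ← count_roots,
    roots_pow, roots_pow, Multiset.count_nsmul, Multiset.count_nsmul] at this
  have h3 := congrArg (· % m) this
  simp only [zero_add, Nat.mul_add_mod] at h3
  rw [Nat.mod_eq_of_lt (e i).2, Nat.mod_eq_of_lt (e' i).2] at h3
  exact Fin.ext h3

theorem natDegree_det_le_card_mul {R n : Type*} [CommRing R] [Fintype n] [DecidableEq n]
    (M : Matrix n n R[X]) {D : ℕ} (h : ∀ i j, (M i j).natDegree ≤ D) :
    M.det.natDegree ≤ Fintype.card n * D := by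
  rw [Matrix.det_apply]
  refine natDegree_sum_le_of_forall_le _ _ fun σ _ => ?_
  refine (natDegree_smul_le _ _).trans ((natDegree_prod_le _ _).trans ?_)
  exact (Finset.sum_le_card_nsmul _ _ D fun i _ => h _ _).trans (by simp)

/-- The factor arising when monomials in `m`-th roots of `c i / (X - b i)` are multiplied. -/
noncomputable def carryFactor {E ι : Type*} [Field E] [Fintype ι] (b c : ι → E) {m : ℕ}
    (e f : ι → Fin m) : E[X] :=
  ∏ i, if (e i : ℕ) + (f i : ℕ) < m then X - C (b i) else C (c i)

theorem natDegree_carryFactor_le {E ι : Type*} [Field E] [Fintype ι] (b c : ι → E) {m : ℕ}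
    (e f : ι → Fin m) : (carryFactor b c e f).natDegree ≤ Fintype.card ι := by
  refine (natDegree_prod_le _ _).trans ?_
  refine (Finset.sum_le_card_nsmul _ _ 1 fun i _ => ?_).trans (by simp)
  split_ifs <;> simp

theorem carryFactor_spec {E ι S : Type*} [Field E] [Fintype ι] [CommRing S] (φ : E[X] →+* S)
    (b c : ι → E) {m : ℕ} [NeZero m] (y : ι → S)
    (hy : ∀ i, y i ^ m * φ (X - C (b i)) = φ (C (c i))) (e f : ι → Fin m) :
    φ (∏ i, (X - C (b i))) * ((∏ i, y i ^ (e i : ℕ)) * ∏ i, y i ^ (f i : ℕ)) =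
      φ (carryFactor b c e f) * ∏ i, y i ^ ((e + f) i : ℕ) := by
  rw [carryFactor, map_prod, map_prod, ← Finset.prod_mul_distrib, ← Finset.prod_mul_distrib,
    ← Finset.prod_mul_distrib]
  refine Finset.prod_congr rfl fun i _ => ?_
  rw [Pi.add_apply, Fin.val_add, ← pow_add]
  split_ifs with hlt
  · rw [Nat.mod_eq_of_lt hlt]
  · have h1 := (e i).2
    have h2 := (f i).2
    rw [Nat.mod_eq_sub_mod (not_lt.1 hlt), Nat.mod_eq_of_lt (by omega), ← hy i]
    have h3 : (e i : ℕ) + f i = m + (e i + f i - m) := by omega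
    conv_lhs => rw [h3, pow_add]
    ring

theorem det_eq_zero_of_mulVec_eq_zero_of_eq_one {S n : Type*} [CommRing S] [Fintype n]
    [DecidableEq n]
    {A : Matrix n n S} {v : n → S} (h : A.mulVec v = 0) {j : n} (hj : v j = 1) : A.det = 0 := by
  have h4 : A.adjugate.mulVec (A.mulVec v) = 0 := by rw [h, Matrix.mulVec_zero]
  rw [Matrix.mulVec_mulVec, Matrix.adjugate_mul, Matrix.smul_mulVec, Matrix.one_mulVec] at h4
  simpa [hj] using congrFun h4 j

/-- The matrix of multiplication by `∑ f, k f * y ^ f` in the monomial basis. -/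
noncomputable def monomialMulMatrix {E ι : Type*} [Field E] [Fintype ι] (b c : ι → E) {m : ℕ}
    [NeZero m] (k : (ι → Fin m) → E[X]) : Matrix (ι → Fin m) (ι → Fin m) E[X] :=
  Matrix.of fun e f => carryFactor b c e (f - e) * k (f - e)

theorem monomialMulMatrix_spec {E ι S : Type*} [Field E] [Fintype ι] [CommRing S] (φ : E[X] →+* S)
    (b c : ι → E) {m : ℕ} [NeZero m] (k : (ι → Fin m) → E[X]) (y : ι → S)
    (hy : ∀ i, y i ^ m * φ (X - C (b i)) = φ (C (c i))) (e : ι → Fin m) :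
    ∑ f, φ (monomialMulMatrix b c k e f) * ∏ i, y i ^ (f i : ℕ) =
      φ (∏ i, (X - C (b i))) * (∏ i, y i ^ (e i : ℕ)) *
        ∑ f, φ (k f) * ∏ i, y i ^ (f i : ℕ) := by
  rw [Finset.mul_sum, ← Equiv.sum_comp (Equiv.addLeft e)]
  refine Finset.sum_congr rfl fun f _ => ?_
  have := carryFactor_spec φ b c y hy e f
  simp only [monomialMulMatrix, Matrix.of_apply, Equiv.coe_addLeft, add_sub_cancel_left, map_mul]
  linear_combination (-φ (k f)) * this

theorem natDegree_det_monomialMulMatrix_le {E ι : Type*} [Field E] [Fintype ι] (b c : ι → E)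
    {m : ℕ} [NeZero m] {k : (ι → Fin m) → E[X]} {K : ℕ} (hk : ∀ e, (k e).natDegree ≤ K) :
    (monomialMulMatrix b c k).det.natDegree ≤ m ^ Fintype.card ι * (K + Fintype.card ι) := by
  refine (natDegree_det_le_card_mul _ (D := K + Fintype.card ι) fun e f => ?_).trans_eq
    (by rw [Fintype.card_fun, Fintype.card_fin])
  rw [monomialMulMatrix, Matrix.of_apply, add_comm K]
  exact natDegree_mul_le.trans (add_le_add (natDegree_carryFactor_le b c e (f - e)) (hk (f - e)))

theorem dvd_det_monomialMulMatrix {E ι : Type*} [Field E] [Fintype ι] {b c : ι → E}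
    {m : ℕ} [NeZero m] {g : E[X]} {w : ι → E[X]}
    (hw : ∀ i, g ∣ w i ^ m * (X - C (b i)) - C (c i)) {k : (ι → Fin m) → E[X]}
    (hdvd : g ∣ ∑ e, k e * ∏ i, w i ^ (e i : ℕ)) : g ∣ (monomialMulMatrix b c k).det := by
  obtain ⟨S, _, φ, hφ⟩ : ∃ (S : Type _) (_ : CommRing S) (φ : E[X] →+* S),
      ∀ p, φ p = 0 ↔ g ∣ p :=
    ⟨_, _, Ideal.Quotient.mk (Ideal.span {g}), fun p => by
      rw [Ideal.Quotient.eq_zero_iff_mem, Ideal.mem_span_singleton]⟩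
  rw [← hφ, RingHom.map_det]
  refine det_eq_zero_of_mulVec_eq_zero_of_eq_one
    (v := fun f : ι → Fin m => ∏ i, φ (w i) ^ (f i : ℕ)) (j := 0) ?_ (by simp)
  funext e
  have h2 := monomialMulMatrix_spec φ b c k (fun i => φ (w i)) (fun i => by
    have := (hφ _).2 (hw i)
    rw [map_sub, map_mul, map_pow] at this
    exact sub_eq_zero.1 this) e
  have h3 : ∑ f, φ (k f) * ∏ i, φ (w i) ^ (f i : ℕ) = 0 := by
    rw [← (hφ _).2 hdvd, map_sum]
    simp only [map_mul, map_prod, map_pow]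
  rw [h3, mul_zero] at h2
  exact h2

/-- Zero estimate: a nonzero combination, with coefficients of small degree, of monomials in
approximate `m`-th roots of `c i / (X - b i)` is not divisible by a polynomial of large degree. -/
theorem eq_zero_of_dvd_sum_monomials {E ι : Type*} [Field E] [IsAlgClosed E] [Fintype ι]
    {b : ι → E} (hb : Function.Injective b) {c : ι → E} (hc : ∀ i, c i ≠ 0) {m : ℕ} [NeZero m]
    (hmE : (m : E) ≠ 0) {g : E[X]} {w : ι → E[X]}
    (hw : ∀ i, g ∣ w i ^ m * (X - C (b i)) - C (c i))
    {k : (ι → Fin m) → E[X]} {K : ℕ} (hk : ∀ e, (k e).natDegree ≤ K)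
    (hK : m ^ Fintype.card ι * (K + Fintype.card ι) < g.natDegree)
    (hdvd : g ∣ ∑ e, k e * ∏ i, w i ^ (e i : ℕ)) : k = 0 := by
  have hdet : (monomialMulMatrix b c k).det = 0 := by
    by_contra hne
    have h2 := natDegree_le_of_dvd (dvd_det_monomialMulMatrix hw hdvd) hne
    have h3 := natDegree_det_monomialMulMatrix_le b c hk
    omega
  obtain ⟨v, hv0, hv⟩ := Matrix.exists_vecMul_eq_zero_iff.2 hdet
  let R := RatFunc E
  let L := SeparableClosure R
  have hmR : (m : R) ≠ 0 := by
    rw [← map_natCast (algebraMap E R)]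
    exact (_root_.map_ne_zero _).2 hmE
  have : NeZero (m : E) := ⟨hmE⟩
  have : NeZero (m : R) := ⟨hmR⟩
  have : NeZero (m : L) := by
    refine ⟨?_⟩
    rw [← map_natCast (algebraMap R L)]
    exact (_root_.map_ne_zero _).2 hmR
  obtain ⟨ζ, hζ⟩ := HasEnoughRootsOfUnity.exists_primitiveRoot E m
  have hζR := hζ.map_of_injective (algebraMap E R).injective
  have hinj : Function.Injective (algebraMap E[X] R) := RatFunc.algebraMap_injective E
  have hX : ∀ i, algebraMap E[X] R (X - C (b i)) ≠ 0 := fun i =>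
    (map_ne_zero_iff _ hinj).2 (X_sub_C_ne_zero _)
  have hC : ∀ i, algebraMap E[X] R (C (c i)) ≠ 0 := fun i =>
    (map_ne_zero_iff _ hinj).2 (C_ne_zero.2 (hc i))
  let u : ι → R := fun i => algebraMap E[X] R (C (c i)) / algebraMap E[X] R (X - C (b i))
  choose y hy using fun i => IsSepClosed.exists_pow_nat_eq (algebraMap R L (u i)) m
  have hli := fun k' h => kummer_linearIndependent hζR (u := u) (fun i => div_ne_zero (hC i) (hX i))
    (radical_classes_injective hb hc) hy k' h
  let φ : E[X] →+* L := (algebraMap R L).comp (algebraMap E[X] R)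
  have hφ : Function.Injective φ := (algebraMap R L).injective.comp hinj
  have hkey := monomialMulMatrix_spec φ b c k y (fun i => by
    rw [hy i]
    simp only [φ, RingHom.comp_apply, ← map_mul, u]
    rw [div_mul_cancel₀ _ (hX i)])
  have hprod : (∑ e, φ (v e) * ∏ i, y i ^ (e i : ℕ)) * (φ (∏ i, (X - C (b i))) *
      ∑ f, φ (k f) * ∏ i, y i ^ (f i : ℕ)) = 0 := by
    calc _ = ∑ e, φ (v e) * ∑ f, φ (monomialMulMatrix b c k e f) * ∏ i, y i ^ (f i : ℕ) := by
          rw [Finset.sum_mul]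
          refine Finset.sum_congr rfl fun e _ => ?_
          rw [hkey e]; ring
      _ = ∑ f, φ (Matrix.vecMul v (monomialMulMatrix b c k) f) * ∏ i, y i ^ (f i : ℕ) := by
          simp only [Finset.mul_sum, Matrix.vecMul, dotProduct, map_sum, Finset.sum_mul, map_mul]
          rw [Finset.sum_comm]
          simp only [mul_assoc]
      _ = 0 := by simp [hv]
  have hzero : ∀ k' : (ι → Fin m) → E[X], ∑ e, φ (k' e) * ∏ i, y i ^ (e i : ℕ) = 0 → k' = 0 := by
    intro k' h
    have := hli (fun e => algebraMap E[X] R (k' e)) h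
    funext e
    exact (map_eq_zero_iff _ hinj).1 (congrFun this e)
  rcases mul_eq_zero.1 hprod with h | h
  · exact absurd (hzero v h) hv0
  · rcases mul_eq_zero.1 h with h | h
    · exact absurd ((map_eq_zero_iff φ hφ).1 h)
        (Finset.prod_ne_zero_iff.2 fun i _ => X_sub_C_ne_zero _)
    · exact hzero k h

theorem dvd_pow_mul_hasseDeriv_mul {E : Type*} [Field E] {h U V : E[X]}
    (hU : ∀ c, U ∣ h ^ c * hasseDeriv c U) (hV : ∀ c, V ∣ h ^ c * hasseDeriv c V) (c : ℕ) :
    U * V ∣ h ^ c * hasseDeriv c (U * V) := by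
  rw [hasseDeriv_mul, Finset.mul_sum]
  refine Finset.dvd_sum fun ij hij => ?_
  rw [← Finset.HasAntidiagonal.mem_antidiagonal.1 hij, pow_add, mul_mul_mul_comm]
  exact mul_dvd_mul (hU _) (hV _)

theorem dvd_pow_mul_hasseDeriv_prod {E ι : Type*} [Field E] [Fintype ι] (b : ι → E) (n : ι → ℕ)
    (c : ℕ) : (∏ i, (X - C (b i)) ^ n i) ∣
      (∏ i, (X - C (b i))) ^ c * hasseDeriv c (∏ i, (X - C (b i)) ^ n i) := by
  have h1 : ∀ c, (1 : E[X]) ∣ (∏ i, (X - C (b i))) ^ c * hasseDeriv c (1 : E[X]) :=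
    fun c => one_dvd _
  have hpow : ∀ i k c, (X - C (b i)) ^ k ∣
      (∏ i, (X - C (b i))) ^ c * hasseDeriv c ((X - C (b i)) ^ k) := by
    intro i k
    induction k with
    | zero => simp
    | succ k ih =>
      rw [pow_succ]
      refine dvd_pow_mul_hasseDeriv_mul ih fun c => ?_
      rcases Nat.eq_zero_or_pos c with rfl | hc
      · simp
      · exact ((Finset.dvd_prod_of_mem _ (Finset.mem_univ i)).trans
          (dvd_pow_self _ hc.ne')).mul_right _
  have hs : ∀ (s : Finset ι) c, (∏ i ∈ s, (X - C (b i)) ^ n i) ∣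
      (∏ i, (X - C (b i))) ^ c * hasseDeriv c (∏ i ∈ s, (X - C (b i)) ^ n i) := by
    intro s
    induction s using Finset.induction_on with
    | empty => simp
    | insert i s hi ih =>
      rw [Finset.prod_insert hi]
      exact dvd_pow_mul_hasseDeriv_mul (hpow i _) ih
  exact hs _ c

/-- Hasse derivatives of a product of powers of linear factors, after clearing the common
denominator. -/
theorem exists_pow_mul_hasseDeriv_eq {E ι : Type*} [Field E] [Fintype ι] (b : ι → E) (n : ι → ℕ)
    (M c : ℕ) (hc : c ≤ M) : ∃ G : E[X], G.natDegree ≤ Fintype.card ι * M ∧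
      (∏ i, (X - C (b i))) ^ M * hasseDeriv c (∏ i, (X - C (b i)) ^ n i) =
        (∏ i, (X - C (b i)) ^ n i) * G := by
  have hm1 : (∏ i, (X - C (b i))).Monic := monic_prod_of_monic _ _ fun i _ => monic_X_sub_C _
  have hm2 : (∏ i, (X - C (b i)) ^ n i).Monic :=
    monic_prod_of_monic _ _ fun i _ => (monic_X_sub_C _).pow _
  obtain ⟨G, hG⟩ := (dvd_pow_mul_hasseDeriv_prod b n c).mul_left ((∏ i, (X - C (b i))) ^ (M - c))
  rw [← mul_assoc, ← pow_add, Nat.sub_add_cancel hc] at hG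
  refine ⟨G, ?_, hG⟩
  have h1 := congrArg natDegree hG
  rcases eq_or_ne G 0 with rfl | hG0
  · simp
  rw [hm2.natDegree_mul' hG0] at h1
  have h2 := natDegree_mul_le (p := (∏ i, (X - C (b i))) ^ M)
    (q := hasseDeriv c (∏ i, (X - C (b i)) ^ n i))
  have h3 := natDegree_hasseDeriv_le (∏ i, (X - C (b i)) ^ n i) c
  rw [hm1.natDegree_pow, natDegree_prod_of_monic _ _ fun i _ => monic_X_sub_C _] at h2
  simp only [natDegree_X_sub_C, Finset.sum_const, smul_eq_mul, mul_one, Finset.card_univ] at h2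
  have h4 : M * Fintype.card ι = Fintype.card ι * M := mul_comm _ _
  omega

theorem coeff_mul_pow_X_pow_add_C {E : Type*} [Field E] (A : E[X]) (a : E) {Q j l : ℕ}
    (hl : l < Q) : (A * (X ^ Q + C a) ^ j).coeff l = a ^ j * A.coeff l := by
  obtain ⟨B, hB⟩ : X ^ Q ∣ (X ^ Q + C a) ^ j - C a ^ j := by
    have h := sub_dvd_pow_sub_pow (X ^ Q + C a) (C a) j
    rwa [add_sub_cancel_right] at h
  rw [sub_eq_iff_eq_add.1 hB, mul_add, coeff_add, ← C_pow, coeff_mul_C, mul_comm (X ^ Q) B,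
    ← mul_assoc, coeff_mul_X_pow', if_neg (not_le.2 hl), zero_add, mul_comm]

theorem X_sub_C_pow_dvd_iff_hasseDeriv {E : Type*} [Field E] {P : E[X]} {x : E} {M : ℕ} :
    (X - C x) ^ M ∣ P ↔ ∀ l < M, (hasseDeriv l P).eval x = 0 := by
  rw [X_sub_C_pow_dvd_iff, X_pow_dvd_iff]
  simp only [← taylor_coeff, taylor_apply]

theorem hasseDeriv_eval_mul_pow {E : Type*} [Field E] (p : ℕ) [Fact p.Prime] [CharP E p] {s : ℕ}
    (A : E[X]) (γ x : E) (hx : x ^ p ^ s = x) (j : ℕ) {l : ℕ} (hl : l < p ^ s) :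
    (hasseDeriv l (A * (X - C γ) ^ (p ^ s * j))).eval x =
      (x - γ ^ p ^ s) ^ j * (hasseDeriv l A).eval x := by
  have h : taylor x ((X - C γ) ^ (p ^ s * j)) = (X ^ p ^ s + C (x - γ ^ p ^ s)) ^ j := by
    rw [taylor_pow, map_sub, taylor_X, taylor_C, add_sub_assoc, ← C_sub, pow_mul,
      add_pow_char_pow, ← C_pow, sub_pow_char_pow, hx]
  rw [← taylor_coeff, taylor_mul, h, coeff_mul_pow_X_pow_add_C _ _ hl, taylor_coeff]

/-- Siegel's lemma over a field: fewer linear conditions than unknown coefficients. -/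
theorem exists_ne_zero_of_card_mul_lt {E σ : Type*} [Field E] [Fintype σ] {K M W : ℕ}
    (Λ : Fin M → (σ → E[X]) →ₗ[E] E[X])
    (hΛ : ∀ l k, (∀ s, (k s).degree < (K : WithBot ℕ)) → (Λ l k).natDegree < W)
    (hcard : M * W < Fintype.card σ * K) :
    ∃ k : σ → E[X], k ≠ 0 ∧ (∀ s, (k s).degree < (K : WithBot ℕ)) ∧ ∀ l, Λ l k = 0 := by
  let inc : (σ → degreeLT E K) →ₗ[E] (σ → E[X]) :=
    LinearMap.pi fun s => (degreeLT E K).subtype ∘ₗ LinearMap.proj s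
  let f : (σ → degreeLT E K) →ₗ[E] (Fin M → Fin W → E) :=
    LinearMap.pi fun l => LinearMap.pi fun t => (lcoeff E t) ∘ₗ (Λ l) ∘ₗ inc
  have : Module.Finite E (degreeLT E K) := Module.Finite.equiv (degreeLTEquiv E K).symm
  have hfin : Module.finrank E (Fin M → Fin W → E) < Module.finrank E (σ → degreeLT E K) := by
    have h1 := (degreeLTEquiv E K).finrank_eq
    rw [Module.finrank_fin_fun] at h1
    have h2 : Module.finrank E (σ → degreeLT E K) = Fintype.card σ * K := by
      refine (Module.finrank_pi_fintype E (M := fun _ : σ => degreeLT E K)).trans ?_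
      rw [Finset.sum_const, Finset.card_univ, h1, smul_eq_mul]
    rw [h2, Module.finrank_pi_fintype]
    simpa only [Module.finrank_fin_fun, Finset.sum_const, Finset.card_univ, Fintype.card_fin,
      smul_eq_mul, Module.finrank_self, mul_one] using hcard
  obtain ⟨k, hk, hk0⟩ := (Submodule.ne_bot_iff _).1 (LinearMap.ker_ne_bot_of_finrank_lt hfin (f := f))
  have hdeg : ∀ s, (inc k s).degree < (K : WithBot ℕ) := fun s => mem_degreeLT.1 (k s).2
  refine ⟨inc k, ?_, hdeg, fun l => ?_⟩
  · intro h
    apply hk0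
    funext s
    exact Subtype.ext (congrFun h s)
  · ext t
    rw [coeff_zero]
    by_cases ht : t < W
    · exact congrFun (congrFun (LinearMap.mem_ker.1 hk) l) ⟨t, ht⟩
    · exact coeff_eq_zero_of_natDegree_lt ((hΛ l _ hdeg).trans_le (not_lt.1 ht))

/-- Nonvanishing of the auxiliary polynomial. -/
theorem auxPoly_ne_zero {E ι : Type*} [Field E] [IsAlgClosed E] [Fintype ι] (p : ℕ)
    [Fact p.Prime] [CharP E p]
    {b : ι → E} (hb : Function.Injective b) {m : ℕ} [NeZero m] (hmE : (m : E) ≠ 0) {s D : ℕ}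
    (hD : D * m + 1 = p ^ s) {γ : E} (hγ : ∀ i, γ ≠ b i) {J K : ℕ}
    (hK : m ^ Fintype.card ι * (K + Fintype.card ι) < p ^ s)
    {k : (ι → Fin m) × Fin J → E[X]} (hk : ∀ e, (k e).natDegree ≤ K)
    (h : ∑ e, k e * (∏ i, (X - C (b i)) ^ (D * e.1 i)) * (X - C γ) ^ (p ^ s * e.2) = 0) :
    k = 0 := by
  have hj : ∀ n (hn : n < J), (fun e => k (e, ⟨n, hn⟩)) = 0 := by
    intro n
    induction n using Nat.strong_induction_on with
    | _ n ih =>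
    intro hn
    refine eq_zero_of_dvd_sum_monomials (K := K) hb (c := fun i => (γ - b i) ^ p ^ s)
      (fun i => pow_ne_zero _ (sub_ne_zero.2 (hγ i))) hmE (g := (X - C γ) ^ p ^ s)
      (w := fun i => (X - C (b i)) ^ D) ?_ (fun e => hk _) ?_ ?_
    · intro i
      rw [← pow_mul, ← pow_succ, hD, C_pow, ← sub_pow_char_pow, C_sub, sub_sub_sub_cancel_right]
    · rwa [natDegree_pow, natDegree_X_sub_C, mul_one]
    · have hne : (X - C γ) ^ (p ^ s * n) ≠ 0 := pow_ne_zero _ (X_sub_C_ne_zero _)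
      rw [← mul_dvd_mul_iff_left hne, ← pow_add, Finset.mul_sum]
      have h2 : ∀ e : (ι → Fin m) × Fin J, e.2 ≠ ⟨n, hn⟩ → (X - C γ) ^ (p ^ s * n + p ^ s) ∣
          k e * (∏ i, (X - C (b i)) ^ (D * e.1 i)) * (X - C γ) ^ (p ^ s * e.2) := by
        rintro ⟨e, j⟩ hej
        rcases lt_or_ge (j : ℕ) n with hlt | hge
        · have := congrFun (ih j hlt j.2) e
          simp only [Fin.eta, Pi.zero_apply] at this
          simp [this]
        · have : n + 1 ≤ j := by
            rcases hge.lt_or_eq with h | h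
            · exact h
            · exact absurd (Fin.ext h.symm) hej
          refine (pow_dvd_pow _ ?_).mul_left _
          rw [← Nat.mul_succ]
          exact Nat.mul_le_mul_left _ this
      rw [Fintype.sum_prod_type_right, ← Finset.add_sum_erase _ _ (Finset.mem_univ ⟨n, hn⟩)] at h
      have h3 := eq_neg_of_add_eq_zero_left h
      have h4 : ∑ e, (X - C γ) ^ (p ^ s * n) * (k (e, ⟨n, hn⟩) *
          ∏ i, ((X - C (b i)) ^ D) ^ (e i : ℕ)) = ∑ e, k (e, ⟨n, hn⟩) *
          (∏ i, (X - C (b i)) ^ (D * e i)) * (X - C γ) ^ (p ^ s * n) := by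
        refine Finset.sum_congr rfl fun e _ => ?_
        simp only [← pow_mul]
        ring
      rw [h4, h3, dvd_neg]
      refine Finset.dvd_sum fun j hj => Finset.dvd_sum fun e _ => h2 (e, j) ?_
      exact (Finset.mem_erase.1 hj).1
  funext e
  exact congrFun (hj e.2 e.2.2) e.1

/-- Stepanov's method: the number of rational points at which the power residue classes of several
linear polynomials are prescribed. -/
theorem card_mul_le_of_pow_eq {E ι : Type*} [Field E] [IsAlgClosed E] [Fintype ι] (p : ℕ)
    [Fact p.Prime] [CharP E p] {b : ι → E} (hb : Function.Injective b) {m : ℕ} [NeZero m]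
    (hmE : (m : E) ≠ 0) {s D : ℕ} (hD : D * m + 1 = p ^ s) {J K M : ℕ} (hM : M ≤ p ^ s)
    (hK : m ^ Fintype.card ι * (K + Fintype.card ι) < p ^ s)
    (hcount : M * (K + J + Fintype.card ι * M) < m ^ Fintype.card ι * J * K) {ζ : ι → E}
    {T : Finset E} (hT : ∀ x ∈ T, x ^ p ^ s = x ∧ ∀ i, x ≠ b i ∧ (x - b i) ^ D = ζ i) :
    T.card * M ≤ p ^ s * (J + Fintype.card ι) := by
  obtain ⟨γ, hγ⟩ := Infinite.exists_notMem_finset (Finset.univ.image b)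
  have hγ : ∀ i, γ ≠ b i := fun i hi =>
    hγ (Finset.mem_image.2 ⟨i, Finset.mem_univ _, hi.symm⟩)
  set U : (ι → Fin m) → E[X] := fun e => ∏ i, (X - C (b i)) ^ (D * e i) with hU
  have hex : ∀ (e : ι → Fin m) (c : ℕ), ∃ G : E[X], G.natDegree ≤ Fintype.card ι * M ∧
      (c ≤ M → (∏ i, (X - C (b i))) ^ M * hasseDeriv c (U e) = U e * G) := by
    intro e c
    by_cases hc : c ≤ M
    · obtain ⟨G, h1, h2⟩ := exists_pow_mul_hasseDeriv_eq b (fun i => D * e i) M c hc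
      exact ⟨G, h1, fun _ => h2⟩
    · exact ⟨0, by simp, fun h => absurd h hc⟩
  choose G hGdeg hG using hex
  have hK0 : 0 < K := by
    rcases Nat.eq_zero_or_pos K with rfl | h
    · simp at hcount
    · exact h
  have hJ0 : 0 < J := by
    rcases Nat.eq_zero_or_pos J with rfl | h
    · simp at hcount
    · exact h
  let Λ : Fin M → ((ι → Fin m) × Fin J → E[X]) →ₗ[E] E[X] := fun l =>
    ∑ e, ∑ ac ∈ Finset.HasAntidiagonal.antidiagonal (l : ℕ), LinearMap.mulLeft E
      (C (∏ i, ζ i ^ (e.1 i : ℕ)) * (X - C (γ ^ p ^ s)) ^ (e.2 : ℕ) * G e.1 ac.2) ∘ₗ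
        hasseDeriv ac.1 ∘ₗ LinearMap.proj e
  have hΛ : ∀ l k, Λ l k = ∑ e, ∑ ac ∈ Finset.HasAntidiagonal.antidiagonal (l : ℕ),
      (C (∏ i, ζ i ^ (e.1 i : ℕ)) * (X - C (γ ^ p ^ s)) ^ (e.2 : ℕ) * G e.1 ac.2) *
        hasseDeriv ac.1 (k e) := by
    intro l k
    simp only [Λ, LinearMap.sum_apply, LinearMap.comp_apply, LinearMap.mulLeft_apply,
      LinearMap.proj_apply]
  have hnat : ∀ {k : (ι → Fin m) × Fin J → E[X]}, (∀ s, (k s).degree < (K : WithBot ℕ)) →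
      ∀ s, (k s).natDegree ≤ K - 1 := by
    intro k hk s
    rcases eq_or_ne (k s) 0 with h | h
    · simp [h]
    · have := (natDegree_lt_iff_degree_lt h).2 (hk s)
      omega
  obtain ⟨k, hk0, hk, hker⟩ := exists_ne_zero_of_card_mul_lt (K := K)
    (W := K + J + Fintype.card ι * M) Λ (by
      intro l k hk
      refine lt_of_le_of_lt (b := J + Fintype.card ι * M + (K - 1)) ?_ (by omega)
      rw [hΛ]
      refine natDegree_sum_le_of_forall_le _ _ fun e _ =>
        natDegree_sum_le_of_forall_le _ _ fun ac _ => ?_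
      refine natDegree_mul_le.trans (add_le_add (natDegree_mul_le.trans (add_le_add ?_
        (hGdeg _ _))) ?_)
      · refine (natDegree_C_mul_le _ _).trans (natDegree_pow_le.trans ?_)
        rw [natDegree_X_sub_C, mul_one]
        exact e.2.2.le
      · have := natDegree_hasseDeriv_le (k e) ac.1
        have := hnat hk e
        omega) (by
      simpa [Fintype.card_prod, Fintype.card_fun, Fintype.card_fin] using hcount)
  set P : E[X] := ∑ e, k e * U e.1 * (X - C γ) ^ (p ^ s * e.2) with hP
  have hP0 : P ≠ 0 := fun h => hk0 (auxPoly_ne_zero p hb hmE hD hγ hK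
    (fun e => (hnat hk e).trans (Nat.sub_le _ _)) h)
  have hvan : ∀ x ∈ T, (X - C x) ^ M ∣ P := by
    intro x hx
    obtain ⟨hxs, hxb⟩ := hT x hx
    rw [X_sub_C_pow_dvd_iff_hasseDeriv]
    intro l hl
    have hh : (∏ i, (x - b i)) ^ M ≠ 0 :=
      pow_ne_zero _ (Finset.prod_ne_zero_iff.2 fun i _ => sub_ne_zero.2 (hxb i).1)
    have hUx : ∀ e, (U e).eval x = ∏ i, ζ i ^ (e i : ℕ) := by
      intro e
      simp only [hU, eval_prod, eval_pow, eval_sub, eval_X, eval_C, pow_mul, (hxb _).2]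
    have hGx : ∀ e c, c ≤ M → (∏ i, (x - b i)) ^ M * (hasseDeriv c (U e)).eval x =
        (∏ i, ζ i ^ (e i : ℕ)) * (G e c).eval x := by
      intro e c hc
      have := congrArg (eval x) (hG e c hc)
      simpa only [eval_mul, eval_pow, eval_prod, eval_sub, eval_X, eval_C, hUx] using this
    rw [← mul_right_inj' hh, mul_zero, hP, map_sum, eval_finsetSum, Finset.mul_sum]
    have h1 := congrArg (eval x) (hker ⟨l, hl⟩)
    rw [hΛ, eval_finsetSum, eval_zero] at h1
    rw [← h1]
    refine Finset.sum_congr rfl fun e _ => ?_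
    rw [hasseDeriv_eval_mul_pow p _ _ _ hxs _ (hl.trans_le hM), hasseDeriv_mul, eval_finsetSum,
      eval_finsetSum, Finset.mul_sum, Finset.mul_sum]
    refine Finset.sum_congr rfl fun ac hac => ?_
    have hac' : ac.2 ≤ M := by
      have := Finset.HasAntidiagonal.mem_antidiagonal.1 hac
      simp only at this
      omega
    have h2 := hGx e.1 ac.2 hac'
    simp only [eval_mul, eval_pow, eval_sub, eval_X, eval_C]
    linear_combination ((x - γ ^ p ^ s) ^ (e.2 : ℕ) * eval x (hasseDeriv ac.1 (k e))) * h2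
  have hdvd : ∏ x ∈ T, (X - C x) ^ M ∣ P :=
    Finset.prod_dvd_of_coprime (fun x _ y _ hxy =>
      (isCoprime_X_sub_C_of_isUnit_sub (sub_ne_zero.2 hxy).isUnit).pow) hvan
  have hdeg := natDegree_le_of_dvd hdvd hP0
  rw [natDegree_prod_of_monic _ _ fun x _ => (monic_X_sub_C x).pow M] at hdeg
  simp only [natDegree_pow, natDegree_X_sub_C, mul_one, Finset.sum_const, smul_eq_mul] at hdeg
  refine hdeg.trans (natDegree_sum_le_of_forall_le _ _ fun e _ => ?_)
  have hKs : K - 1 ≤ p ^ s := by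
    have : 1 * K ≤ m ^ Fintype.card ι * K :=
      Nat.mul_le_mul_right _ (Nat.pos_of_ne_zero (pow_ne_zero _ (NeZero.ne m)))
    rw [mul_add] at hK
    omega
  have hUdeg : (U e.1).natDegree ≤ Fintype.card ι * p ^ s := by
    refine (natDegree_prod_le _ _).trans ((Finset.sum_le_card_nsmul _ _ (p ^ s)
      fun i _ => ?_).trans (by simp))
    rw [natDegree_pow, natDegree_X_sub_C, mul_one, ← hD]
    exact (Nat.mul_le_mul_left _ (e.1 i).2.le).trans (Nat.le_succ _)
  have hj : p ^ s * e.2 + p ^ s ≤ p ^ s * J := by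
    rw [← Nat.mul_succ]
    exact Nat.mul_le_mul_left _ e.2.2
  have h1 := natDegree_mul_le (p := k e * U e.1) (q := (X - C γ) ^ (p ^ s * e.2))
  have h2 := natDegree_mul_le (p := k e) (q := U e.1)
  have h3 := hnat hk e
  rw [natDegree_pow, natDegree_X_sub_C, mul_one] at h1
  rw [mul_add, mul_comm (p ^ s) (Fintype.card ι)]
  omega

/-- The number of rational points at which the power residue classes of several linear
polynomials are prescribed is at most the expected one up to a multiple of the square root of the
size of the field. -/
theorem exists_card_mul_le_of_pow_eq {E ι : Type*} [Field E] [IsAlgClosed E] [Fintype ι] (p : ℕ)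
    [Fact p.Prime] [CharP E p] {b : ι → E} (hb : Function.Injective b) {m : ℕ} [NeZero m]
    (hmE : (m : E) ≠ 0) : ∃ C₀ N₀ : ℕ, ∀ t D : ℕ, N₀ ≤ p ^ t → D * m + 1 = p ^ (2 * t) →
      ∀ (ζ : ι → E) (T : Finset E),
        (∀ x ∈ T, x ^ p ^ (2 * t) = x ∧ ∀ i, x ≠ b i ∧ (x - b i) ^ D = ζ i) →
        T.card * m ^ Fintype.card ι ≤ p ^ (2 * t) + C₀ * p ^ t := by
  set r := Fintype.card ι with hr
  set R := m ^ r with hR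
  have hR0 : 0 < R := Nat.pos_of_ne_zero (pow_ne_zero _ (NeZero.ne m))
  set C₁ := 8 * R * (1 + r * R) with hC₁
  refine ⟨C₁ + r, 8 * R + 4 * r + 8, fun t D hN hD ζ T hT => ?_⟩
  set N := p ^ t with hNdef
  have hQ : p ^ (2 * t) = N * N := by rw [hNdef, two_mul, pow_add]
  set K := (N * N) / (2 * R) with hKdef
  have hKle : 2 * R * K ≤ N * N := Nat.mul_div_le _ _
  have hKge : N * N < 2 * R * K + 2 * R := Nat.lt_mul_div_succ _ (by omega)
  have hNN : (8 * R + 4 * r + 8) * N ≤ N * N := Nat.mul_le_mul_right _ hN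
  have hRr : R * r * 4 ≤ N * N / 2 := by
    rw [Nat.le_div_iff_mul_le two_pos]
    calc R * r * 4 * 2 = (8 * R) * r := by ring
      _ ≤ N * N := Nat.mul_le_mul (by omega) (by omega)
  have hN1 : 0 < N := by omega
  have key := card_mul_le_of_pow_eq p hb hmE (K := K) (J := N + C₁) (M := R * N) hD
    (by rw [hQ]; exact Nat.mul_le_mul_right _ (by omega))
    (by
      rw [hQ, ← hr, ← hR, mul_add]
      have : R * K * 2 ≤ N * N := by linarith
      have : 1 ≤ N * N := Nat.mul_pos hN1 hN1
      omega)
    (by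
      rw [← hr, ← hR]
      have h1 : N * N ≤ 4 * R * K := by
        have : 8 * R ≤ N * N := by
          calc 8 * R ≤ N := by omega
            _ ≤ N * N := Nat.le_mul_of_pos_left _ hN1
        linarith
      have h2 : N * N * 2 * (1 + r * R) ≤ C₁ * K := by
        rw [hC₁]; nlinarith [Nat.mul_le_mul_right (2 * (1 + r * R)) h1]
      have h3 : N * C₁ + N ≤ N * N * (1 + r * R) := by
        calc N * C₁ + N = N * (8 * R * (1 + r * R) + 1) := by rw [hC₁]; ring
          _ ≤ N * ((8 * R + 1) * (1 + r * R)) := Nat.mul_le_mul_left _ (by nlinarith)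
          _ ≤ N * (N * (1 + r * R)) :=
            Nat.mul_le_mul_left _ (Nat.mul_le_mul_right _ (by omega))
          _ = _ := by ring
      have h4 : N * (K + (N + C₁) + r * (R * N)) < (N + C₁) * K := by nlinarith
      calc R * N * (K + (N + C₁) + r * (R * N)) = R * (N * (K + (N + C₁) + r * (R * N))) := by ring
        _ < R * ((N + C₁) * K) := Nat.mul_lt_mul_of_pos_left h4 hR0
        _ = _ := by ring) hT
  rw [← hr, hQ] at key
  rw [hQ]
  have : N * (T.card * R) ≤ N * (N * N + (C₁ + r) * N) := by linarith
  exact Nat.le_of_mul_le_mul_left this hN1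

/-- The product of `X - x ^ q ^ l` over `l < n`. -/
noncomputable def conjProd (F : Type*) {E : Type*} [Fintype F] [Field E] (n : ℕ) (x : E) : E[X] :=
  ∏ l ∈ Finset.range n, (X - C (x ^ Fintype.card F ^ l))

theorem conjProd_monic {F E : Type*} [Fintype F] [Field E] (n : ℕ) (x : E) : (conjProd F n x).Monic :=
  monic_prod_of_monic _ _ fun _ _ => monic_X_sub_C _

theorem natDegree_conjProd {F E : Type*} [Fintype F] [Field E] (n : ℕ) (x : E) : (conjProd F n x).natDegree = n := by
  rw [conjProd, natDegree_prod_of_monic _ _ fun _ _ => monic_X_sub_C _]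
  simp only [natDegree_X_sub_C, Finset.sum_const, Finset.card_range, smul_eq_mul, mul_one]

theorem conjProd_mul {F E : Type*} [Fintype F] [Field E] {e : ℕ} {x : E} (hx : x ^ Fintype.card F ^ e = x) (j : ℕ) :
    conjProd F (e * j) x = conjProd F e x ^ j := by
  have hx' : ∀ j, x ^ Fintype.card F ^ (e * j) = x := by
    intro j
    induction j with
    | zero => simp
    | succ j ih => rw [mul_add, mul_one, pow_add, pow_mul, ih, hx]
  induction j with
  | zero => simp [conjProd]
  | succ j ih =>
    rw [pow_succ, ← ih, mul_add, mul_one, conjProd, Finset.prod_range_add]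
    have h1 : ∀ l, x ^ Fintype.card F ^ (e * j + l) = x ^ Fintype.card F ^ l := fun l => by
      rw [pow_add, pow_mul, hx']
    simp only [h1, conjProd]

section
variable {F E : Type*} [Field F] [Fintype F] [Field E] [Algebra F E]

theorem mem_range_algebraMap_of_pow_card_eq {y : E} (h : y ^ Fintype.card F = y) :
    y ∈ Set.range (algebraMap F E) := by
  have hs : (X ^ Fintype.card F - X : F[X]).Splits := by
    rw [splits_iff_card_roots, FiniteField.roots_X_pow_card_sub_X,
      FiniteField.X_pow_card_sub_X_natDegree_eq _ Fintype.one_lt_card]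
    rfl
  have h1 := hs.roots_map (algebraMap F E)
  rw [FiniteField.roots_X_pow_card_sub_X] at h1
  have h2 : y ∈ ((X ^ Fintype.card F - X : F[X]).map (algebraMap F E)).roots := by
    rw [Polynomial.map_sub, Polynomial.map_pow, map_X,
      mem_roots (FiniteField.X_pow_card_sub_X_ne_zero _ Fintype.one_lt_card)]
    simp [h]
  rw [h1, Multiset.mem_map] at h2
  obtain ⟨a, -, ha⟩ := h2
  exact ⟨a, ha⟩

theorem iterate_frobeniusAlgHom_apply (n : ℕ) (x : E) :
    (FiniteField.frobeniusAlgHom F E)^[n] x = x ^ Fintype.card F ^ n := by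
  rw [FiniteField.coe_frobeniusAlgHom, pow_iterate]

theorem exists_map_eq_conjProd {n : ℕ} {x : E} (hx : x ^ Fintype.card F ^ n = x) :
    ∃ g : F[X], g.map (algebraMap F E) = conjProd F n x := by
  have hfix : (conjProd F n x).map (FiniteField.frobeniusAlgHom F E : E →+* E) =
      conjProd F n x := by
    have h1 := Finset.prod_range_succ (fun l => (X - C (x ^ Fintype.card F ^ l) : E[X])) n
    rw [Finset.prod_range_succ', pow_zero, pow_one, hx] at h1
    have h2 := mul_right_cancel₀ (X_sub_C_ne_zero x) h1
    rw [conjProd, Polynomial.map_prod, ← h2]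
    refine Finset.prod_congr rfl fun l _ => ?_
    rw [Polynomial.map_sub, map_X, map_C]
    congr 2
    change (x ^ Fintype.card F ^ l) ^ Fintype.card F = _
    rw [← pow_mul, ← pow_succ]
  rw [← mem_lifts, lifts_iff_coeff_lifts]
  intro i
  apply mem_range_algebraMap_of_pow_card_eq
  have := congrArg (fun p => coeff p i) hfix
  rwa [coeff_map] at this

variable (F) in
/-- The polynomial over `F` whose image is `conjProd F n x`. -/
noncomputable def frobNorm (n : ℕ) (x : E) : F[X] :=
  if h : ∃ g : F[X], g.map (algebraMap F E) = conjProd F n x then h.choose else 1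

theorem map_frobNorm {n : ℕ} {x : E} (hx : x ^ Fintype.card F ^ n = x) :
    (frobNorm F n x).map (algebraMap F E) = conjProd F n x := by
  have h := exists_map_eq_conjProd hx
  rw [frobNorm, dif_pos h]
  exact h.choose_spec

theorem frobNorm_monic {n : ℕ} {x : E} (hx : x ^ Fintype.card F ^ n = x) :
    (frobNorm F n x).Monic := by
  rw [← monic_map_iff (f := algebraMap F E), map_frobNorm hx]
  exact conjProd_monic n x

theorem natDegree_frobNorm {n : ℕ} {x : E} (hx : x ^ Fintype.card F ^ n = x) :
    (frobNorm F n x).natDegree = n := by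
  rw [← natDegree_map (algebraMap F E), map_frobNorm hx, natDegree_conjProd]

theorem minimalPeriod_frobenius_pos {g : F[X]} (hg : g ≠ 0) {x : E} (hx : aeval x g = 0) :
    0 < Function.minimalPeriod (FiniteField.frobeniusAlgHom F E) x := by
  set φ := FiniteField.frobeniusAlgHom F E with hφ
  have hroot : ∀ l, φ^[l] x ∈ (g.aroots E).toFinset := by
    intro l
    rw [Multiset.mem_toFinset, mem_aroots]
    refine ⟨hg, ?_⟩
    induction l with
    | zero => exact hx
    | succ l ih => rw [Function.iterate_succ_apply', aeval_algHom_apply, ih, map_zero]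
  obtain ⟨a, b, hne, hab⟩ : ∃ a b : ℕ, a ≠ b ∧ φ^[a] x = φ^[b] x := by
    obtain ⟨a, b, hne, h⟩ := Finite.exists_ne_map_eq_of_infinite
      (fun l : ℕ => (⟨φ^[l] x, hroot l⟩ : (g.aroots E).toFinset))
    exact ⟨a, b, hne, congrArg Subtype.val h⟩
  have key : ∀ a b : ℕ, a < b → φ^[a] x = φ^[b] x → 0 < Function.minimalPeriod φ x := by
    intro a b hlt h
    refine Function.IsPeriodicPt.minimalPeriod_pos (n := b - a) (by omega) ?_
    have hinj : Function.Injective φ^[a] := Function.Injective.iterate φ.toRingHom.injective a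
    apply hinj
    rw [← Function.iterate_add_apply, Nat.add_sub_cancel' hlt.le, ← h]
  rcases lt_or_gt_of_ne hne with h | h
  · exact key a b h hab
  · exact key b a h hab.symm

theorem frobNorm_pow_dvd_iff {x : E}
    (he : 0 < Function.minimalPeriod (FiniteField.frobeniusAlgHom F E) x) (j : ℕ) :
    ∀ {g : F[X]}, g ≠ 0 →
      (frobNorm F (Function.minimalPeriod (FiniteField.frobeniusAlgHom F E) x) x ^ j ∣ g ↔
        j ≤ (g.map (algebraMap F E)).rootMultiplicity x) := by
  set φ := FiniteField.frobeniusAlgHom F E with hφ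
  set e := Function.minimalPeriod φ x with he'
  have hx : x ^ Fintype.card F ^ e = x := by
    rw [← iterate_frobeniusAlgHom_apply]
    exact Function.isPeriodicPt_minimalPeriod φ x
  have hinj : Set.InjOn (fun l => x ^ Fintype.card F ^ l) (Set.Iio e) := by
    have := Function.iterate_injOn_Iio_minimalPeriod (f := φ) (x := x)
    simpa only [hφ, iterate_frobeniusAlgHom_apply] using this
  have hmult : (conjProd F e x).rootMultiplicity x = 1 := by
    have h1 := rootMultiplicity_prod_X_sub_C_pow
      (b := fun l : Fin e => x ^ Fintype.card F ^ (l : ℕ))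
      (fun a b hab => Fin.ext (hinj a.2 b.2 hab)) (fun _ => 1) ⟨0, he⟩
    simpa [conjProd, Finset.prod_range] using h1
  induction j with
  | zero => simp
  | succ j ih =>
    intro g hg
    have hg' : g.map (algebraMap F E) ≠ 0 := (Polynomial.map_ne_zero_iff
      (algebraMap F E).injective).2 hg
    constructor
    · intro hd
      rw [le_rootMultiplicity_iff hg']
      rw [← map_dvd_map' (algebraMap F E), Polynomial.map_pow, map_frobNorm hx] at hd
      refine (pow_dvd_pow_of_dvd ?_ _).trans hd
      have := Finset.dvd_prod_of_mem (fun l => (X - C (x ^ Fintype.card F ^ l) : E[X]))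
        (Finset.mem_range.2 he)
      rwa [pow_zero, pow_one] at this
    · intro hle
      have hx0 : aeval x g = 0 := by
        have : (g.map (algebraMap F E)).IsRoot x :=
          (rootMultiplicity_pos hg').1 (by omega)
        rwa [IsRoot.def, eval_map_algebraMap] at this
      have hP : frobNorm F e x ∣ g := by
        rw [← map_dvd_map' (algebraMap F E), map_frobNorm hx, conjProd]
        refine Finset.prod_dvd_of_coprime (fun a ha b hb hab =>
          isCoprime_X_sub_C_of_isUnit_sub (sub_ne_zero.2 fun h => hab
            (hinj (Finset.mem_range.1 ha) (Finset.mem_range.1 hb) h)).isUnit) fun l hl => ?_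
        rw [dvd_iff_isRoot, IsRoot.def, eval_map_algebraMap, ← iterate_frobeniusAlgHom_apply]
        clear hl
        induction l with
        | zero => exact hx0
        | succ l ih => rw [Function.iterate_succ_apply', aeval_algHom_apply, ih, map_zero]
      obtain ⟨g', rfl⟩ := hP
      have hg1 : g' ≠ 0 := right_ne_zero_of_mul hg
      rw [pow_succ', mul_dvd_mul_iff_left (left_ne_zero_of_mul hg), ih hg1]
      rw [Polynomial.map_mul] at hle hg'
      rw [rootMultiplicity_mul hg', map_frobNorm hx, hmult] at hle
      omega

/-- Each root of `g` is counted with multiplicity by the polynomials `frobNorm F i x` dividing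
`g`. -/
theorem card_filter_frobNorm_dvd {g : F[X]} (hg : g ≠ 0) {x : E} (hx : aeval x g = 0) :
    ((Finset.Icc 1 g.natDegree).filter fun i => x ^ Fintype.card F ^ i = x ∧
      frobNorm F i x ∣ g).card = (g.map (algebraMap F E)).rootMultiplicity x := by
  have he := minimalPeriod_frobenius_pos hg hx
  have hdvd := fun j => frobNorm_pow_dvd_iff he j hg
  set φ := FiniteField.frobeniusAlgHom F E with hφ
  set e := Function.minimalPeriod φ x with he'
  set v := (g.map (algebraMap F E)).rootMultiplicity x with hv
  have hper : ∀ i, x ^ Fintype.card F ^ i = x ↔ e ∣ i := by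
    intro i
    rw [← iterate_frobeniusAlgHom_apply, ← Function.isPeriodicPt_iff_minimalPeriod_dvd]
    rfl
  have hmul : ∀ j, frobNorm F (e * j) x = frobNorm F e x ^ j := by
    intro j
    apply map_injective _ (algebraMap F E).injective
    rw [Polynomial.map_pow, map_frobNorm ((hper _).2 (dvd_mul_right _ _)),
      map_frobNorm ((hper _).2 dvd_rfl), conjProd_mul ((hper _).2 dvd_rfl)]
  have hset : ((Finset.Icc 1 g.natDegree).filter fun i => x ^ Fintype.card F ^ i = x ∧
      frobNorm F i x ∣ g) = (Finset.Icc 1 v).image (e * ·) := by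
    ext i
    simp only [Finset.mem_filter, Finset.mem_Icc, Finset.mem_image, hper]
    constructor
    · rintro ⟨⟨h1, -⟩, ⟨j, rfl⟩, h3⟩
      rw [hmul, hdvd] at h3
      exact ⟨j, ⟨Nat.pos_of_mul_pos_left h1, h3⟩, rfl⟩
    · rintro ⟨j, ⟨h1, h2⟩, rfl⟩
      have h3 := (hdvd j).2 h2
      refine ⟨⟨Nat.mul_pos he h1, ?_⟩, dvd_mul_right _ _, by rwa [hmul]⟩
      have := natDegree_le_of_dvd h3 hg
      rwa [natDegree_pow, natDegree_frobNorm ((hper _).2 dvd_rfl), mul_comm] at this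
  rw [hset, Finset.card_image_of_injective _ (fun a b h => Nat.eq_of_mul_eq_mul_left he h), Nat.card_Icc]
  omega

end

/-- The generating function identity between a polynomial with constant term `1` and the power sums
of its reciprocal roots. -/
theorem coe_X_mul_derivative_prod (ω : Multiset ℂ) :
    ((X * derivative (ω.map fun a => 1 - C a * X).prod : ℂ[X]) : PowerSeries ℂ) =
      PowerSeries.mk (fun n => if n = 0 then 0 else -(ω.map (· ^ n)).sum) *
        ((ω.map fun a => 1 - C a * X).prod : ℂ[X]) := by
  induction ω using Multiset.induction_on with
  | empty =>
    have : (PowerSeries.mk fun n => if n = 0 then 0 else -((0 : Multiset ℂ).map (· ^ n)).sum) = 0 := by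
      ext n; simp
    rw [this]; simp
  | cons a ω ih =>
    set s := PowerSeries.mk (fun n => if n = 0 then 0 else -(ω.map (· ^ n)).sum)
    set L := (ω.map fun a => 1 - C a * X).prod
    have hs : PowerSeries.mk (fun n => if n = 0 then 0 else -((a ::ₘ ω).map (· ^ n)).sum) =
        s + PowerSeries.mk (fun n => if n = 0 then 0 else -a ^ n) := by
      ext n
      simp only [s, PowerSeries.coeff_mk, map_add, Multiset.map_cons, Multiset.sum_cons]
      split_ifs <;> ring
    have ha : PowerSeries.mk (fun n => if n = 0 then 0 else -a ^ n) *
        ((1 - C a * X : ℂ[X]) : PowerSeries ℂ) = ((-(C a * X) : ℂ[X]) : PowerSeries ℂ) := by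
      push_cast
      ext n
      rcases n with _ | n
      · simp
      · rw [mul_sub, mul_one, ← mul_assoc, map_sub, PowerSeries.coeff_succ_mul_X,
          PowerSeries.coeff_mul_C, PowerSeries.coeff_mk, PowerSeries.coeff_mk, map_neg,
          PowerSeries.coeff_C_mul, PowerSeries.coeff_X]
        rcases n with _ | n
        · simp
        · simp [pow_succ]
    rw [Multiset.map_cons, Multiset.prod_cons, hs, derivative_mul]
    have h1 : derivative (1 - C a * X : ℂ[X]) = - C a := by simp
    have h2 : (X * (derivative (1 - C a * X) * L + (1 - C a * X) * derivative L) : ℂ[X]) =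
        -(C a * X) * L + (1 - C a * X) * (X * derivative L) := by rw [h1]; ring
    rw [h2, coe_add, coe_mul, coe_mul, ih, coe_mul, ← ha]
    ring

theorem exists_multiset_eq_prod {L : ℂ[X]} (hL : L.coeff 0 = 1) :
    ∃ ω : Multiset ℂ, ω.card ≤ L.natDegree ∧ L = (ω.map fun a => 1 - C a * X).prod := by
  have h1 := (IsAlgClosed.splits L).eq_prod_roots
  have hr : ∀ r ∈ L.roots, r ≠ 0 := by
    rintro r hr rfl
    have := (mem_roots'.1 hr).2
    rw [IsRoot.def, ← coeff_zero_eq_eval_zero, hL] at this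
    exact one_ne_zero this
  refine ⟨L.roots.map (·⁻¹), by simpa using card_roots' L, ?_⟩
  set P : ℂ[X] := ((L.roots.map (·⁻¹)).map fun a => 1 - C a * X).prod with hP
  have h2 : (L.roots.map fun r => X - C r).prod =
      C (L.roots.map fun r => -r).prod * P := by
    have h3 : (L.roots.map fun r => X - C r) =
        L.roots.map fun r => C (-r) * (1 - C r⁻¹ * X) := by
      refine Multiset.map_congr rfl fun r hr' => ?_
      have : (C r * C r⁻¹ : ℂ[X]) = 1 := by rw [← C_mul, mul_inv_cancel₀ (hr r hr'), C_1]
      rw [C_neg]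
      linear_combination (-X : ℂ[X]) * this
    rw [h3, Multiset.prod_map_mul, hP, Multiset.map_map, map_multiset_prod, Multiset.map_map]
    rfl
  have hP0 : P.coeff 0 = 1 := by
    rw [hP, coeff_zero_eq_eval_zero, eval_multiset_prod, Multiset.map_map]
    simp
  rw [h2, ← mul_assoc, ← C_mul] at h1
  have h4 := hL
  rw [h1, coeff_C_mul, hP0, mul_one] at h4
  rw [h4, C_1, one_mul] at h1
  exact h1

/-- Newton recursion determines the power sums of the reciprocal roots. -/
theorem exists_multiset_eq_neg_powerSum {A S : ℕ → ℂ} {N : ℕ} (hA0 : A 0 = 1)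
    (hA : ∀ n, N ≤ n → A n = 0)
    (hrec : ∀ n : ℕ, (n : ℂ) * A n = ∑ i ∈ Finset.Icc 1 n, S i * A (n - i)) :
    ∃ ω : Multiset ℂ, ω.card ≤ N ∧ ∀ n, 1 ≤ n → S n = -(ω.map (· ^ n)).sum := by
  set L : ℂ[X] := ∑ n ∈ Finset.range N, monomial n (A n) with hL
  have hcoeff : ∀ n, L.coeff n = A n := by
    intro n
    rw [hL, finsetSum_coeff]
    simp only [coeff_monomial, Finset.sum_ite_eq', Finset.mem_range]
    split_ifs with h
    · rfl
    · exact (hA n (not_lt.1 h)).symm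
  obtain ⟨ω, hω, hprod⟩ := exists_multiset_eq_prod (by rw [hcoeff, hA0] : L.coeff 0 = 1)
  have hdeg : L.natDegree ≤ N :=
    natDegree_sum_le_of_forall_le _ _ fun n hn =>
      (natDegree_monomial_le _).trans (Finset.mem_range.1 hn).le
  refine ⟨ω, hω.trans hdeg, ?_⟩
  have hkey := coe_X_mul_derivative_prod ω
  rw [← hprod] at hkey
  have hrec' : ∀ n : ℕ, (n : ℂ) * A n =
      ∑ i ∈ Finset.Icc 1 n, -(ω.map (· ^ i)).sum * A (n - i) := by
    intro n
    have h1 := congrArg (PowerSeries.coeff n) hkey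
    rw [coeff_coe, PowerSeries.coeff_mul, Finset.Nat.sum_antidiagonal_eq_sum_range_succ_mk] at h1
    rw [Finset.range_eq_Ico, Finset.sum_eq_sum_Ico_succ_bot (Nat.succ_pos n)] at h1
    simp only [PowerSeries.coeff_mk, if_true, zero_mul, zero_add, coeff_coe, hcoeff] at h1
    have h2 : (X * derivative L).coeff n = n * A n := by
      rcases n with _ | n
      · simp
      · rw [coeff_X_mul, coeff_derivative, hcoeff]; push_cast; ring
    rw [← h2, h1]
    refine Finset.sum_congr (by ext; simp) fun i hi => ?_
    rw [if_neg (by have := (Finset.mem_Icc.1 hi).1; omega)]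
  intro n
  induction n using Nat.strong_induction_on with
  | _ n ih =>
  intro hn
  have h1 := hrec n
  rw [hrec' n, ← Finset.Ico_insert_right hn, Finset.sum_insert (by simp),
    Finset.sum_insert (by simp), Finset.sum_congr rfl (g := fun i => S i * A (n - i)) (fun i hi => by
      rw [ih i (Finset.mem_Ico.1 hi).2 (Finset.mem_Ico.1 hi).1]), Nat.sub_self, hA0, mul_one,
    mul_one] at h1
  exact (add_right_cancel h1).symm

/-- The monic polynomials of degree `n` over a finite field. -/
noncomputable def monicsOfDegree (F : Type*) [Field F] [Fintype F] (n : ℕ) : Finset F[X] :=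
  Finset.univ.image fun a : Fin n → F => X ^ n + ∑ i, C (a i) * X ^ (i : ℕ)

theorem natDegree_sum_fin_lt {F : Type*} [Field F] {n : ℕ} (a : Fin n → F) :
    (∑ i, C (a i) * X ^ (i : ℕ) : F[X]).degree < n := by
  refine (degree_sum_le _ _).trans_lt ((Finset.sup_lt_iff (WithBot.bot_lt_coe n)).2 fun i _ => ?_)
  exact (degree_C_mul_X_pow_le _ _).trans_lt ((Nat.cast_lt (α := WithBot ℕ)).2 i.2)

theorem mem_monicsOfDegree {F : Type*} [Field F] [Fintype F] {n : ℕ} {g : F[X]} :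
    g ∈ monicsOfDegree F n ↔ g.Monic ∧ g.natDegree = n := by
  rw [monicsOfDegree, Finset.mem_image]
  constructor
  · rintro ⟨a, -, rfl⟩
    have h := natDegree_sum_fin_lt a
    refine ⟨monic_X_pow_add h, natDegree_eq_of_degree_eq_some ?_⟩
    rw [degree_add_eq_left_of_degree_lt (by rwa [degree_X_pow]), degree_X_pow]
  · rintro ⟨hg, rfl⟩
    refine ⟨fun i => g.coeff i, Finset.mem_univ _, ?_⟩
    conv_rhs => rw [hg.as_sum]
    rw [Fin.sum_univ_eq_sum_range (fun i => C (g.coeff i) * X ^ i : ℕ → F[X])]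

theorem monicsOfDegree_zero (F : Type*) [Field F] [Fintype F] : monicsOfDegree F 0 = {1} := by
  ext g
  rw [mem_monicsOfDegree, Finset.mem_singleton]
  exact ⟨fun h => h.1.natDegree_eq_zero.1 h.2, fun h => by simp [h]⟩

/-- The roots of `X ^ q ^ n - X`, where `q` is the cardinality of `F`. -/
noncomputable def frobFixed (F : Type*) (E : Type*) [Fintype F] [Field E] (n : ℕ) : Finset E :=
  (X ^ Fintype.card F ^ n - X : E[X]).roots.toFinset

theorem mem_frobFixed {F E : Type*} [Field F] [Fintype F] [Field E] {n : ℕ} (hn : n ≠ 0) {x : E} :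
    x ∈ frobFixed F E n ↔ x ^ Fintype.card F ^ n = x := by
  rw [frobFixed, Multiset.mem_toFinset, mem_roots
    (FiniteField.X_pow_card_pow_sub_X_ne_zero _ hn Fintype.one_lt_card)]
  simp [sub_eq_zero]

section
variable {F E : Type*} [Field F] [Fintype F] [Field E] [Algebra F E]

theorem card_frobFixed [IsAlgClosed E] {n : ℕ} (hn : n ≠ 0) :
    (frobFixed F E n).card = Fintype.card F ^ n := by
  obtain ⟨p, hp⟩ := CharP.exists F
  obtain ⟨a, hpp, ha⟩ := FiniteField.card F p
  have : CharP E p := charP_of_injective_algebraMap (algebraMap F E).injective p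
  have hsep : (X ^ Fintype.card F ^ n - X : E[X]).Separable :=
    galois_poly_separable p _ (by rw [ha, ← pow_mul]; exact dvd_pow_self _ (by positivity))
  rw [frobFixed, Multiset.toFinset_card_of_nodup (nodup_roots hsep),
    (splits_iff_card_roots.1 (IsAlgClosed.splits _)),
    FiniteField.X_pow_card_pow_sub_X_natDegree_eq _ hn Fintype.one_lt_card]

theorem aeval_frobNorm {n : ℕ} (hn : n ≠ 0) {x : E} (hx : x ^ Fintype.card F ^ n = x) :
    aeval x (frobNorm F n x) = 0 := by
  rw [← eval_map_algebraMap, map_frobNorm hx, conjProd, eval_prod]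
  exact Finset.prod_eq_zero (Finset.mem_range.2 (Nat.pos_of_ne_zero hn)) (by simp)

theorem sum_card_filter_frobNorm_dvd [IsAlgClosed E] {g : F[X]} (hg : g ≠ 0) :
    ∑ i ∈ Finset.Icc 1 g.natDegree, ((frobFixed F E i).filter fun x => frobNorm F i x ∣ g).card =
      g.natDegree := by
  have hg' : g.map (algebraMap F E) ≠ 0 := (Polynomial.map_ne_zero_iff (algebraMap F E).injective).2 hg
  have h1 : ∀ i ∈ Finset.Icc 1 g.natDegree,
      ((frobFixed F E i).filter fun x => frobNorm F i x ∣ g).card =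
      ∑ x ∈ (g.map (algebraMap F E)).roots.toFinset,
        if x ^ Fintype.card F ^ i = x ∧ frobNorm F i x ∣ g then 1 else 0 := by
    intro i hi
    have hi0 : i ≠ 0 := Nat.one_le_iff_ne_zero.1 (Finset.mem_Icc.1 hi).1
    rw [← Finset.card_filter]
    congr 1
    ext x
    rw [Finset.mem_filter, Finset.mem_filter, mem_frobFixed hi0, Multiset.mem_toFinset,
      mem_roots hg', IsRoot.def, eval_map_algebraMap]
    refine ⟨fun h => ⟨?_, h⟩, fun h => h.2⟩
    obtain ⟨u, hu⟩ := h.2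
    rw [hu, map_mul, aeval_frobNorm hi0 h.1, zero_mul]
  rw [Finset.sum_congr rfl h1, Finset.sum_comm]
  have h2 : ∀ x ∈ (g.map (algebraMap F E)).roots.toFinset,
      (∑ i ∈ Finset.Icc 1 g.natDegree,
        if x ^ Fintype.card F ^ i = x ∧ frobNorm F i x ∣ g then 1 else 0) =
      (g.map (algebraMap F E)).roots.count x := by
    intro x hx
    rw [Multiset.mem_toFinset, mem_roots hg', IsRoot.def, eval_map_algebraMap] at hx
    rw [← Finset.card_filter, card_filter_frobNorm_dvd hg hx, count_roots]
  rw [Finset.sum_congr rfl h2, Multiset.toFinset_sum_count_eq,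
    splits_iff_card_roots.1 (IsAlgClosed.splits _), natDegree_map]

/-- The sum of `χ` over the monic polynomials of degree `n`. -/
noncomputable def monicSum (χ : F[X] →* ℂ) (n : ℕ) : ℂ := ∑ g ∈ monicsOfDegree F n, χ g

/-- The sum of `χ` over the norms of the elements of the extension of degree `n`. -/
noncomputable def frobSum (E : Type*) [Field E] [Algebra F E] (χ : F[X] →* ℂ) (n : ℕ) : ℂ :=
  ∑ x ∈ frobFixed F E n, χ (frobNorm F n x)

theorem sum_filter_dvd_monicsOfDegree (χ : F[X] →* ℂ) {u : F[X]} (hu : u.Monic) {n : ℕ}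
    (hn : u.natDegree ≤ n) :
    ∑ g ∈ (monicsOfDegree F n).filter (u ∣ ·), χ g = χ u * monicSum χ (n - u.natDegree) := by
  rw [monicSum, Finset.mul_sum]
  symm
  refine Finset.sum_bij (fun g _ => u * g) ?_ ?_ ?_ ?_
  · intro g hg
    rw [mem_monicsOfDegree] at hg
    rw [Finset.mem_filter, mem_monicsOfDegree]
    refine ⟨⟨hu.mul hg.1, ?_⟩, dvd_mul_right _ _⟩
    rw [hu.natDegree_mul hg.1, hg.2]; omega
  · intro g _ g' _ h
    exact mul_left_cancel₀ hu.ne_zero h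
  · intro g hg
    rw [Finset.mem_filter, mem_monicsOfDegree] at hg
    obtain ⟨⟨hg, hd⟩, g', rfl⟩ := hg
    have hg' : g'.Monic := hu.of_mul_monic_left hg
    refine ⟨g', mem_monicsOfDegree.2 ⟨hg', ?_⟩, rfl⟩
    rw [hu.natDegree_mul hg'] at hd; omega
  · intro g _
    rw [map_mul]

theorem natCast_mul_monicSum [IsAlgClosed E] (χ : F[X] →* ℂ) (n : ℕ) :
    (n : ℂ) * monicSum χ n = ∑ i ∈ Finset.Icc 1 n, frobSum E χ i * monicSum χ (n - i) := by
  have h1 : ∀ i ∈ Finset.Icc 1 n, frobSum E χ i * monicSum χ (n - i) =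
      ∑ g ∈ monicsOfDegree F n,
        (((frobFixed F E i).filter fun x => frobNorm F i x ∣ g).card : ℂ) * χ g := by
    intro i hi
    have hi' := Finset.mem_Icc.1 hi
    have hi0 : i ≠ 0 := Nat.one_le_iff_ne_zero.1 hi'.1
    rw [frobSum, Finset.sum_mul]
    have h2 : ∀ x ∈ frobFixed F E i, χ (frobNorm F i x) * monicSum χ (n - i) =
        ∑ g ∈ monicsOfDegree F n, if frobNorm F i x ∣ g then χ g else 0 := by
      intro x hx
      rw [mem_frobFixed hi0] at hx
      rw [← Finset.sum_filter, sum_filter_dvd_monicsOfDegree χ (frobNorm_monic hx)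
        (by rw [natDegree_frobNorm hx]; exact hi'.2), natDegree_frobNorm hx]
    rw [Finset.sum_congr rfl h2, Finset.sum_comm]
    refine Finset.sum_congr rfl fun g _ => ?_
    rw [← Finset.sum_filter, Finset.sum_const, nsmul_eq_mul]
  rw [Finset.sum_congr rfl h1, Finset.sum_comm, monicSum, Finset.mul_sum]
  refine Finset.sum_congr rfl fun g hg => ?_
  rw [mem_monicsOfDegree] at hg
  rw [← Finset.sum_mul, ← Nat.cast_sum]
  conv_lhs => rw [← hg.2]
  rw [← hg.2, sum_card_filter_frobNorm_dvd hg.1.ne_zero]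

theorem monicSum_zero (χ : F[X] →* ℂ) : monicSum χ 0 = 1 := by
  rw [monicSum, monicsOfDegree_zero, Finset.sum_singleton, map_one]

end

theorem monicSum_eq_zero {F : Type*} [Field F] [Fintype F] (χ : F[X] →* ℂ) {h : F[X]} (hh : h.Monic)
    (hmod : ∀ g u, χ (g + h * u) = χ g) {g₁ : F[X]} (hg₁ : IsCoprime h g₁) (hχ : χ g₁ ≠ 1) {n : ℕ}
    (hn : h.natDegree ≤ n) : monicSum χ n = 0 := by
  set φ : F[X] → F[X] := fun g => g + ((g₁ * g) %ₘ h - g %ₘ h) with hφ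
  have hdeg : ∀ g, ((g₁ * g) %ₘ h - g %ₘ h).degree < h.degree := fun g =>
    (degree_sub_le _ _).trans_lt (max_lt (degree_modByMonic_lt _ hh) (degree_modByMonic_lt _ hh))
  have hmaps : ∀ g ∈ monicsOfDegree F n, φ g ∈ monicsOfDegree F n := by
    intro g hg
    rw [mem_monicsOfDegree] at hg ⊢
    have hlt : ((g₁ * g) %ₘ h - g %ₘ h).degree < g.degree := by
      refine (hdeg g).trans_le ?_
      rw [degree_eq_natDegree hh.ne_zero, degree_eq_natDegree hg.1.ne_zero, hg.2]
      exact_mod_cast hn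
    exact ⟨hg.1.add_of_left hlt,
      (natDegree_eq_of_degree_eq (degree_add_eq_left_of_degree_lt hlt)).trans hg.2⟩
  have hχφ : ∀ g, χ (φ g) = χ g₁ * χ g := by
    intro g
    rw [← map_mul, ← hmod (g₁ * g) (g /ₘ h - (g₁ * g) /ₘ h)]
    congr 1
    have h1 := modByMonic_add_div g h
    have h2 := modByMonic_add_div (g₁ * g) h
    simp only [hφ]
    linear_combination -h1 + h2
  have hinj : Function.Injective φ := by
    intro g g' hgg
    have h1 := modByMonic_add_div g h
    have h2 := modByMonic_add_div g' h
    have e1 : h * (g /ₘ h) + (g₁ * g) %ₘ h = h * (g' /ₘ h) + (g₁ * g') %ₘ h := by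
      simp only [hφ] at hgg
      linear_combination hgg + h1 - h2
    have e2 : (g₁ * g) %ₘ h = (g₁ * g') %ₘ h := by
      have := congrArg (· %ₘ h) e1
      simp only [add_modByMonic, (modByMonic_eq_zero_iff_dvd hh).2 (dvd_mul_right _ _),
        zero_add] at this
      rwa [(modByMonic_eq_self_iff hh).2 (degree_modByMonic_lt _ hh),
        (modByMonic_eq_self_iff hh).2 (degree_modByMonic_lt _ hh)] at this
    have e3 : g /ₘ h = g' /ₘ h := by
      rw [e2] at e1
      exact mul_left_cancel₀ hh.ne_zero (add_right_cancel e1)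
    have e4 : h ∣ g₁ * (g - g') := by
      rw [← modByMonic_eq_zero_iff_dvd hh, mul_sub, sub_modByMonic, e2, sub_self]
    have e5 := (modByMonic_eq_zero_iff_dvd hh).2 (hg₁.dvd_of_dvd_mul_left e4)
    rw [sub_modByMonic] at e5
    rw [← h1, ← h2, e3, sub_eq_zero.1 e5]
  have himg : (monicsOfDegree F n).image φ = monicsOfDegree F n :=
    Finset.eq_of_subset_of_card_le (Finset.image_subset_iff.2 hmaps)
      (Finset.card_image_of_injective _ hinj).ge
  have hsum : χ g₁ * monicSum χ n = monicSum χ n := by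
    conv_rhs => rw [monicSum, ← himg, Finset.sum_image hinj.injOn]
    rw [monicSum, Finset.mul_sum]
    exact Finset.sum_congr rfl fun g _ => (hχφ g).symm
  have : (χ g₁ - 1) * monicSum χ n = 0 := by rw [sub_mul, hsum, one_mul, sub_self]
  exact (mul_eq_zero.1 this).resolve_left (sub_ne_zero.2 hχ)

theorem exists_multiset_frobSum_eq {F E : Type*} [Field F] [Fintype F] [Field E] [Algebra F E]
    [IsAlgClosed E] (χ : F[X] →* ℂ) {h : F[X]} (hh : h.Monic)
    (hmod : ∀ g u, χ (g + h * u) = χ g) {g₁ : F[X]} (hg₁ : IsCoprime h g₁) (hχ : χ g₁ ≠ 1) :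
    ∃ ω : Multiset ℂ, ω.card ≤ h.natDegree ∧
      ∀ n, 1 ≤ n → frobSum E χ n = -(ω.map (· ^ n)).sum :=
  exists_multiset_eq_neg_powerSum (monicSum_zero χ)
    (fun _ hn => monicSum_eq_zero χ hh hmod hg₁ hχ hn) (natCast_mul_monicSum χ)

/-- The terms of a power sum are bounded by its exponential growth rate. -/
theorem norm_le_of_norm_powerSum_le {ω : Multiset ℂ} {C R : ℝ} (hR : 0 < R) {e N : ℕ} (he : e ≠ 0)
    (h : ∀ s, N ≤ s → ‖(ω.map (· ^ (e * s))).sum‖ ≤ C * R ^ (e * s)) : ∀ a ∈ ω, ‖a‖ ≤ R := by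
  intro a ha
  set T : Finset ℂ := (ω.map (· ^ e)).toFinset with hT
  have haT : a ^ e ∈ T := by
    rw [hT, Multiset.mem_toFinset]; exact Multiset.mem_map_of_mem _ ha
  set ℓ : ℂ[X] := Lagrange.basis T id (a ^ e) with hℓ
  have h1 : ∀ b ∈ ω, ℓ.eval (b ^ e) = if b ^ e = a ^ e then 1 else 0 := by
    intro b hb
    have hbT : b ^ e ∈ T := by
      rw [hT, Multiset.mem_toFinset]; exact Multiset.mem_map_of_mem _ hb
    split_ifs with hba
    · rw [hba]
      exact Lagrange.eval_basis_self (v := id) (Set.injOn_id _) haT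
    · exact Lagrange.eval_basis_of_ne (v := id) (Ne.symm hba) hbT
  have h2 : ∀ s, ∑ j ∈ Finset.range (ℓ.natDegree + 1),
      ℓ.coeff j * (ω.map (· ^ (e * (s + j)))).sum =
      (ω.countP fun b => b ^ e = a ^ e) * a ^ (e * s) := by
    intro s
    have h3 : ∀ j ∈ Finset.range (ℓ.natDegree + 1), ℓ.coeff j * (ω.map (· ^ (e * (s + j)))).sum =
        (ω.map fun b => ℓ.coeff j * (b ^ e) ^ j * b ^ (e * s)).sum := by
      intro j _
      rw [← Multiset.sum_map_mul_left]
      congr 1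
      refine Multiset.map_congr rfl fun b _ => ?_
      rw [mul_add, pow_add, pow_mul b e j]; ring
    rw [Finset.sum_congr rfl h3, Finset.sum, Multiset.sum_map_sum_map]
    have h4 : ∀ b ∈ ω, ((Finset.range (ℓ.natDegree + 1)).val.map fun j =>
        ℓ.coeff j * (b ^ e) ^ j * b ^ (e * s)).sum =
        if b ^ e = a ^ e then a ^ (e * s) else 0 := by
      intro b hb
      change ∑ j ∈ Finset.range (ℓ.natDegree + 1), ℓ.coeff j * (b ^ e) ^ j * b ^ (e * s) = _
      rw [← Finset.sum_mul, ← eval_eq_sum_range, h1 b hb]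
      split_ifs with hba
      · rw [pow_mul, pow_mul, hba, one_mul]
      · rw [zero_mul]
    rw [Multiset.map_congr rfl h4]
    generalize ω = m
    induction m using Multiset.induction_on with
    | empty => simp
    | cons b m ih =>
      rw [Multiset.map_cons, Multiset.sum_cons, ih, Multiset.countP_cons]
      split_ifs <;> push_cast <;> ring
  set K : ℝ := ∑ j ∈ Finset.range (ℓ.natDegree + 1), ‖ℓ.coeff j‖ * (C * R ^ (e * j)) with hK
  have h5 : ∀ s, N ≤ s → ‖a‖ ^ (e * s) ≤ K * R ^ (e * s) := by
    intro s hs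
    have hc : (1 : ℝ) ≤ (ω.countP fun b => b ^ e = a ^ e) := by
      exact_mod_cast Multiset.countP_pos (p := fun b => b ^ e = a ^ e) |>.2 ⟨a, ha, rfl⟩
    calc ‖a‖ ^ (e * s) ≤ (ω.countP fun b => b ^ e = a ^ e) * ‖a‖ ^ (e * s) :=
          le_mul_of_one_le_left (by positivity) hc
      _ = ‖∑ j ∈ Finset.range (ℓ.natDegree + 1),
          ℓ.coeff j * (ω.map (· ^ (e * (s + j)))).sum‖ := by
          rw [h2, norm_mul, norm_pow, Complex.norm_natCast]
      _ ≤ ∑ j ∈ Finset.range (ℓ.natDegree + 1), ‖ℓ.coeff j‖ * (C * R ^ (e * (s + j))) := by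
          refine (norm_sum_le _ _).trans (Finset.sum_le_sum fun j _ => ?_)
          rw [norm_mul]
          exact mul_le_mul_of_nonneg_left (h _ (by omega)) (norm_nonneg _)
      _ = K * R ^ (e * s) := by
          rw [hK, Finset.sum_mul]
          refine Finset.sum_congr rfl fun j _ => ?_
          rw [mul_add, pow_add]; ring
  by_contra! hlt
  have h6 : 1 < ‖a‖ / R := (one_lt_div hR).2 hlt
  obtain ⟨s, hs⟩ := pow_unbounded_of_one_lt K h6
  have h7 := h5 (max s N) (le_max_right _ _)
  rw [← div_le_iff₀ (by positivity), ← div_pow] at h7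
  have h8 : (‖a‖ / R) ^ s ≤ (‖a‖ / R) ^ (e * max s N) :=
    pow_le_pow_right₀ h6.le ((le_max_left s N).trans
      (Nat.le_mul_of_pos_left _ (Nat.pos_of_ne_zero he)))
  linarith

theorem algebraMap_resultant {F E : Type*} [Field F] [Field E] [Algebra F E] [IsAlgClosed E] {f : F[X]} (hf : f.Monic) (g : F[X]) :
    algebraMap F E (f.resultant g) = ((f.aroots E).map fun β => aeval β g).prod := by
  have h := resultant_eq_prod_eval (f.map (algebraMap F E)) (g.map (algebraMap F E)) g.natDegree
    (natDegree_map_le) (IsAlgClosed.splits _)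
  rw [natDegree_map, resultant_map_map, (hf.map _).leadingCoeff, one_pow, one_mul] at h
  rw [h, aroots_def]
  refine congrArg _ (Multiset.map_congr rfl fun β _ => ?_)
  rw [eval_map_algebraMap]

/-- The completely multiplicative function attached to monic polynomials `f i` and multiplicative
characters `χ i`. -/
noncomputable def resChar {F ι : Type*} [Field F] [Fintype ι] {f : ι → F[X]} (hf : ∀ i, (f i).Monic)
    (χ : ι → MulChar F ℂ) : F[X] →* ℂ where
  toFun g := ∏ i, χ i ((f i).resultant g)
  map_one' := by simp
  map_mul' g g' := by
    have : ∀ i, (f i).resultant (g * g') = (f i).resultant g * (f i).resultant g' := fun i => by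
      apply (algebraMap F (AlgebraicClosure F)).injective
      rw [map_mul, algebraMap_resultant (hf i), algebraMap_resultant (hf i),
        algebraMap_resultant (hf i), ← Multiset.prod_map_mul]
      simp
    simp only [this, map_mul, Finset.prod_mul_distrib]

theorem resChar_apply {F ι : Type*} [Field F] [Fintype ι] {f : ι → F[X]} (hf : ∀ i, (f i).Monic)
    (χ : ι → MulChar F ℂ) (g : F[X]) : resChar hf χ g = ∏ i, χ i ((f i).resultant g) := rfl

theorem resChar_add_mul {F ι : Type*} [Field F] [Fintype ι] {f : ι → F[X]} (hf : ∀ i, (f i).Monic)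
    (χ : ι → MulChar F ℂ) (g u : F[X]) :
    resChar hf χ (g + (∏ i, f i) * u) = resChar hf χ g := by
  rw [resChar_apply, resChar_apply]
  refine Finset.prod_congr rfl fun i _ => congrArg _ ?_
  apply (algebraMap F (AlgebraicClosure F)).injective
  rw [algebraMap_resultant (hf i), algebraMap_resultant (hf i)]
  refine congrArg _ (Multiset.map_congr rfl fun β hβ => ?_)
  have : aeval β (∏ i, f i) = 0 := by
    rw [map_prod]
    exact Finset.prod_eq_zero (Finset.mem_univ i) ((mem_aroots.1 hβ).2)
  rw [map_add, map_mul, this, zero_mul, add_zero]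

section
variable {F E : Type*} [Field F] [Fintype F] [Field E] [Algebra F E] [IsAlgClosed E]

theorem map_pow_card_pow_aroots (f : F[X]) (l : ℕ) :
    (f.aroots E).map (· ^ Fintype.card F ^ l) = f.aroots E := by
  induction l with
  | zero => simp
  | succ l ih =>
    have h1 := (IsAlgClosed.splits (f.map (algebraMap F E))).roots_map
      (FiniteField.frobeniusAlgHom F E : E →+* E)
    have h2 : (f.map (algebraMap F E)).map (FiniteField.frobeniusAlgHom F E : E →+* E) =
        f.map (algebraMap F E) := by
      rw [Polynomial.map_map, AlgHom.comp_algebraMap]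
    rw [h2] at h1
    conv_rhs => rw [aroots_def, h1, ← aroots_def, ← ih, Multiset.map_map]
    refine Multiset.map_congr rfl fun x _ => ?_
    change x ^ _ = FiniteField.frobeniusAlgHom F E (x ^ _)
    rw [FiniteField.coe_frobeniusAlgHom, pow_succ, pow_mul]

theorem algebraMap_resultant_frobNorm {f : F[X]} (hf : f.Monic) {n : ℕ} {x : E}
    (hx : x ^ Fintype.card F ^ n = x) :
    algebraMap F E (f.resultant (frobNorm F n x)) =
      ((f.aroots E).map fun β => (β - x) ^ ∑ l ∈ Finset.range n, Fintype.card F ^ l).prod := by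
  rw [algebraMap_resultant hf]
  have h1 : ∀ β : E, aeval β (frobNorm F n x) =
      ∏ l ∈ Finset.range n, (β - x ^ Fintype.card F ^ l) := by
    intro β
    rw [← eval_map_algebraMap, map_frobNorm hx, conjProd, eval_prod]
    simp
  have h2 : ∀ β : E, (β - x) ^ ∑ l ∈ Finset.range n, Fintype.card F ^ l =
      ∏ l ∈ Finset.range n, (β ^ Fintype.card F ^ l - x ^ Fintype.card F ^ l) := by
    intro β
    rw [← Finset.prod_pow_eq_pow_sum]
    refine Finset.prod_congr rfl fun l _ => ?_
    rw [← iterate_frobeniusAlgHom_apply, ← iterate_frobeniusAlgHom_apply,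
      ← iterate_frobeniusAlgHom_apply, ← AlgHom.coe_pow, map_sub]
  simp only [h1, h2, Multiset.prod_map_prod]
  refine Finset.prod_congr rfl fun l _ => ?_
  conv_lhs => rw [← map_pow_card_pow_aroots f l, Multiset.map_map]
  rfl

end

theorem norm_mulChar_apply_of_ne_zero {F : Type*} [Field F] [Fintype F] (χ : MulChar F ℂ) {a : F} (ha : a ≠ 0) : ‖χ a‖ = 1 := by
  have h : χ a ^ (Fintype.card F - 1) = 1 := by
    rw [← map_pow, FiniteField.pow_card_sub_one_eq_one a ha, map_one]
  exact Complex.norm_eq_one_of_pow_eq_one h (Nat.sub_ne_zero_of_lt Fintype.one_lt_card)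

theorem norm_mulChar_apply_le_one {F : Type*} [Field F] [Fintype F] (χ : MulChar F ℂ) (a : F) : ‖χ a‖ ≤ 1 := by
  rcases eq_or_ne a 0 with rfl | ha
  · rw [MulChar.map_zero, norm_zero]; exact zero_le_one
  · exact (norm_mulChar_apply_of_ne_zero χ ha).le

theorem norm_resChar_le_one {F ι : Type*} [Field F] [Fintype F] [Fintype ι] {f : ι → F[X]} (hf : ∀ i, (f i).Monic)
    (χ : ι → MulChar F ℂ) (g : F[X]) : ‖resChar hf χ g‖ ≤ 1 := by
  rw [resChar_apply, norm_prod]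
  exact Finset.prod_le_one (fun _ _ => norm_nonneg _) fun i _ => norm_mulChar_apply_le_one _ _

/-- A nontrivial bounded sum along a map whose fibres are not much larger than expected is small. -/
theorem norm_sum_comp_le {X Z : Type*} [Fintype Z] {Φ : Z → ℂ} (hΦ : ∀ z, ‖Φ z‖ ≤ 1)
    (hsum : ∑ z, Φ z = 0) (T : Finset X) (v : X → Z) {M : ℝ}
    (hM : ∀ z, ((T.filter fun x => v x = z).card : ℝ) ≤ M) :
    ‖∑ x ∈ T, Φ (v x)‖ ≤ Fintype.card Z * M - T.card := by
  have h1 : ∑ x ∈ T, Φ (v x) = ∑ z, ((T.filter fun x => v x = z).card - M : ℂ) * Φ z := by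
    simp only [sub_mul, Finset.sum_sub_distrib, ← Finset.mul_sum, hsum, mul_zero, sub_zero]
    rw [← Finset.sum_fiberwise T v]
    refine Finset.sum_congr rfl fun z _ => ?_
    rw [Finset.sum_congr rfl (g := fun _ => Φ z) fun x hx => by rw [(Finset.mem_filter.1 hx).2],
      Finset.sum_const, nsmul_eq_mul]
  have h2 : (T.card : ℝ) = ∑ z, ((T.filter fun x => v x = z).card : ℝ) := by
    exact_mod_cast Finset.card_eq_sum_card_fiberwise (f := v) (t := Finset.univ) fun x _ => by simp
  calc ‖∑ x ∈ T, Φ (v x)‖ ≤ ∑ z, (M - (T.filter fun x => v x = z).card) := by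
        rw [h1]
        refine (norm_sum_le _ _).trans (Finset.sum_le_sum fun z _ => ?_)
        rw [norm_mul]
        have : ‖((T.filter fun x => v x = z).card - M : ℂ)‖ =
            M - (T.filter fun x => v x = z).card := by
          rw [← Complex.ofReal_natCast, ← Complex.ofReal_sub, Complex.norm_real, Real.norm_eq_abs,
            abs_sub_comm, abs_of_nonneg (sub_nonneg.2 (hM z))]
        rw [this]
        exact mul_le_of_le_one_right (sub_nonneg.2 (hM z)) (hΦ z)
    _ = Fintype.card Z * M - T.card := by
        rw [Finset.sum_sub_distrib, ← h2, Finset.sum_const, nsmul_eq_mul, Finset.card_univ]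

theorem geomSum_mul_card_sub_one (F : Type*) [Field F] [Fintype F] (n : ℕ) :
    (∑ l ∈ Finset.range n, Fintype.card F ^ l) * (Fintype.card F - 1) + 1 = Fintype.card F ^ n := by
  obtain ⟨m, hm⟩ := Nat.exists_eq_succ_of_ne_zero (Fintype.card_ne_zero (α := F))
  rw [hm, Nat.succ_sub_one]
  exact geom_sum_mul_add m n

section
variable {F E : Type*} [Field F] [Fintype F] [Field E] [Algebra F E]

theorem exists_units_algebraMap_eq_pow {n : ℕ} {y : E} (hy : y ^ Fintype.card F ^ n = y)
    (hy0 : y ≠ 0) :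
    ∃ u : Fˣ, algebraMap F E u = y ^ ∑ l ∈ Finset.range n, Fintype.card F ^ l := by
  have hD := geomSum_mul_card_sub_one F n
  set D := ∑ l ∈ Finset.range n, Fintype.card F ^ l
  have h1 : y ^ (D * (Fintype.card F - 1)) = 1 := by
    rw [← hD, pow_succ] at hy
    exact (mul_eq_right₀ hy0).1 hy
  have h2 : (y ^ D) ^ Fintype.card F = y ^ D := by
    conv_lhs => rw [← Nat.sub_add_cancel (Fintype.card_pos (α := F)), pow_succ, ← pow_mul, h1,
      one_mul]
  obtain ⟨a, ha⟩ := mem_range_algebraMap_of_pow_card_eq (F := F) h2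
  have ha0 : a ≠ 0 := by
    rintro rfl
    rw [map_zero] at ha
    exact pow_ne_zero D hy0 ha.symm
  exact ⟨Units.mk0 a ha0, ha⟩

theorem sub_pow_card_pow_eq {n : ℕ} {x y : E} (hx : x ^ Fintype.card F ^ n = x)
    (hy : y ^ Fintype.card F ^ n = y) : (x - y) ^ Fintype.card F ^ n = x - y := by
  rw [← iterate_frobeniusAlgHom_apply, ← AlgHom.coe_pow, map_sub, AlgHom.coe_pow,
    iterate_frobeniusAlgHom_apply, iterate_frobeniusAlgHom_apply, hx, hy]

theorem exists_forall_pow_card_pow_eq {h : F[X]} (hh : h ≠ 0) :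
    ∃ e : ℕ, e ≠ 0 ∧ ∀ β : E, aeval β h = 0 → ∀ s, β ^ Fintype.card F ^ (e * s) = β := by
  refine ⟨∏ β ∈ (h.aroots E).toFinset,
    Function.minimalPeriod (FiniteField.frobeniusAlgHom F E) β, ?_, ?_⟩
  · refine Finset.prod_ne_zero_iff.2 fun β hβ => ?_
    exact (minimalPeriod_frobenius_pos hh (mem_aroots.1 (Multiset.mem_toFinset.1 hβ)).2).ne'
  · intro β hβ s
    rw [← iterate_frobeniusAlgHom_apply]
    exact ((Function.isPeriodicPt_minimalPeriod _ _).trans_dvd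
      ((Finset.dvd_prod_of_mem _ (Multiset.mem_toFinset.2 (mem_aroots.2 ⟨hh, hβ⟩))).trans
        (dvd_mul_right _ s)))

theorem isCoprime_frobNorm [IsAlgClosed E] {ι : Type*} [Fintype ι] {f : ι → F[X]}
    (hf : ∀ i, (f i).Monic) {n : ℕ} {x : E} (hx : x ^ Fintype.card F ^ n = x)
    (hx' : aeval x (∏ i, f i) ≠ 0) : IsCoprime (∏ i, f i) (frobNorm F n x) := by
  rw [isCoprime_iff_aeval_ne_zero_of_isAlgClosed F E]
  intro β
  by_contra! hβ
  obtain ⟨h1, h2⟩ := hβ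
  rw [map_prod, Finset.prod_eq_zero_iff] at h1
  obtain ⟨i, -, hi⟩ := h1
  have h3 : (((f i).aroots E).map (fun β => aeval β (frobNorm F n x))).prod = 0 :=
    Multiset.prod_eq_zero (Multiset.mem_map.2 ⟨β, mem_aroots.2 ⟨(hf i).ne_zero, hi⟩, h2⟩)
  rw [← algebraMap_resultant (hf i), algebraMap_resultant_frobNorm (hf i) hx,
    Multiset.prod_eq_zero_iff, Multiset.mem_map] at h3
  obtain ⟨γ, hγ, h4⟩ := h3
  have h5 : γ = x := by
    by_contra hne
    exact pow_ne_zero _ (sub_ne_zero.2 hne) h4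
  apply hx'
  rw [map_prod]
  exact Finset.prod_eq_zero (Finset.mem_univ i) (h5 ▸ (mem_aroots.1 hγ).2)

end

/-- The character on residue patterns at the points of `B` attached to `f` and `χ`. -/
noncomputable def patternChar {F E ι : Type*} [Field F] [Field E] [Algebra F E] [Fintype ι]
    (f : ι → F[X]) (χ : ι → MulChar F ℂ) (B : Finset E) (z : B → Fˣ) : ℂ :=
  ∏ i, χ i ((∏ b : B, z b ^ ((f i).aroots E).count (b : E) : Fˣ) : F)

theorem patternChar_mul {F E ι : Type*} [Field F] [Field E] [Algebra F E] [Fintype ι]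
    (f : ι → F[X]) (χ : ι → MulChar F ℂ) (B : Finset E) (z z' : B → Fˣ) :
    patternChar f χ B (z * z') = patternChar f χ B z * patternChar f χ B z' := by
  simp only [patternChar, Pi.mul_apply, mul_pow, Finset.prod_mul_distrib, Units.val_mul, map_mul]

theorem norm_patternChar_le_one {F E ι : Type*} [Field F] [Fintype F] [Field E] [Algebra F E]
    [Fintype ι] (f : ι → F[X]) (χ : ι → MulChar F ℂ) (B : Finset E) (z : B → Fˣ) :
    ‖patternChar f χ B z‖ ≤ 1 := by
  rw [patternChar, norm_prod]
  exact Finset.prod_le_one (fun _ _ => norm_nonneg _) fun i _ => norm_mulChar_apply_le_one _ _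

theorem sum_patternChar_eq_zero {F E ι : Type*} [Field F] [Fintype F] [Field E] [Algebra F E]
    [Fintype ι] {f : ι → F[X]} {χ : ι → MulChar F ℂ} {i₀ : ι}
    (hχ : χ i₀ ≠ 1) {β₀ : E} (h₀ : ((f i₀).aroots E).count β₀ = 1)
    (h₁ : ∀ i, i ≠ i₀ → χ i ≠ 1 → ((f i).aroots E).count β₀ = 0) {B : Finset E} (hB : β₀ ∈ B) :
    ∑ z, patternChar f χ B z = 0 := by
  obtain ⟨u, hu⟩ := MulChar.ne_one_iff.1 hχ
  set z₀ : B → Fˣ := Pi.mulSingle ⟨β₀, hB⟩ u with hz₀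
  have h2 : patternChar f χ B z₀ = χ i₀ u := by
    have h3 : ∀ i, (∏ b : B, z₀ b ^ ((f i).aroots E).count (b : E)) =
        u ^ ((f i).aroots E).count β₀ := by
      intro i
      rw [Finset.prod_eq_single ⟨β₀, hB⟩]
      · rw [hz₀, Pi.mulSingle_eq_same]
      · intro b _ hb
        rw [hz₀, Pi.mulSingle_eq_of_ne hb, one_pow]
      · intro h; exact absurd (Finset.mem_univ _) h
    simp only [patternChar, h3]
    rw [Finset.prod_eq_single i₀]
    · rw [h₀, pow_one]
    · intro i _ hi
      by_cases hχi : χ i = 1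
      · rw [hχi, MulChar.one_apply_coe]
      · rw [h₁ i hi hχi, pow_zero, Units.val_one, map_one]
    · intro h; exact absurd (Finset.mem_univ _) h
  have h4 : χ i₀ u * ∑ z, patternChar f χ B z = ∑ z, patternChar f χ B z := by
    rw [← h2, Finset.mul_sum]
    simp only [← patternChar_mul]
    exact Equiv.sum_comp (Equiv.mulLeft z₀) _
  have : (χ i₀ u - 1) * ∑ z, patternChar f χ B z = 0 := by rw [sub_mul, h4, one_mul, sub_self]
  exact (mul_eq_zero.1 this).resolve_left (sub_ne_zero.2 hu)

section
variable {F E ι : Type*} [Field F] [Fintype F] [Field E] [Algebra F E] [IsAlgClosed E] [Fintype ι]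

theorem resChar_frobNorm_eq_patternChar {f : ι → F[X]} (hf : ∀ i, (f i).Monic)
    (χ : ι → MulChar F ℂ) {B : Finset E} (hB : ∀ i, (f i).aroots E ⊆ B.val) {n : ℕ} {x : E}
    (hx : x ^ Fintype.card F ^ n = x) {z : B → Fˣ}
    (hz : ∀ b : B, algebraMap F E (z b) = (b - x) ^ ∑ l ∈ Finset.range n, Fintype.card F ^ l) :
    resChar hf χ (frobNorm F n x) = patternChar f χ B z := by
  rw [resChar_apply, patternChar]
  refine Finset.prod_congr rfl fun i _ => congrArg _ ((algebraMap F E).injective ?_)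
  rw [algebraMap_resultant_frobNorm (hf i) hx, Units.coe_prod, map_prod,
    Finset.prod_multiset_map_count]
  simp only [Units.val_pow_eq_pow_val, map_pow, hz]
  rw [Finset.prod_coe_sort B
    (fun b => ((b - x) ^ ∑ l ∈ Finset.range n, Fintype.card F ^ l) ^ ((f i).aroots E).count b)]
  refine Finset.prod_subset (fun b hb => hB i (Multiset.mem_toFinset.1 hb)) fun b _ hb => ?_
  rw [Multiset.count_eq_zero_of_notMem fun h => hb (Multiset.mem_toFinset.2 h), pow_zero]

theorem exists_norm_frobSum_le {f : ι → F[X]} (hf : ∀ i, (f i).Monic) {χ : ι → MulChar F ℂ}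
    {i₀ : ι} (hχ : χ i₀ ≠ 1) {β₀ : E} (h₀ : ((f i₀).aroots E).count β₀ = 1)
    (h₁ : ∀ i, i ≠ i₀ → χ i ≠ 1 → ((f i).aroots E).count β₀ = 0) :
    ∃ (C : ℝ) (e N : ℕ), e ≠ 0 ∧ ∀ s, N ≤ s →
      ‖frobSum E (resChar hf χ) (e * s)‖ ≤ C * √(Fintype.card F) ^ (e * s) := by
  set q := Fintype.card F with hq
  obtain ⟨p, hp⟩ := CharP.exists F
  obtain ⟨a, hpp, ha⟩ := FiniteField.card F p
  have : Fact p.Prime := ⟨hpp⟩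
  have : CharP E p := charP_of_injective_algebraMap (algebraMap F E).injective p
  set h := ∏ i, f i with hh
  have hh0 : h ≠ 0 := (monic_prod_of_monic _ _ fun i _ => hf i).ne_zero
  obtain ⟨e, he0, he⟩ := exists_forall_pow_card_pow_eq (E := E) hh0
  set B : Finset E := (h.aroots E).toFinset with hBdef
  have hmemB : ∀ b, b ∈ B ↔ aeval b h = 0 := fun b => by
    rw [hBdef, Multiset.mem_toFinset, mem_aroots]; exact and_iff_right hh0
  have hB : ∀ i, (f i).aroots E ⊆ B.val := by
    intro i b hb
    rw [Finset.mem_val, hmemB, hh, map_prod]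
    exact Finset.prod_eq_zero (Finset.mem_univ i) (mem_aroots.1 hb).2
  have hβ₀ : β₀ ∈ B := hB i₀ (Multiset.one_le_count_iff_mem.1 h₀.ge)
  set m := q - 1 with hm
  have hm0 : m ≠ 0 := Nat.sub_ne_zero_of_lt Fintype.one_lt_card
  have : NeZero m := ⟨hm0⟩
  have hmE : (m : E) ≠ 0 := by
    have : (q : E) = 0 := by rw [hq, ← map_natCast (algebraMap F E), Nat.cast_card_eq_zero, map_zero]
    rw [hm, Nat.cast_sub Fintype.one_lt_card.le, this, Nat.cast_one, zero_sub]
    exact neg_ne_zero.2 one_ne_zero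
  obtain ⟨C₀, N₀, hC⟩ := exists_card_mul_le_of_pow_eq p (b := ((↑) : B → E))
    Subtype.val_injective hmE
  refine ⟨C₀ + 2 * B.card, 2 * e, N₀ + 1, by simp [he0], fun s hs => ?_⟩
  have hspos : 0 < s := by omega
  set n := 2 * e * s with hn
  have hn0 : n ≠ 0 := by positivity
  set t := a * (e * s) with ht
  have hQ : q ^ n = p ^ (2 * t) := by
    rw [hq, ha, ← pow_mul]; congr 1; rw [hn, ht]; ring
  have hNt : N₀ ≤ p ^ t := by
    have h3 : s ≤ t := by
      rw [ht, ← mul_assoc]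
      exact Nat.le_mul_of_pos_left _ (Nat.mul_pos a.pos (Nat.pos_of_ne_zero he0))
    exact (Nat.le_of_succ_le hs).trans (h3.trans (Nat.lt_pow_self hpp.one_lt).le)
  have hsqrt : √(q : ℝ) ^ n = (p ^ t : ℕ) := by
    rw [hn, mul_assoc, pow_mul, Real.sq_sqrt (Nat.cast_nonneg _), hq, ha]
    push_cast
    rw [← pow_mul]
  set D := ∑ l ∈ Finset.range n, q ^ l with hD
  have hDm : D * m + 1 = p ^ (2 * t) := by rw [← hQ]; exact geomSum_mul_card_sub_one F n
  set T := (frobFixed F E n).filter (· ∉ B) with hT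
  have hfix : ∀ b ∈ B, b ^ q ^ n = b := by
    intro b hb
    have := he b ((hmemB b).1 hb) (2 * s)
    rwa [show e * (2 * s) = n by rw [hn]; ring] at this
  have hTx : ∀ x ∈ T, x ^ q ^ n = x ∧ x ∉ B := fun x hx => by
    rw [hT, Finset.mem_filter, mem_frobFixed hn0] at hx; exact hx
  have hpat : ∀ x ∈ T, ∃ z : B → Fˣ, ∀ b : B, algebraMap F E (z b) = (b - x) ^ D := by
    intro x hx
    have hb : ∀ b : B, ∃ u : Fˣ, algebraMap F E u = (b - x) ^ D := fun b =>
      exists_units_algebraMap_eq_pow (sub_pow_card_pow_eq (hfix b b.2) (hTx x hx).1)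
        (sub_ne_zero.2 fun hbx => (hTx x hx).2 (hbx ▸ b.2))
    choose z hz using hb
    exact ⟨z, hz⟩
  choose! v hv using hpat
  have hcardZ : Fintype.card (B → Fˣ) = m ^ Fintype.card B := by
    rw [Fintype.card_fun, Fintype.card_units]
  have hmain : ‖∑ x ∈ T, patternChar f χ B (v x)‖ ≤
      Fintype.card (B → Fˣ) * ((p ^ (2 * t) + C₀ * p ^ t : ℕ) / (m ^ Fintype.card B : ℕ) : ℝ) -
        T.card := by
    refine norm_sum_comp_le (norm_patternChar_le_one f χ B)
      (sum_patternChar_eq_zero hχ h₀ h₁ hβ₀) T v fun z => ?_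
    have hle : ∀ T' : Finset E, (∀ x ∈ T', x ∈ T ∧ v x = z) →
        T'.card * m ^ Fintype.card B ≤ p ^ (2 * t) + C₀ * p ^ t := by
      intro T' hT'
      refine hC t D hNt hDm (fun b => (-1) ^ D * algebraMap F E (z b)) T' fun x hx => ?_
      obtain ⟨hxT, hxz⟩ := hT' x hx
      refine ⟨by rw [← hQ]; exact (hTx x hxT).1, fun b =>
        ⟨fun hxb => (hTx x hxT).2 (hxb ▸ b.2), ?_⟩⟩
      rw [← hxz, hv x hxT, ← mul_pow]
      congr 1; ring
    rw [le_div_iff₀ (by positivity)]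
    rw [← Nat.cast_mul]
    exact Nat.cast_le.2 (hle _ fun x hx => by simpa using hx)
  have hsplit : frobSum E (resChar hf χ) n = ∑ x ∈ T, patternChar f χ B (v x) +
      ∑ x ∈ (frobFixed F E n).filter (¬ · ∉ B), resChar hf χ (frobNorm F n x) := by
    rw [frobSum, ← Finset.sum_filter_add_sum_filter_not _ (· ∉ B)]
    congr 1
    exact Finset.sum_congr rfl fun x hx =>
      resChar_frobNorm_eq_patternChar hf χ hB (hTx x hx).1 (hv x hx)
  have hcardS : ((frobFixed F E n).filter (¬ · ∉ B)).card ≤ B.card :=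
    Finset.card_le_card fun x hx => not_not.1 (Finset.mem_filter.1 hx).2
  have hcardT : T.card + ((frobFixed F E n).filter (¬ · ∉ B)).card = p ^ (2 * t) := by
    rw [hT, Finset.card_filter_add_card_filter_not, card_frobFixed hn0, hQ]
  have hsmall : ‖∑ x ∈ (frobFixed F E n).filter (¬ · ∉ B), resChar hf χ (frobNorm F n x)‖ ≤
      B.card := by
    refine (norm_sum_le_of_le _ fun x _ => norm_resChar_le_one hf χ _).trans ?_
    rw [Finset.sum_const, nsmul_eq_mul, mul_one]
    exact_mod_cast hcardS
  rw [hsplit, hsqrt]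
  refine (norm_add_le _ _).trans ((add_le_add hmain hsmall).trans ?_)
  rw [hcardZ, mul_div_cancel₀ _ (by positivity)]
  have h6 : (T.card : ℝ) + ((frobFixed F E n).filter (¬ · ∉ B)).card = p ^ (2 * t) := by
    exact_mod_cast hcardT
  have h7 : (((frobFixed F E n).filter (¬ · ∉ B)).card : ℝ) ≤ B.card := by exact_mod_cast hcardS
  have h8 : (1 : ℝ) ≤ (p ^ t : ℕ) := by exact_mod_cast Nat.one_le_pow _ _ hpp.pos
  have h9 : (B.card : ℝ) ≤ B.card * (p ^ t : ℕ) := le_mul_of_one_le_right (Nat.cast_nonneg _) h8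
  push_cast at h9 ⊢
  nlinarith

end

theorem norm_frobSum_one {F E ι : Type*} [Field F] [Fintype F] [Field E] [Algebra F E] [Fintype ι]
    {f : ι → F[X]} (hf : ∀ i, (f i).Monic) (χ : ι → MulChar F ℂ) :
    ‖frobSum E (resChar hf χ) 1‖ = ‖∑ x : F, ∏ i, χ i ((f i).eval x)‖ := by
  have h1 : frobFixed F E 1 = Finset.univ.map ⟨algebraMap F E, (algebraMap F E).injective⟩ := by
    ext x
    rw [mem_frobFixed one_ne_zero, pow_one, Finset.mem_map]
    constructor
    · intro hx
      obtain ⟨a, ha⟩ := mem_range_algebraMap_of_pow_card_eq hx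
      exact ⟨a, Finset.mem_univ _, ha⟩
    · rintro ⟨a, -, rfl⟩
      change algebraMap F E a ^ _ = algebraMap F E a
      rw [← map_pow, FiniteField.pow_card]
  have h2 : ∀ a : F, frobNorm F 1 (algebraMap F E a) = X - C a := by
    intro a
    apply Polynomial.map_injective _ (algebraMap F E).injective
    rw [map_frobNorm (by rw [pow_one, ← map_pow, FiniteField.pow_card]), conjProd]
    simp
  have h3 : ∀ (i : ι) (a : F), (f i).resultant (X - C a) =
      (-1) ^ (f i).natDegree * (f i).eval a := by
    intro i a
    rw [natDegree_X_sub_C, resultant_X_sub_C_right _ _ _ le_rfl]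
  have h4 : frobSum E (resChar hf χ) 1 =
      (∏ i, χ i ((-1) ^ (f i).natDegree)) * ∑ x : F, ∏ i, χ i ((f i).eval x) := by
    rw [frobSum, h1, Finset.sum_map, Finset.mul_sum]
    refine Finset.sum_congr rfl fun a _ => ?_
    change resChar hf χ (frobNorm F 1 (algebraMap F E a)) = _
    rw [h2, resChar_apply, ← Finset.prod_mul_distrib]
    exact Finset.prod_congr rfl fun i _ => by rw [h3, map_mul]
  rw [h4, norm_mul, norm_prod, Finset.prod_eq_one, one_mul]
  exact fun i _ => norm_mulChar_apply_of_ne_zero _ (pow_ne_zero _ (neg_ne_zero.2 one_ne_zero))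

section
variable {F E ι : Type*} [Field F] [Fintype F] [Field E] [Algebra F E] [IsAlgClosed E] [Fintype ι]

theorem exists_resChar_ne_one {f : ι → F[X]} (hf : ∀ i, (f i).Monic) {χ : ι → MulChar F ℂ}
    {C : ℝ} {e N : ℕ} (he : e ≠ 0) (h : ∀ s, N ≤ s →
      ‖frobSum E (resChar hf χ) (e * s)‖ ≤ C * √(Fintype.card F) ^ (e * s)) :
    ∃ g, IsCoprime (∏ i, f i) g ∧ resChar hf χ g ≠ 1 := by
  by_contra! hall
  have hh0 : ∏ i, f i ≠ 0 := (monic_prod_of_monic _ _ fun i _ => hf i).ne_zero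
  set B : Finset E := ((∏ i, f i).aroots E).toFinset with hB
  have hq : 1 < √(Fintype.card F : ℝ) := by
    rw [Real.lt_sqrt zero_le_one, one_pow]
    exact_mod_cast Fintype.one_lt_card
  obtain ⟨s₀, hs₀⟩ := pow_unbounded_of_one_lt (C + 2 * B.card) hq
  set s := max (max s₀ N) 1 with hs
  have hn0 : e * s ≠ 0 := mul_ne_zero he (by omega)
  have hy : C + 2 * B.card < √(Fintype.card F : ℝ) ^ (e * s) :=
    hs₀.trans_le (pow_le_pow_right₀ hq.le
      ((show s₀ ≤ s by omega).trans (Nat.le_mul_of_pos_left _ (Nat.pos_of_ne_zero he))))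
  have hy1 : 1 ≤ √(Fintype.card F : ℝ) ^ (e * s) := one_le_pow₀ hq.le
  have h1 := h s (by omega)
  have h2 : (frobSum E (resChar hf χ) (e * s) - (frobFixed F E (e * s)).card) =
      ∑ x ∈ (frobFixed F E (e * s)).filter (· ∈ B), (resChar hf χ (frobNorm F (e * s) x) - 1) := by
    rw [Finset.sum_filter_of_ne]
    · simp [frobSum]
    · intro x hx hne
      rw [mem_frobFixed hn0] at hx
      by_contra hxB
      refine hne (sub_eq_zero.2 (hall _ (isCoprime_frobNorm hf hx fun h0 => hxB ?_)))
      rw [hB, Multiset.mem_toFinset, mem_aroots]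
      exact ⟨hh0, h0⟩
  have h3 : ‖frobSum E (resChar hf χ) (e * s) - (frobFixed F E (e * s)).card‖ ≤ 2 * B.card := by
    rw [h2]
    refine (norm_sum_le_of_le (f := fun x => resChar hf χ (frobNorm F (e * s) x) - 1) _
      (n := fun _ => 2) fun x _ => ?_).trans ?_
    · refine (norm_sub_le _ _).trans ?_
      rw [norm_one]
      linarith [norm_resChar_le_one hf χ (frobNorm F (e * s) x)]
    · rw [Finset.sum_const, nsmul_eq_mul, mul_comm]
      have : (((frobFixed F E (e * s)).filter (· ∈ B)).card : ℝ) ≤ B.card := by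
        exact_mod_cast Finset.card_le_card fun x hx => (Finset.mem_filter.1 hx).2
      linarith
  have h4 : ((frobFixed F E (e * s)).card : ℝ) = (√(Fintype.card F : ℝ) ^ (e * s)) ^ 2 := by
    rw [card_frobFixed hn0, pow_right_comm, Real.sq_sqrt (Nat.cast_nonneg _)]
    push_cast; rfl
  have h5 : ((frobFixed F E (e * s)).card : ℝ) ≤ C * √(Fintype.card F : ℝ) ^ (e * s) + 2 * B.card := by
    have := norm_sub_norm_le ((frobFixed F E (e * s)).card : ℂ) (frobSum E (resChar hf χ) (e * s))
    rw [norm_sub_rev, Complex.norm_natCast] at this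
    linarith
  rw [h4] at h5
  have h6 : (0 : ℝ) ≤ B.card := Nat.cast_nonneg _
  nlinarith

/-- Weil's bound for sums of products of multiplicative characters of polynomials. -/
theorem norm_sum_prod_mulChar_le {f : ι → F[X]} (hf : ∀ i, (f i).Monic) {χ : ι → MulChar F ℂ}
    {i₀ : ι} (hχ : χ i₀ ≠ 1) {β₀ : E} (h₀ : ((f i₀).aroots E).count β₀ = 1)
    (h₁ : ∀ i, i ≠ i₀ → χ i ≠ 1 → ((f i).aroots E).count β₀ = 0) :
    ‖∑ x : F, ∏ i, χ i ((f i).eval x)‖ ≤ (∑ i, (f i).natDegree : ℕ) * √(Fintype.card F) := by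
  obtain ⟨C, e, N, he, hbound⟩ := exists_norm_frobSum_le hf hχ h₀ h₁
  obtain ⟨g, hg, hgχ⟩ := exists_resChar_ne_one hf he hbound
  obtain ⟨ω, hω, hS⟩ := exists_multiset_frobSum_eq (E := E) (resChar hf χ)
    (monic_prod_of_monic _ _ fun i _ => hf i) (resChar_add_mul hf χ) hg hgχ
  have hq : 0 < √(Fintype.card F : ℝ) := Real.sqrt_pos.2 (by exact_mod_cast Fintype.card_pos)
  have hle : ∀ a ∈ ω, ‖a‖ ≤ √(Fintype.card F : ℝ) := by
    refine norm_le_of_norm_powerSum_le (C := C) (e := e) (N := N + 1) hq he fun s hs => ?_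
    rw [← norm_neg, ← hS _ (Nat.mul_pos (Nat.pos_of_ne_zero he) (by omega))]
    exact hbound s (by omega)
  rw [← norm_frobSum_one (E := E) hf χ, hS 1 le_rfl, norm_neg]
  simp only [pow_one, Multiset.map_id']
  have h1 : ‖ω.sum‖ ≤ ω.card • √(Fintype.card F : ℝ) := by
    rw [← Multiset.card_map (fun a => ‖a‖) ω]
    refine (norm_multiset_sum_le ω).trans (Multiset.sum_le_card_nsmul _ _ fun x hx => ?_)
    obtain ⟨a, ha, rfl⟩ := Multiset.mem_map.1 hx
    exact hle a ha
  rw [nsmul_eq_mul] at h1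
  refine h1.trans (mul_le_mul_of_nonneg_right ?_ hq.le)
  rw [natDegree_prod_of_monic _ _ fun i _ => hf i] at hω
  exact_mod_cast hω

end

theorem exists_pow_eq_neg_one {E : Type*} [Field E] [IsAlgClosed E] {j : ℕ} (hj : (j : E) ≠ 0) :
    ∃ β : E, β ^ j = -1 ∧ ∀ i, 0 < i → i < j → β ^ i ≠ -1 := by
  by_cases h2 : (2 : E) = 0
  · have : NeZero (j : E) := ⟨hj⟩
    have h11 : (-1 : E) = 1 := by linear_combination h2 * (-1)
    obtain ⟨β, hβ⟩ := HasEnoughRootsOfUnity.exists_primitiveRoot E j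
    refine ⟨β, by rw [hβ.pow_eq_one, h11], fun i hi hij h => ?_⟩
    rw [h11] at h
    exact absurd (Nat.le_of_dvd hi (hβ.dvd_of_pow_eq_one i h)) (by omega)
  · have h2j : ((2 * j : ℕ) : E) ≠ 0 := by push_cast; exact mul_ne_zero h2 hj
    have : NeZero ((2 * j : ℕ) : E) := ⟨h2j⟩
    obtain ⟨β, hβ⟩ := HasEnoughRootsOfUnity.exists_primitiveRoot E (2 * j)
    have hj0 : 0 < j := Nat.pos_of_ne_zero (by rintro rfl; simp at hj)
    refine ⟨β, ?_, fun i hi hij h => ?_⟩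
    · have h1 : (β ^ j) ^ 2 = 1 := by rw [← pow_mul, mul_comm, hβ.pow_eq_one]
      rcases sq_eq_sq_iff_eq_or_eq_neg.1 (h1.trans (one_pow 2).symm) with h | h
      · exact absurd (Nat.le_of_dvd hj0 (hβ.dvd_of_pow_eq_one j h)) (by omega)
      · exact h
    · have h1 : β ^ (2 * i) = 1 := by rw [mul_comm, pow_mul, h]; norm_num
      exact absurd (Nat.le_of_dvd (by omega) (hβ.dvd_of_pow_eq_one _ h1)) (by omega)

/-- The polynomials `X` (for `j = 0`) and `X ^ j + 1` (for `j > 0`). -/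
noncomputable def shiftPoly (F : Type*) [Field F] (j : ℕ) : F[X] := if j = 0 then X else X ^ j + 1

theorem monic_shiftPoly (F : Type*) [Field F] (j : ℕ) : (shiftPoly F j).Monic := by
  unfold shiftPoly
  split_ifs with h
  · exact monic_X
  · simpa using monic_X_pow_add_C (1 : F) h

theorem natDegree_shiftPoly_le (F : Type*) [Field F] (j : ℕ) :
    (shiftPoly F j).natDegree ≤ j + 1 := by
  unfold shiftPoly
  split_ifs with h
  · simp
  · have : (X ^ j + 1 : F[X]).natDegree = j := by simpa using natDegree_X_pow_add_C (r := (1 : F))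
    omega

/-- The exponents `j ≤ k` which vanish or are nonzero in `F`. -/
noncomputable def shiftSet (F : Type*) [Field F] (k : ℕ) : Finset ℕ :=
  (Finset.range (k + 1)).filter fun j => j = 0 ∨ (j : F) ≠ 0

theorem sum_natDegree_shiftPoly_le (F : Type*) [Field F] (k : ℕ) :
    ∑ i : shiftSet F k, (shiftPoly F i).natDegree ≤ (k + 1) ^ 2 := by
  rw [Finset.sum_coe_sort (shiftSet F k) (fun i => (shiftPoly F i).natDegree)]
  calc ∑ i ∈ shiftSet F k, (shiftPoly F i).natDegree
      ≤ ∑ i ∈ Finset.range (k + 1), (shiftPoly F i).natDegree :=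
        Finset.sum_le_sum_of_subset (Finset.filter_subset _ _)
    _ ≤ ∑ i ∈ Finset.range (k + 1), (k + 1) := Finset.sum_le_sum fun i hi =>
        (natDegree_shiftPoly_le F i).trans (by have := Finset.mem_range.1 hi; omega)
    _ = (k + 1) ^ 2 := by simp [sq]

theorem norm_sum_prod_shiftPoly_le {F : Type*} [Field F] [Fintype F] {k : ℕ}
    {χ : shiftSet F k → MulChar F ℂ} (hχ : χ ≠ 1) :
    ‖∑ x : F, ∏ i, χ i ((shiftPoly F i).eval x)‖ ≤ ((k + 1) ^ 2 : ℕ) * √(Fintype.card F) := by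
  obtain ⟨i₁, hi₁⟩ := Function.ne_iff.1 hχ
  obtain ⟨i₀, hi₀, hmax⟩ := Finset.exists_max_image
    (Finset.univ.filter fun i => χ i ≠ 1) (fun i => (i : ℕ)) ⟨i₁, by simpa using hi₁⟩
  have hi₀' : χ i₀ ≠ 1 := by simpa using hi₀
  have hmax' : ∀ i, i ≠ i₀ → χ i ≠ 1 → (i : ℕ) < i₀ := fun i hne hi =>
    lt_of_le_of_ne (hmax i (by simpa using hi)) fun h => hne (Subtype.ext h)
  have hdeg := sum_natDegree_shiftPoly_le F k
  let E := AlgebraicClosure F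
  suffices h : ∃ β₀ : E, ((shiftPoly F i₀).aroots E).count β₀ = 1 ∧
      ∀ i, i ≠ i₀ → χ i ≠ 1 → ((shiftPoly F i).aroots E).count β₀ = 0 by
    obtain ⟨β₀, h₀, h₁⟩ := h
    refine (norm_sum_prod_mulChar_le (f := fun i : shiftSet F k => shiftPoly F i) (fun i => monic_shiftPoly F i) hi₀' h₀ h₁).trans ?_
    gcongr
  have hmem : (i₀ : ℕ) = 0 ∨ ((i₀ : ℕ) : F) ≠ 0 := (Finset.mem_filter.1 i₀.2).2
  by_cases h0 : (i₀ : ℕ) = 0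
  · refine ⟨0, ?_, fun i hne hi => absurd (hmax' i hne hi) (by omega)⟩
    simp [shiftPoly, h0]
  · have hj : ((i₀ : ℕ) : F) ≠ 0 := hmem.resolve_left h0
    obtain ⟨β, hβ, hβ'⟩ := exists_pow_eq_neg_one (E := E) (j := i₀)
      (by rw [← map_natCast (algebraMap F E)]; exact (_root_.map_ne_zero _).2 hj)
    have hmem0 : ∀ i : ℕ, i ≠ 0 → (β ∈ (shiftPoly F i).aroots E ↔ β ^ i = -1) := by
      intro i hi
      rw [mem_aroots, shiftPoly, if_neg hi]
      have : (X ^ i + 1 : F[X]) ≠ 0 := by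
        simpa using (monic_X_pow_add_C (1 : F) hi).ne_zero
      simp [this, eq_neg_iff_add_eq_zero]
    refine ⟨β, Multiset.count_eq_one_of_mem ?_ ((hmem0 _ h0).2 hβ), fun i hne hi => ?_⟩
    · refine nodup_aroots_iff_of_splits (monic_shiftPoly F _).ne_zero (IsAlgClosed.splits _) |>.2 ?_
      rw [shiftPoly, if_neg h0]
      have := separable_X_pow_sub_C (-1 : F) hj (by simp)
      simpa using this
    · rw [Multiset.count_eq_zero]
      by_cases hi0 : (i : ℕ) = 0
      · rw [shiftPoly, if_pos hi0, aroots_X, Multiset.mem_singleton]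
        rintro rfl
        rw [zero_pow h0] at hβ
        exact absurd hβ (by simp)
      · rw [hmem0 _ hi0]
        exact hβ' _ (by omega) (hmax' i hne hi)

noncomputable instance MulChar.fintypeComplex {F : Type*} [Field F] [Fintype F] :
    Fintype (MulChar F ℂ) := .ofFinite _

/-- The function `g` is a combination of multiplicative characters whose coefficients have
`ℓ¹`-norm at most `C`. -/
def HasCharBound {F : Type*} [Field F] [Fintype F] (g : F → ℂ) (C : ℝ) : Prop :=
  ∃ a : MulChar F ℂ → ℂ, ∑ ψ, ‖a ψ‖ ≤ C ∧ ∀ y, g y = ∑ ψ, a ψ * ψ y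

section HasCharBound

variable {F : Type*} [Field F] [Fintype F]

theorem card_mulChar_complex : Fintype.card (MulChar F ℂ) = Fintype.card Fˣ := by
  have := MulChar.card_eq_card_units_of_hasEnoughRootsOfUnity F ℂ
  simpa only [Nat.card_eq_fintype_card] using this

theorem sum_mulChar_apply (a : F) :
    ∑ ψ : MulChar F ℂ, ψ a = if a = 1 then (Fintype.card Fˣ : ℂ) else 0 := by
  split_ifs with ha
  · simp [ha, card_mulChar_complex]
  · obtain ⟨χ, hχ⟩ := MulChar.exists_apply_ne_one_of_hasEnoughRootsOfUnity F ℂ ha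
    refine eq_zero_of_mul_eq_self_left hχ ?_
    simp only [Finset.mul_sum, ← MulChar.mul_apply]
    exact Fintype.sum_bijective _ (Group.mulLeft_bijective χ) _ _ fun χ' ↦ rfl

theorem HasCharBound.sub {g₁ g₂ : F → ℂ} {C₁ C₂ : ℝ} (h₁ : HasCharBound g₁ C₁)
    (h₂ : HasCharBound g₂ C₂) : HasCharBound (fun y => g₁ y - g₂ y) (C₁ + C₂) := by
  obtain ⟨a, ha, hga⟩ := h₁
  obtain ⟨b, hb, hgb⟩ := h₂
  refine ⟨fun ψ => a ψ - b ψ, ?_, fun y => ?_⟩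
  · calc ∑ ψ, ‖a ψ - b ψ‖ ≤ ∑ ψ, (‖a ψ‖ + ‖b ψ‖) := Finset.sum_le_sum fun ψ _ => norm_sub_le _ _
      _ ≤ C₁ + C₂ := by rw [Finset.sum_add_distrib]; exact add_le_add ha hb
  · simp only [hga y, hgb y, sub_mul, Finset.sum_sub_distrib]

theorem HasCharBound.mul {g₁ g₂ : F → ℂ} {C₁ C₂ : ℝ} (h₁ : HasCharBound g₁ C₁)
    (h₂ : HasCharBound g₂ C₂) : HasCharBound (fun y => g₁ y * g₂ y) (C₁ * C₂) := by
  obtain ⟨a, ha, hga⟩ := h₁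
  obtain ⟨b, hb, hgb⟩ := h₂
  refine ⟨fun ψ => ∑ φ, a φ * b (φ⁻¹ * ψ), ?_, fun y => ?_⟩
  · calc ∑ ψ, ‖∑ φ, a φ * b (φ⁻¹ * ψ)‖ ≤ ∑ ψ, ∑ φ, ‖a φ‖ * ‖b (φ⁻¹ * ψ)‖ :=
          Finset.sum_le_sum fun ψ _ => (norm_sum_le _ _).trans
            (Finset.sum_le_sum fun φ _ => (norm_mul _ _).le)
      _ = ∑ φ, ‖a φ‖ * ∑ ψ, ‖b ψ‖ := by
          rw [Finset.sum_comm]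
          refine Finset.sum_congr rfl fun φ _ => ?_
          rw [← Finset.mul_sum]
          congr 1
          exact Fintype.sum_bijective _ (Group.mulLeft_bijective φ⁻¹) _ _ fun χ' ↦ rfl
      _ = (∑ φ, ‖a φ‖) * ∑ ψ, ‖b ψ‖ := by rw [Finset.sum_mul]
      _ ≤ C₁ * C₂ := mul_le_mul ha hb (Finset.sum_nonneg fun _ _ => norm_nonneg _)
          ((Finset.sum_nonneg fun _ _ => norm_nonneg _).trans ha)
  · simp only [hga y, hgb y, Finset.sum_mul]
    rw [Finset.sum_comm]
    refine Finset.sum_congr rfl fun φ _ => ?_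
    rw [Finset.mul_sum]
    refine Fintype.sum_bijective _ (Group.mulLeft_bijective φ) _ _ fun ψ => ?_
    rw [inv_mul_cancel_left, MulChar.mul_apply]
    ring

theorem HasCharBound.prod {κ : Type*} (s : Finset κ) {g : κ → F → ℂ} {C : κ → ℝ} {g₀ : F → ℂ}
    {C₀ : ℝ} (h₀ : HasCharBound g₀ C₀) (h : ∀ i ∈ s, HasCharBound (g i) (C i)) :
    HasCharBound (fun y => g₀ y * ∏ i ∈ s, g i y) (C₀ * ∏ i ∈ s, C i) := by
  induction s using Finset.induction_on with
  | empty => simpa using h₀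
  | insert i s hi ih =>
    have := (ih fun j hj => h j (Finset.mem_insert_of_mem hj)).mul
      (h i (Finset.mem_insert_self i s))
    simp only [Finset.prod_insert hi]
    convert this using 1
    · funext y; ring
    · ring

theorem mean_eq_of_eq_sum {g : F → ℂ} {a : MulChar F ℂ → ℂ} (h : ∀ y, g y = ∑ ψ, a ψ * ψ y) :
    ∑ y, g y = Fintype.card Fˣ * a 1 := by
  simp only [h]
  rw [Finset.sum_comm, Finset.sum_eq_single 1]
  · rw [← Finset.mul_sum, MulChar.sum_one_eq_card_units, mul_comm]
  · intro ψ _ hψ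
    rw [← Finset.mul_sum, MulChar.sum_eq_zero_of_ne_one hψ, mul_zero]
  · simp

/-- The indicator function on `F` of a subgroup of `Fˣ`. -/
noncomputable def subgroupInd (H : Subgroup Fˣ) (y : F) : ℂ :=
  if ∃ h ∈ H, (h : F) = y then 1 else 0

theorem hasCharBound_subgroupInd (H : Subgroup Fˣ) : HasCharBound (subgroupInd H) 1 := by
  have hc : (Fintype.card Fˣ : ℂ) ≠ 0 := by exact_mod_cast Fintype.card_ne_zero
  have hS : ∀ y, subgroupInd H y =
      ∑ ψ : MulChar F ℂ, ((Fintype.card Fˣ : ℂ)⁻¹ * ∑ h : H, ψ ((h : Fˣ) : F)) * ψ y := by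
    intro y
    simp only [mul_assoc, Finset.sum_mul]
    rw [← Finset.mul_sum, Finset.sum_comm]
    simp only [← map_mul, sum_mulChar_apply]
    rw [subgroupInd]
    split_ifs with hy
    · obtain ⟨h, hh, rfl⟩ := hy
      rw [Finset.sum_eq_single ⟨h⁻¹, H.inv_mem hh⟩]
      · simp [hc]
      · intro b _ hb
        rw [if_neg]
        intro hb'
        refine hb (Subtype.ext ?_)
        rw [← Units.val_mul, Units.val_eq_one] at hb'
        exact eq_inv_of_mul_eq_one_left hb'
      · simp
    · rw [Finset.sum_eq_zero, mul_zero]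
      intro b _
      rw [if_neg]
      intro hb
      refine hy ⟨b⁻¹, H.inv_mem b.2, ?_⟩
      rw [Units.val_inv_eq_inv_val]
      exact inv_eq_of_mul_eq_one_right hb
  have hpos : ∀ ψ : MulChar F ℂ, ∃ r : ℝ, 0 ≤ r ∧
      (Fintype.card Fˣ : ℂ)⁻¹ * ∑ h : H, ψ ((h : Fˣ) : F) = r := by
    intro ψ
    by_cases hψ : ∀ h : H, ψ ((h : Fˣ) : F) = 1
    · refine ⟨(Fintype.card Fˣ : ℝ)⁻¹ * Fintype.card H, by positivity, ?_⟩
      simp [hψ]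
    · push Not at hψ
      obtain ⟨h₀, hh₀⟩ := hψ
      refine ⟨0, le_rfl, ?_⟩
      have : ∑ h : H, ψ ((h : Fˣ) : F) = 0 := by
        refine eq_zero_of_mul_eq_self_left hh₀ ?_
        simp only [Finset.mul_sum, ← map_mul]
        exact Fintype.sum_bijective _ (Group.mulLeft_bijective h₀) _ _ fun h => by simp
      simp [this]
  choose r hr hr' using hpos
  refine ⟨_, ?_, hS⟩
  have h1 := hS 1
  simp only [hr'] at h1 ⊢
  have h2 : subgroupInd H (1 : F) = 1 := if_pos ⟨1, H.one_mem, by simp⟩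
  rw [h2] at h1
  have h3 : ∑ ψ, r ψ = 1 := by
    have : ((1 : ℝ) : ℂ) = ((∑ ψ, r ψ : ℝ) : ℂ) := by
      push_cast
      simpa using h1
    exact (Complex.ofReal_injective this).symm
  refine le_of_eq ?_
  rw [← h3]
  exact Finset.sum_congr rfl fun ψ _ => by simp [abs_of_nonneg (hr ψ)]

theorem sum_subgroupInd (H : Subgroup Fˣ) : ∑ y, subgroupInd H y = Nat.card H := by
  simp only [subgroupInd]
  rw [Finset.sum_boole, Nat.card_eq_fintype_card, ← Finset.card_univ]
  congr 1
  symm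
  refine Finset.card_bij (fun h _ => ((h : Fˣ) : F)) (fun h _ => ?_) (fun a _ b _ h => ?_)
    fun y hy => ?_
  · simpa using ⟨h, h.2, rfl⟩
  · exact Subtype.ext (Units.ext h)
  · obtain ⟨h, hh, rfl⟩ := (Finset.mem_filter.1 hy).2
    exact ⟨⟨h, hh⟩, Finset.mem_univ _, rfl⟩

theorem norm_sum_prod_sub_le {k : ℕ} {G : shiftSet F k → F → ℂ} {C : shiftSet F k → ℝ}
    (hG : ∀ i, HasCharBound (G i) (C i)) :
    ‖∑ x, ∏ i, G i ((shiftPoly F i).eval x) -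
      (Finset.univ.filter fun x : F => ∀ i : shiftSet F k, (shiftPoly F i).eval x ≠ 0).card *
        ∏ i, ((∑ y, G i y) / Fintype.card Fˣ)‖ ≤
      (∏ i, C i) * (((k + 1) ^ 2 : ℕ) * √(Fintype.card F)) := by
  choose a ha hGa using hG
  have hc : (Fintype.card Fˣ : ℂ) ≠ 0 := by exact_mod_cast Fintype.card_ne_zero
  have h1 : ∀ x, ∏ i, G i ((shiftPoly F i).eval x) = ∑ ψ : shiftSet F k → MulChar F ℂ,
      (∏ i, a i (ψ i)) * ∏ i, ψ i ((shiftPoly F i).eval x) := by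
    intro x
    simp only [hGa, Finset.prod_univ_sum, Fintype.piFinset_univ, Finset.prod_mul_distrib]
  have h2 : ∑ x, ∏ i, G i ((shiftPoly F i).eval x) = ∑ ψ : shiftSet F k → MulChar F ℂ,
      (∏ i, a i (ψ i)) * ∑ x, ∏ i, ψ i ((shiftPoly F i).eval x) := by
    simp only [h1, Finset.mul_sum]
    exact Finset.sum_comm
  have h3 : ∀ i, (∑ y, G i y) / Fintype.card Fˣ = a i 1 := fun i => by
    rw [mean_eq_of_eq_sum (hGa i), mul_div_cancel_left₀ _ hc]
  have h4 : ∑ x, ∏ i : shiftSet F k, (1 : MulChar F ℂ) ((shiftPoly F i).eval x) =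
      (Finset.univ.filter fun x : F =>
        ∀ i : shiftSet F k, (shiftPoly F i).eval x ≠ 0).card := by
    rw [← Finset.sum_boole]
    refine Finset.sum_congr rfl fun x _ => ?_
    split_ifs with hx
    · exact Finset.prod_eq_one fun i _ => MulChar.one_apply (isUnit_iff_ne_zero.2 (hx i))
    · push Not at hx
      obtain ⟨i, hi⟩ := hx
      exact Finset.prod_eq_zero (Finset.mem_univ i) (by rw [hi]; exact MulChar.map_zero _)
  have h5 : 0 ≤ ((k + 1) ^ 2 : ℕ) * √(Fintype.card F : ℝ) := by positivity
  simp only [h3]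
  rw [h2, ← Finset.add_sum_erase _ _ (Finset.mem_univ 1)]
  simp only [Pi.one_apply]
  rw [h4, mul_comm (∏ i, a i 1), add_sub_cancel_left]
  refine (norm_sum_le_of_le _ (n := fun ψ => (∏ i, ‖a i (ψ i)‖) *
    (((k + 1) ^ 2 : ℕ) * √(Fintype.card F))) fun ψ hψ => ?_).trans ?_
  · rw [norm_mul, norm_prod]
    exact mul_le_mul_of_nonneg_left (norm_sum_prod_shiftPoly_le (Finset.ne_of_mem_erase hψ))
      (Finset.prod_nonneg fun _ _ => norm_nonneg _)
  · rw [← Finset.sum_mul]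
    refine mul_le_mul_of_nonneg_right ?_ h5
    calc _ ≤ ∑ ψ : shiftSet F k → MulChar F ℂ, ∏ i, ‖a i (ψ i)‖ :=
          Finset.sum_le_sum_of_subset_of_nonneg (Finset.erase_subset _ _)
            fun _ _ _ => Finset.prod_nonneg fun _ _ => norm_nonneg _
      _ = ∏ i, ∑ ψ, ‖a i ψ‖ := by rw [Finset.prod_univ_sum, Fintype.piFinset_univ]
      _ ≤ ∏ i, C i := Finset.prod_le_prod
          (fun _ _ => Finset.sum_nonneg fun _ _ => norm_nonneg _) fun i _ => ha i

end HasCharBound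

theorem le_totient_mul_two_pow {d : ℕ} : d ≤ d.totient * 2 ^ d.primeFactors.card := by
  have h1 := Nat.totient_eq_mul_prod_factors d
  have h2 : (1 / 2 : ℚ) ^ d.primeFactors.card ≤ ∏ p ∈ d.primeFactors, (1 - (p : ℚ)⁻¹) := by
    rw [← Finset.prod_const]
    refine Finset.prod_le_prod (fun _ _ => by norm_num) fun p hp => ?_
    have hp2 : (2 : ℚ) ≤ p := by exact_mod_cast (Nat.prime_of_mem_primeFactors hp).two_le
    have : (p : ℚ)⁻¹ ≤ 1 / 2 := by
      rw [one_div]; exact inv_anti₀ (by norm_num) hp2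
    linarith
  have h3 : (d : ℚ) ≤ d.totient * 2 ^ d.primeFactors.card := by
    rw [h1]
    calc (d : ℚ) = d * (1 / 2) ^ d.primeFactors.card * 2 ^ d.primeFactors.card := by
          rw [mul_assoc, ← mul_pow]; norm_num
      _ ≤ _ := by gcongr
  exact_mod_cast h3

theorem pow_card_primeFactors_le {T : ℕ} (hT : 1 ≤ T) {d : ℕ} (hd : d ≠ 0) :
    T ^ d.primeFactors.card ≤ T ^ T * d := by
  have h1 : ∏ p ∈ d.primeFactors, T ≤ ∏ p ∈ d.primeFactors, ((if p < T then T else 1) * p) := by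
    refine Finset.prod_le_prod (fun _ _ => Nat.zero_le _) fun p hp => ?_
    have := (Nat.prime_of_mem_primeFactors hp).pos
    split_ifs with h
    · exact Nat.le_mul_of_pos_right _ this
    · omega
  rw [Finset.prod_const, Finset.prod_mul_distrib] at h1
  refine h1.trans (Nat.mul_le_mul ?_ (Nat.le_of_dvd (Nat.pos_of_ne_zero hd)
    (Nat.prod_primeFactors_dvd d)))
  rw [Finset.prod_ite, Finset.prod_const, Finset.prod_const_one, mul_one]
  refine Nat.pow_le_pow_right hT ?_
  calc _ ≤ (Finset.range T).card := Finset.card_le_card fun p hp => by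
        simpa using (Finset.mem_filter.1 hp).2
    _ = T := Finset.card_range T

section genInd

variable {F : Type*} [Field F] [Fintype F]

theorem orderOf_eq_card_iff (A : Subgroup Fˣ) {h : Fˣ} (hh : h ∈ A) :
    orderOf h = Nat.card A ↔ ∀ p ∈ (Nat.card A).primeFactors, h ^ (Nat.card A / p) ≠ 1 := by
  have hd : 0 < Nat.card A := Nat.card_pos
  constructor
  · intro h1 p hp h2
    have h3 := Nat.prime_of_mem_primeFactors hp
    have h4 := Nat.le_of_dvd (Nat.div_pos (Nat.le_of_mem_primeFactors hp) h3.pos)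
      (orderOf_dvd_of_pow_eq_one h2)
    rw [h1] at h4
    exact absurd (Nat.div_lt_self hd h3.one_lt) (by omega)
  · intro h1
    refine orderOf_eq_of_pow_and_pow_div_prime hd ?_ fun p hp hpd =>
      h1 p (Nat.mem_primeFactors.2 ⟨hp, hpd, hd.ne'⟩)
    have := pow_card_eq_one' (x := (⟨h, hh⟩ : A))
    exact congrArg Subtype.val this

/-- The indicator function of the generators of `A`. -/
noncomputable def genInd (A : Subgroup Fˣ) (y : F) : ℂ :=
  if ∃ h ∈ A, orderOf h = Nat.card A ∧ (h : F) = y then 1 else 0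

theorem genInd_eq_prod (A : Subgroup Fˣ) (y : F) :
    genInd A y = subgroupInd A y * ∏ p ∈ (Nat.card A).primeFactors,
      (subgroupInd A y - subgroupInd (A ⊓ (powMonoidHom (Nat.card A / p)).ker) y) := by
  by_cases hy : ∃ h ∈ A, (h : F) = y
  · obtain ⟨h, hh, rfl⟩ := hy
    have h1 : subgroupInd A (h : F) = 1 := if_pos ⟨h, hh, rfl⟩
    rw [h1, one_mul, genInd]
    have h2 : ∀ p, subgroupInd (A ⊓ (powMonoidHom (Nat.card A / p)).ker) (h : F) =
        if h ^ (Nat.card A / p) = 1 then 1 else 0 := by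
      intro p
      rw [subgroupInd]
      refine if_congr ⟨?_, fun h3 => ⟨h, ⟨hh, h3⟩, rfl⟩⟩ rfl rfl
      rintro ⟨h', ⟨-, h3⟩, h4⟩
      rw [← Units.ext h4]
      exact h3
    simp only [h2]
    split_ifs with h3
    · obtain ⟨h', hh', h4, h5⟩ := h3
      obtain rfl := Units.ext h5
      symm
      refine Finset.prod_eq_one fun p hp => ?_
      rw [if_neg ((orderOf_eq_card_iff A hh).1 h4 p hp), sub_zero]
    · have h4 : ¬ orderOf h = Nat.card A := fun h4 => h3 ⟨h, hh, h4, rfl⟩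
      rw [orderOf_eq_card_iff A hh] at h4
      push Not at h4
      obtain ⟨p, hp, h5⟩ := h4
      exact (Finset.prod_eq_zero hp (by rw [if_pos h5, sub_self])).symm
  · rw [subgroupInd, if_neg hy, zero_mul, genInd, if_neg]
    rintro ⟨h, hh, -, h1⟩
    exact hy ⟨h, hh, h1⟩

theorem hasCharBound_genInd (A : Subgroup Fˣ) :
    HasCharBound (genInd A) (2 ^ (Nat.card A).primeFactors.card) := by
  have := HasCharBound.prod (Nat.card A).primeFactors (hasCharBound_subgroupInd A) fun p _ =>
    (hasCharBound_subgroupInd A).sub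
      (hasCharBound_subgroupInd (A ⊓ (powMonoidHom (Nat.card A / p)).ker))
  convert this using 1
  · exact funext fun y => genInd_eq_prod A y
  · rw [Finset.prod_const, one_mul]
    norm_num

theorem sum_genInd (A : Subgroup Fˣ) : ∑ y, genInd A y = (Nat.card A).totient := by
  have h1 : (Finset.univ.filter fun a : A => orderOf a = Nat.card A).card =
      (Nat.card A).totient := by
    have := IsCyclic.card_orderOf_eq_totient (α := A) (d := Nat.card A) (by simp)
    convert this
  simp only [genInd]
  rw [Finset.sum_boole, ← h1]
  congr 1
  symm
  refine Finset.card_bij (fun h _ => ((h : Fˣ) : F)) (fun h hh => ?_) (fun a _ b _ h => ?_)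
    fun y hy => ?_
  · have h2 := (Finset.mem_filter.1 hh).2
    exact Finset.mem_filter.2 ⟨Finset.mem_univ _, h, h.2, by simpa using h2, rfl⟩
  · exact Subtype.ext (Units.ext h)
  · obtain ⟨h, hh, h2, rfl⟩ := (Finset.mem_filter.1 hy).2
    exact ⟨⟨h, hh⟩, Finset.mem_filter.2 ⟨Finset.mem_univ _, by simpa using h2⟩, rfl⟩

end genInd

section existence

variable {F : Type*} [Field F] [Fintype F]

theorem card_le_card_forall_eval_shiftPoly_ne_zero_add (k : ℕ) :
    Fintype.card F ≤ (Finset.univ.filter fun x : F =>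
      ∀ i : shiftSet F k, (shiftPoly F i).eval x ≠ 0).card + (k + 1) ^ 2 := by
  rw [← Finset.card_univ, ← Finset.card_filter_add_card_filter_not (s := Finset.univ)
    fun x : F => ∀ i : shiftSet F k, (shiftPoly F i).eval x ≠ 0]
  refine Nat.add_le_add_left ((Finset.card_le_card (t := Finset.univ.biUnion
    fun i : shiftSet F k => (shiftPoly F i).roots.toFinset) fun x hx => ?_).trans
    (Finset.card_biUnion_le.trans ((Finset.sum_le_sum fun i _ => ?_).trans
      (sum_natDegree_shiftPoly_le F k)))) _
  · have h1 := (Finset.mem_filter.1 hx).2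
    push Not at h1
    obtain ⟨i, hi⟩ := h1
    exact Finset.mem_biUnion.2 ⟨i, Finset.mem_univ _, Multiset.mem_toFinset.2
      ((mem_roots (monic_shiftPoly F i).ne_zero).2 hi)⟩
  · exact (Multiset.toFinset_card_le _).trans (card_roots' _)

theorem exists_generator_of_lt {k : ℕ} {A : Subgroup Fˣ}
    (h : 2 ^ (Nat.card A).primeFactors.card * (((k + 1) ^ 2 : ℕ) * √(Fintype.card F : ℝ)) <
      ((Fintype.card F : ℝ) - ((k + 1) ^ 2 : ℕ)) *
        (((Nat.card A).totient : ℝ) / Fintype.card Fˣ * ((Nat.card A : ℝ) / Fintype.card Fˣ) ^ k)) :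
    ∃ g ∈ A, orderOf g = Nat.card A ∧
      ∀ j, 1 ≤ j → j ≤ k → (j : F) ≠ 0 → ∃ b ∈ A, 1 + (g : F) ^ j = b := by
  let z : shiftSet F k := ⟨0, by simp [shiftSet]⟩
  set G : shiftSet F k → F → ℂ := fun i => if i = z then genInd A else subgroupInd A with hG
  set C : shiftSet F k → ℝ := fun i => if i = z then 2 ^ (Nat.card A).primeFactors.card else 1
    with hC
  have hGC : ∀ i, HasCharBound (G i) (C i) := by
    intro i
    simp only [hG, hC]
    split_ifs
    · exact hasCharBound_genInd A
    · exact hasCharBound_subgroupInd A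
  have key := norm_sum_prod_sub_le hGC
  have hCprod : ∏ i, C i = 2 ^ (Nat.card A).primeFactors.card := by simp [hC]
  have hc : (0 : ℝ) < Fintype.card Fˣ := by exact_mod_cast Fintype.card_pos
  set r : ℝ := (Nat.card A : ℝ) / Fintype.card Fˣ with hr
  set t : ℝ := ((Nat.card A).totient : ℝ) / Fintype.card Fˣ with ht
  have hr0 : 0 ≤ r := by positivity
  have ht0 : 0 ≤ t := by positivity
  have hr1 : r ≤ 1 := by
    rw [hr, div_le_one hc]
    exact_mod_cast (Nat.card_eq_fintype_card (α := Fˣ)) ▸ Subgroup.card_le_card_group A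
  have hmean : ∏ i, ((∑ y, G i y) / (Fintype.card Fˣ : ℂ)) =
      ((t * r ^ (Finset.univ.erase z).card : ℝ) : ℂ) := by
    rw [← Finset.mul_prod_erase _ _ (Finset.mem_univ z)]
    have h1 : ∀ i ∈ Finset.univ.erase z, (∑ y, G i y) / (Fintype.card Fˣ : ℂ) = (r : ℂ) := by
      intro i hi
      simp only [hG, if_neg (Finset.ne_of_mem_erase hi), sum_subgroupInd, hr]
      push_cast; rfl
    rw [Finset.prod_congr rfl h1, Finset.prod_const]
    simp only [hG, if_true, sum_genInd, ht]
    push_cast; rfl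
  have hcard : (Finset.univ.erase z).card ≤ k := by
    rw [Finset.card_erase_of_mem (Finset.mem_univ z), Finset.card_univ, Fintype.card_coe]
    have : (shiftSet F k).card ≤ k + 1 := (Finset.card_filter_le _ _).trans (Finset.card_range _).le
    omega
  have hq' := card_le_card_forall_eval_shiftPoly_ne_zero_add (F := F) k
  set q' := (Finset.univ.filter fun x : F =>
      ∀ i : shiftSet F k, (shiftPoly F i).eval x ≠ 0).card with hq'_def
  obtain ⟨x, hx⟩ : ∃ x, ∏ i, G i ((shiftPoly F i).eval x) ≠ 0 := by
    by_contra! hall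
    rw [Finset.sum_eq_zero fun x _ => hall x, zero_sub, norm_neg, hCprod, hmean, norm_mul,
      Complex.norm_natCast, Complex.norm_real, Real.norm_of_nonneg (by positivity)] at key
    have h1 : (Fintype.card F : ℝ) - ((k + 1) ^ 2 : ℕ) ≤ q' := by
      rw [sub_le_iff_le_add]
      exact_mod_cast hq'
    have h2 : t * r ^ k ≤ t * r ^ (Finset.univ.erase z).card :=
      mul_le_mul_of_nonneg_left (pow_le_pow_of_le_one hr0 hr1 hcard) ht0
    have h3 : ((Fintype.card F : ℝ) - ((k + 1) ^ 2 : ℕ)) * (t * r ^ k) ≤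
        q' * (t * r ^ (Finset.univ.erase z).card) :=
      mul_le_mul h1 h2 (by positivity) (by positivity)
    linarith
  have hx' : ∀ i, G i ((shiftPoly F i).eval x) ≠ 0 := fun i hi =>
    hx (Finset.prod_eq_zero (Finset.mem_univ i) hi)
  have hz := hx' z
  simp only [hG, if_true, shiftPoly, z, eval_X, genInd, ne_eq, ite_eq_right_iff, one_ne_zero,
    imp_false, not_not] at hz
  obtain ⟨g, hg, hgo, rfl⟩ := hz
  refine ⟨g, hg, hgo, fun j hj hjk hjF => ?_⟩
  have hjne : j ≠ 0 := by omega
  have h1 := hx' ⟨j, by simp [shiftSet, hjF]; omega⟩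
  have h2 : (⟨j, by simp [shiftSet, hjF]; omega⟩ : shiftSet F k) ≠ z := fun h =>
    hjne (congrArg Subtype.val h)
  simp only [hG, if_neg h2, shiftPoly, if_neg hjne, subgroupInd, ne_eq, ite_eq_right_iff,
    one_ne_zero, imp_false, not_not] at h1
  obtain ⟨b, hb, hb'⟩ := h1
  refine ⟨b, hb, ?_⟩
  rw [hb']
  simp [add_comm]

theorem exists_add_pow_eq {k : ℕ} {A : Subgroup Fˣ} {g : Fˣ}
    (h : ∀ j, 1 ≤ j → j ≤ k → (j : F) ≠ 0 → ∃ b ∈ A, 1 + (g : F) ^ j = b) (j : ℕ) (hj : 1 ≤ j)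
    (hjk : j ≤ k) : ∃ b ∈ A, 1 + (g : F) ^ j = b := by
  induction j using Nat.strong_induction_on with
  | _ j ih =>
    by_cases hjF : (j : F) = 0
    · have hp : Fact (ringChar F).Prime := ⟨CharP.char_is_prime F _⟩
      obtain ⟨i, rfl⟩ := (ringChar.spec F j).1 hjF
      have h2 := hp.out.two_le
      have hi : 1 ≤ i := Nat.pos_of_ne_zero (by rintro rfl; simp at hj)
      obtain ⟨b, hb, hb'⟩ := ih i (by nlinarith) hi (by nlinarith)
      refine ⟨b ^ ringChar F, A.pow_mem hb _, ?_⟩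
      rw [Units.val_pow_eq_pow_val, ← hb', add_pow_char, one_pow, ← pow_mul, mul_comm]
    · exact h j hj hjk hjF

theorem exists_zmod_equiv {k : ℕ} {A : Subgroup Fˣ} {g : Fˣ} (hg : g ∈ A)
    (ho : orderOf g = Nat.card A)
    (h : ∀ j, 1 ≤ j → j ≤ k → ∃ b ∈ A, 1 + (g : F) ^ j = b) :
    ∃ a : ZMod (Nat.card A) ≃ A, ∀ (i : ZMod (Nat.card A)) (j : ℕ), 1 ≤ j → j ≤ k →
      ∃ b ∈ A, ((a i : Fˣ) : F) + ((a (i + (j : ZMod (Nat.card A))) : Fˣ) : F) =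
        ((b : Fˣ) : F) := by
  have hd : NeZero (Nat.card A) := ⟨Nat.card_pos.ne'⟩
  let f : ZMod (Nat.card A) → A := fun i => ⟨g ^ i.val, A.pow_mem hg _⟩
  have hf : Function.Injective f := by
    intro i j hij
    refine ZMod.val_injective _ (pow_injOn_Iio_orderOf (x := g) ?_ ?_ (congrArg Subtype.val hij))
    · rw [Set.mem_Iio, ho]; exact ZMod.val_lt i
    · rw [Set.mem_Iio, ho]; exact ZMod.val_lt j
  have hb : Function.Bijective f := by
    rw [Nat.bijective_iff_injective_and_card]
    exact ⟨hf, by simp⟩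
  refine ⟨Equiv.ofBijective f hb, fun i j hj hjk => ?_⟩
  obtain ⟨b, hbA, hb'⟩ := h j hj hjk
  refine ⟨g ^ i.val * b, A.mul_mem (A.pow_mem hg _) hbA, ?_⟩
  have h1 : g ^ (i + (j : ZMod (Nat.card A))).val = g ^ i.val * g ^ j := by
    rw [← pow_add, ZMod.val_add, ZMod.val_natCast, Nat.add_mod_mod,
      ← pow_mod_orderOf g (i.val + j), ho]
  simp only [Equiv.ofBijective_apply, f, h1, Units.val_mul, Units.val_pow_eq_pow_val, ← hb']
  ring

end existence

theorem weil_main_term_lt {k : ℕ} {q d K c φ w W : ℝ} (hq : 1 ≤ q) (hK : 1 ≤ K)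
    (hW : 1 ≤ W) (hc : 2 * K * W < c) (hw1 : 1 ≤ w) (hw : w ^ 28 ≤ K * d) (hdq : d ≤ q - 1)
    (hφ : d ≤ φ * w) (hd : c * q ^ (1 - 3 / (7 * (k + 1) : ℝ)) ≤ d) :
    w * (W * √q) < (q - W) * (φ / (q - 1) * (d / (q - 1)) ^ k) := by
  have hq0 : 0 < q := by linarith
  have hKW : 1 ≤ K * W := one_le_mul_of_one_le_of_one_le hK hW
  have hc1 : 1 ≤ c := by linarith
  have hpow : 0 < q ^ (1 - 3 / (7 * (k + 1) : ℝ)) := Real.rpow_pos_of_pos hq0 _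
  have hd0 : 0 < d := lt_of_lt_of_le (by positivity) hd
  have hq1 : 0 < q - 1 := by linarith
  have hk1 : (0 : ℝ) < k + 1 := by positivity
  have hexp : 3 / (7 * (k + 1) : ℝ) ≤ 1 := by
    rw [div_le_one (by positivity)]
    have : (0 : ℝ) ≤ k := Nat.cast_nonneg k
    linarith
  have hcq : c ≤ q := by
    have h1 : 1 ≤ q ^ (1 - 3 / (7 * (k + 1) : ℝ)) := Real.one_le_rpow hq (by linarith)
    nlinarith
  have hqW : q / 2 ≤ q - W := by nlinarith
  have hw0 : 0 < w := by linarith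
  have hr : d / q ≤ d / (q - 1) := by gcongr; linarith
  have hφ' : d / q / w ≤ φ / (q - 1) := by
    rw [div_le_iff₀ hw0, div_mul_eq_mul_div]
    exact hr.trans (by gcongr)
  have hbig : c * q ^ (-(3 / 7) : ℝ) ≤ (d / q) ^ (k + 1) := by
    have h1 : c * q ^ (-(3 / (7 * (k + 1))) : ℝ) ≤ d / q := by
      rw [le_div_iff₀ hq0, mul_assoc, ← Real.rpow_add_one hq0.ne']
      rwa [neg_add_eq_sub]
    calc c * q ^ (-(3 / 7) : ℝ) ≤ c ^ (k + 1) * q ^ (-(3 / 7) : ℝ) := by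
          gcongr
          exact le_self_pow₀ hc1 (by omega)
      _ = (c * q ^ (-(3 / (7 * (k + 1))) : ℝ)) ^ (k + 1) := by
          rw [mul_pow, ← Real.rpow_natCast (q ^ _), ← Real.rpow_mul hq0.le]
          congr 2
          push_cast
          field_simp
      _ ≤ _ := by gcongr
  have hw2 : w ^ 2 ≤ K * q ^ (1 / 14 : ℝ) := by
    refine le_of_pow_le_pow_left₀ (n := 14) (by norm_num) (by positivity) ?_
    rw [← pow_mul, mul_pow, ← Real.rpow_natCast (q ^ _), ← Real.rpow_mul hq0.le]
    norm_num
    calc w ^ 28 ≤ K * d := hw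
      _ ≤ K ^ 14 * q := by
        gcongr
        · exact le_self_pow₀ hK (by norm_num)
        · linarith
  have hs : w ^ 2 * (W * √q) < q / 2 * (d / q) ^ (k + 1) := by
    have e1 : q ^ (1 / 14 : ℝ) * √q = q ^ (4 / 7 : ℝ) := by
      rw [Real.sqrt_eq_rpow, ← Real.rpow_add hq0]; norm_num
    have e2 : q * q ^ (-(3 / 7) : ℝ) = q ^ (4 / 7 : ℝ) := by
      rw [mul_comm, ← Real.rpow_add_one hq0.ne']; norm_num
    have e3 : 0 < q ^ (4 / 7 : ℝ) := by positivity
    calc w ^ 2 * (W * √q) ≤ K * q ^ (1 / 14 : ℝ) * (W * √q) := by gcongr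
      _ = K * W * q ^ (4 / 7 : ℝ) := by rw [← e1]; ring
      _ < c / 2 * q ^ (4 / 7 : ℝ) := by gcongr; linarith
      _ = q / 2 * (c * q ^ (-(3 / 7) : ℝ)) := by rw [← e2]; ring
      _ ≤ _ := by gcongr
  calc w * (W * √q) = w ^ 2 * (W * √q) / w := by field_simp
    _ < q / 2 * (d / q) ^ (k + 1) / w := by gcongr
    _ = q / 2 * (d / q / w * (d / q) ^ k) := by ring
    _ ≤ (q - W) * (φ / (q - 1) * (d / (q - 1)) ^ k) := by
      have : 0 ≤ q - W := by linarith
      gcongr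
      exact (by positivity : 0 ≤ d / q / w).trans hφ'

theorem exists_forall_pow_card_primeFactors_le {T : ℕ} (hT : 1 ≤ T) :
    ∃ K : ℝ, 1 ≤ K ∧ ∀ d : ℕ, d ≠ 0 → (T : ℝ) ^ d.primeFactors.card ≤ K * d :=
  ⟨(T : ℝ) ^ T, one_le_pow₀ (by exact_mod_cast hT), fun d hd => by
    exact_mod_cast pow_card_primeFactors_le hT hd⟩

end

/-- additive structures in multiplicative subgroups. -/
theorem stmt14 (k : ℕ) (hk : 2 ≤ k) :
    ∃ c : ℝ, 0 < c ∧
      ∀ (F : Type) [Field F] [Fintype F] (A : Subgroup Fˣ) (d : ℕ),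
        Nat.card A = d →
        (k = 2 → c * (Fintype.card F : ℝ) ^ ((6 : ℝ) / 7) ≤ (d : ℝ)) →
        (3 ≤ k → c * (Fintype.card F : ℝ) ^ ((3 * (k : ℝ) + 1) / (3 * (k : ℝ) + 2)) ≤ (d : ℝ)) →
        ∃ a : ZMod d ≃ A, ∀ (i : ZMod d) (j : ℕ), 1 ≤ j → j ≤ k →
          ∃ b ∈ A, ((a i : Fˣ) : F) + ((a (i + (j : ZMod d)) : Fˣ) : F) = ((b : Fˣ) : F) := by
  obtain ⟨K, hK, hKd⟩ := exists_forall_pow_card_primeFactors_le (T := 2 ^ 28) Nat.one_le_two_pow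
  have hW : (1 : ℝ) ≤ ((k + 1) ^ 2 : ℕ) := by exact_mod_cast Nat.one_le_pow _ _ (by omega)
  have hc0 : (0 : ℝ) < 2 * K * ((k + 1) ^ 2 : ℕ) + 1 := by positivity
  refine ⟨2 * K * ((k + 1) ^ 2 : ℕ) + 1, hc0, fun F _ _ A d hAd h2 h3 => ?_⟩
  subst hAd
  have hq : (1 : ℝ) ≤ Fintype.card F := by exact_mod_cast Fintype.card_pos
  have hd : (2 * K * ((k + 1) ^ 2 : ℕ) + 1) *
      (Fintype.card F : ℝ) ^ (1 - 3 / (7 * (k + 1) : ℝ)) ≤ (Nat.card A : ℝ) := by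
    rcases hk.eq_or_lt with rfl | hk3
    · convert h2 rfl using 3
      norm_num
    · refine le_trans (mul_le_mul_of_nonneg_left (Real.rpow_le_rpow_of_exponent_le hq ?_) hc0.le)
        (h3 hk3)
      have hk' : (3 : ℝ) ≤ k := by exact_mod_cast hk3
      rw [one_sub_div (by positivity), div_le_div_iff₀ (by positivity) (by positivity)]
      nlinarith
  have hu : (Fintype.card Fˣ : ℝ) = Fintype.card F - 1 := by
    rw [Fintype.card_units, Nat.cast_sub Fintype.card_pos, Nat.cast_one]
  have hdq : (Nat.card A : ℝ) ≤ Fintype.card F - 1 := by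
    rw [← hu]
    exact_mod_cast (Nat.card_eq_fintype_card (α := Fˣ)) ▸ Subgroup.card_le_card_group A
  have hw : ((2 : ℝ) ^ (Nat.card A).primeFactors.card) ^ 28 ≤ K * Nat.card A := by
    have := hKd (Nat.card A) Nat.card_pos.ne'
    rw [pow_right_comm]
    exact_mod_cast this
  obtain ⟨g, hg, hgo, hgA⟩ := exists_generator_of_lt (k := k) (A := A) (by
    rw [hu]
    exact weil_main_term_lt hq hK hW (lt_add_one _) (one_le_pow₀ one_le_two) hw hdq
      (by exact_mod_cast le_totient_mul_two_pow) hd)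
  exact exists_zmod_equiv hg hgo (exists_add_pow_eq hgA)
end
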